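/- For every δ > 0 there is N ∈ ℕ such that the following holds. Let G be a finite abelian group (written additively) of order n ≥ N, let p be a real with n^{−1/10^{100}} ≤ p ≤ 1, and let R be a p-random subset of G. Then with probability at least 1 − δ the following event holds: for every X ⊆ G and every α ∈ G such that |X Δ R| ≤ p^{10^{10}}·n/(log n)^{10^{22}}, 0 ∉ X, |X| is divisible by 4, and ∑_{x∈X} x = (|X|/4)·α, the set X can be partitioned into sets of size 4 each of which has sum α. -/

import Mathlib

open scoped Classical

/-- The probability that a `p`-random subset of the finite type `G` (each element included
independently with probability `p`) equals the finset `A`. -/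
noncomputable def setProb (G : Type) [Fintype G] [DecidableEq G] (p : ℝ) (A : Finset G) : ℝ :=
  p ^ A.card * (1 - p) ^ (Fintype.card G - A.card)

/-- Expectation of `f A`, where `A` is the random subset of `S` containing each `i ∈ S`
independently with probability `q i`. -/
noncomputable def bexp {ι : Type*} [DecidableEq ι] (S : Finset ι) (q : ι → ℝ)
    (f : Finset ι → ℝ) : ℝ :=
  ∑ A ∈ S.powerset, ((∏ i ∈ A, q i) * ∏ i ∈ S \ A, (1 - q i)) * f A

section Bernoulli

variable {ι : Type*} [DecidableEq ι] {S : Finset ι} {q : ι → ℝ}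

theorem bexp_insert {i : ι} (hi : i ∉ S) (f : Finset ι → ℝ) :
    bexp (insert i S) q f =
      (1 - q i) * bexp S q f + q i * bexp S q (fun A => f (insert i A)) := by
  unfold bexp
  rw [Finset.sum_powerset_insert hi, Finset.mul_sum, Finset.mul_sum]
  congr 1
  · refine Finset.sum_congr rfl fun A hA => ?_
    have hiA : i ∉ A := fun h => hi (Finset.mem_powerset.1 hA h)
    rw [Finset.insert_sdiff_of_notMem _ hiA, Finset.prod_insert (by simp [hi])]
    ring
  · refine Finset.sum_congr rfl fun A hA => ?_
    have hiA : i ∉ A := fun h => hi (Finset.mem_powerset.1 hA h)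
    have hS : insert i S \ insert i A = S \ A := by
      ext j
      by_cases hj : j = i
      · simp [hj, hi]
      · simp [hj]
    rw [Finset.prod_insert hiA, hS]
    ring

theorem bexp_add (f g : Finset ι → ℝ) :
    bexp S q (fun A => f A + g A) = bexp S q f + bexp S q g := by
  simp [bexp, mul_add, Finset.sum_add_distrib]

theorem bexp_const_mul (c : ℝ) (f : Finset ι → ℝ) :
    bexp S q (fun A => c * f A) = c * bexp S q f := by
  simp only [bexp, Finset.mul_sum]
  exact Finset.sum_congr rfl fun A _ => by ring

theorem bexp_sum {κ : Type*} (s : Finset κ) (f : κ → Finset ι → ℝ) :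
    bexp S q (fun A => ∑ k ∈ s, f k A) = ∑ k ∈ s, bexp S q (f k) := by
  simp only [bexp, Finset.mul_sum]
  rw [Finset.sum_comm]

theorem bexp_mono (hq : ∀ i ∈ S, 0 ≤ q i ∧ q i ≤ 1) {f g : Finset ι → ℝ}
    (h : ∀ A ⊆ S, f A ≤ g A) : bexp S q f ≤ bexp S q g := by
  refine Finset.sum_le_sum fun A hA => ?_
  have hA := Finset.mem_powerset.1 hA
  refine mul_le_mul_of_nonneg_left (h A hA) (mul_nonneg ?_ ?_)
  · exact Finset.prod_nonneg fun i hi => (hq i (hA hi)).1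
  · exact Finset.prod_nonneg fun i hi => by
      linarith [(hq i (Finset.mem_sdiff.1 hi).1).2]

theorem bexp_congr {f g : Finset ι → ℝ} (h : ∀ A ⊆ S, f A = g A) :
    bexp S q f = bexp S q g :=
  Finset.sum_congr rfl fun A hA => by rw [h A (Finset.mem_powerset.1 hA)]

theorem bexp_indicator {B₁ B₂ : Finset ι} (h₁ : B₁ ⊆ S) (h₂ : B₂ ⊆ S) (hd : Disjoint B₁ B₂) :
    bexp S q (fun A => if B₁ ⊆ A ∧ Disjoint B₂ A then 1 else 0) =
      (∏ i ∈ B₁, q i) * ∏ i ∈ B₂, (1 - q i) := by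
  have key : ∀ A ∈ S.powerset, ((∏ i ∈ A, q i) * ∏ i ∈ S \ A, (1 - q i)) *
      (if B₁ ⊆ A ∧ Disjoint B₂ A then (1 : ℝ) else 0) =
      (∏ i ∈ A, if i ∈ B₂ then 0 else q i) *
        ∏ i ∈ S \ A, (if i ∈ B₁ then 0 else 1 - q i) := by
    intro A hA
    have hA := Finset.mem_powerset.1 hA
    by_cases hB₂ : Disjoint B₂ A
    · by_cases hB₁ : B₁ ⊆ A
      · rw [if_pos ⟨hB₁, hB₂⟩, mul_one]
        congr 1
        · refine Finset.prod_congr rfl fun i hi => ?_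
          rw [if_neg fun h => Finset.disjoint_left.1 hB₂ h hi]
        · refine Finset.prod_congr rfl fun i hi => ?_
          rw [if_neg fun h => (Finset.mem_sdiff.1 hi).2 (hB₁ h)]
      · obtain ⟨i, hi, hiA⟩ := Finset.not_subset.1 hB₁
        have h0 : ∏ j ∈ S \ A, (if j ∈ B₁ then 0 else 1 - q j) = 0 :=
          Finset.prod_eq_zero (i := i) (Finset.mem_sdiff.2 ⟨h₁ hi, hiA⟩) (if_pos hi)
        rw [if_neg (fun h => hB₁ h.1), mul_zero, h0, mul_zero]
    · obtain ⟨i, hi, hiA⟩ := Finset.not_disjoint_iff.1 hB₂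
      have h0 : ∏ j ∈ A, (if j ∈ B₂ then 0 else q j) = 0 :=
        Finset.prod_eq_zero (i := i) hiA (if_pos hi)
      rw [if_neg (fun h => hB₂ h.2), mul_zero, h0, zero_mul]
  unfold bexp
  rw [Finset.sum_congr rfl key, ← Finset.prod_add]
  have hS : S = B₁ ∪ (B₂ ∪ (S \ (B₁ ∪ B₂))) := by
    rw [← Finset.union_assoc]
    exact (Finset.union_sdiff_of_subset (Finset.union_subset h₁ h₂)).symm
  have e₁ : ∏ i ∈ B₁, ((if i ∈ B₂ then 0 else q i) + if i ∈ B₁ then 0 else 1 - q i) =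
      ∏ i ∈ B₁, q i :=
    Finset.prod_congr rfl fun i hi => by
      rw [if_neg (Finset.disjoint_left.1 hd hi), if_pos hi, add_zero]
  have e₂ : ∏ i ∈ B₂, ((if i ∈ B₂ then 0 else q i) + if i ∈ B₁ then 0 else 1 - q i) =
      ∏ i ∈ B₂, (1 - q i) :=
    Finset.prod_congr rfl fun i hi => by
      rw [if_neg (Finset.disjoint_right.1 hd hi), if_pos hi, zero_add]
  have e₃ : ∏ i ∈ S \ (B₁ ∪ B₂), ((if i ∈ B₂ then 0 else q i) + if i ∈ B₁ then 0 else 1 - q i) =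
      1 := by
    refine Finset.prod_eq_one fun i hi => ?_
    simp only [Finset.mem_sdiff, Finset.mem_union, not_or] at hi
    rw [if_neg hi.2.1, if_neg hi.2.2]
    ring
  rw [hS, Finset.prod_union, Finset.prod_union, e₁, e₂, e₃, mul_one]
  · exact Finset.disjoint_left.2 fun i hi h =>
        (Finset.mem_sdiff.1 h).2 (Finset.mem_union_right _ hi)
  · refine Finset.disjoint_left.2 fun i hi h => ?_
    rcases Finset.mem_union.1 h with h | h
    · exact Finset.disjoint_left.1 hd hi h
    · exact (Finset.mem_sdiff.1 h).2 (Finset.mem_union_left _ hi)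

theorem bexp_const (c : ℝ) : bexp S q (fun _ => c) = c := by
  have h := bexp_indicator (q := q) (Finset.empty_subset S) (Finset.empty_subset S)
    (Finset.disjoint_empty_left _)
  simp only [Finset.empty_subset, Finset.disjoint_empty_left, and_self, if_true,
    Finset.prod_empty, mul_one] at h
  have h2 := bexp_const_mul (S := S) (q := q) c (fun _ => 1)
  rwa [h, mul_one] at h2

theorem bexp_neg (f : Finset ι → ℝ) : bexp S q (fun A => -f A) = -bexp S q f := by
  simpa using bexp_const_mul (S := S) (q := q) (-1) f

theorem exists_le_bexp (hq : ∀ i ∈ S, 0 ≤ q i ∧ q i ≤ 1) (f : Finset ι → ℝ) :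
    ∃ A ⊆ S, f A ≤ bexp S q f := by
  by_contra! h
  obtain ⟨A₀, hA₀, hmin⟩ := S.powerset.exists_min_image f ⟨∅, by simp⟩
  have h1 := bexp_mono hq (f := fun _ => f A₀) (g := f)
    fun A hA => hmin A (Finset.mem_powerset.2 hA)
  rw [bexp_const] at h1
  exact absurd (h A₀ (Finset.mem_powerset.1 hA₀)) (not_lt.2 h1)

theorem two_point_exp_le {t x c : ℝ} (ht0 : 0 ≤ t) (ht1 : t ≤ 1) (hx : |x| ≤ 1) (hxc : x ^ 2 ≤ c) :
    (1 - t) * Real.exp (-(t * x)) + t * Real.exp ((1 - t) * x) ≤ Real.exp (t * c) := by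
  have hb : ∀ z : ℝ, |z| ≤ 1 → Real.exp z ≤ 1 + z + z ^ 2 := fun z hz => by
    have := (abs_le.1 (Real.abs_exp_sub_one_sub_id_le hz)).2
    linarith
  have h1 := hb (-(t * x)) (by
    rw [abs_neg, abs_mul, abs_of_nonneg ht0]
    nlinarith [abs_nonneg x])
  have h2 := hb ((1 - t) * x) (by
    rw [abs_mul, abs_of_nonneg (by linarith : 0 ≤ 1 - t)]
    nlinarith [abs_nonneg x])
  have h3 : t * c + 1 ≤ Real.exp (t * c) := Real.add_one_le_exp _
  have h4 : (1 - t) * Real.exp (-(t * x)) ≤ (1 - t) * (1 + -(t * x) + (-(t * x)) ^ 2) :=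
    mul_le_mul_of_nonneg_left h1 (by linarith)
  have h5 : t * Real.exp ((1 - t) * x) ≤ t * (1 + (1 - t) * x + ((1 - t) * x) ^ 2) :=
    mul_le_mul_of_nonneg_left h2 ht0
  have h6 : t * x ^ 2 ≤ t * c := mul_le_mul_of_nonneg_left hxc ht0
  nlinarith [mul_nonneg (mul_nonneg ht0 ht0) (sq_nonneg x)]

theorem bexp_exp_le (hq : ∀ i ∈ S, 0 ≤ q i ∧ q i ≤ 1) {f : Finset ι → ℝ} {c : ι → ℝ} {l : ℝ}
    (hl : 0 ≤ l) (hc : ∀ i ∈ S, l * c i ≤ 1)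
    (hf : ∀ i ∈ S, ∀ A ⊆ S, i ∉ A → |f (insert i A) - f A| ≤ c i) :
    bexp S q (fun A => Real.exp (l * (f A - bexp S q f))) ≤
      Real.exp (l ^ 2 * ∑ i ∈ S, q i * c i ^ 2) := by
  induction S using Finset.induction_on generalizing f with
  | empty => simp [bexp]
  | insert i S hi ih =>
    have hqi := hq i (Finset.mem_insert_self i S)
    have hci := hc i (Finset.mem_insert_self i S)
    have hqS : ∀ j ∈ S, 0 ≤ q j ∧ q j ≤ 1 := fun j hj => hq j (Finset.mem_insert_of_mem hj)
    have hcS : ∀ j ∈ S, l * c j ≤ 1 := fun j hj => hc j (Finset.mem_insert_of_mem hj)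
    set g : Finset ι → ℝ := fun A => f (insert i A) with hg
    set m₀ := bexp S q f with hm₀
    set m₁ := bexp S q g with hm₁
    set m := bexp (insert i S) q f with hm
    have hmm : m = (1 - q i) * m₀ + q i * m₁ := bexp_insert hi f
    have ih₀ := ih hqS hcS (f := f) fun j hj A hA hjA =>
      hf j (Finset.mem_insert_of_mem hj) A (hA.trans (Finset.subset_insert i S)) hjA
    have ih₁ := ih hqS hcS (f := g) fun j hj A hA hjA => by
      have hji : j ≠ i := fun h => hi (h ▸ hj)
      have := hf j (Finset.mem_insert_of_mem hj) (insert i A) (Finset.insert_subset_insert i hA)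
        (by simp [hji, hjA])
      rwa [Finset.insert_comm] at this
    have hΔ : |m₁ - m₀| ≤ c i := by
      have hpt : ∀ A ⊆ S, |g A - f A| ≤ c i := fun A hA =>
        hf i (Finset.mem_insert_self i S) A (hA.trans (Finset.subset_insert i S))
          fun h => hi (hA h)
      rw [abs_le]
      have e1 : m₁ ≤ bexp S q (fun A => f A + c i) :=
        bexp_mono hqS fun A hA => by linarith [(abs_le.1 (hpt A hA)).2]
      have e2 : m₀ ≤ bexp S q (fun A => g A + c i) :=
        bexp_mono hqS fun A hA => by linarith [(abs_le.1 (hpt A hA)).1]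
      rw [bexp_add, bexp_const] at e1 e2
      constructor <;> linarith
    have hsplit : ∀ (h : Finset ι → ℝ) (a : ℝ), bexp S q (fun A => Real.exp (l * (h A - m))) =
        Real.exp (l * (a - m)) * bexp S q (fun A => Real.exp (l * (h A - a))) := by
      intro h a
      rw [← bexp_const_mul]
      refine bexp_congr fun A _ => ?_
      rw [← Real.exp_add]
      ring_nf
    rw [bexp_insert hi]
    change (1 - q i) * bexp S q (fun A => Real.exp (l * (f A - m))) +
      q i * bexp S q (fun A => Real.exp (l * (g A - m))) ≤ _
    rw [hsplit f m₀, hsplit g m₁, Finset.sum_insert hi, mul_add, Real.exp_add]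
    set E := Real.exp (l ^ 2 * ∑ j ∈ S, q j * c j ^ 2) with hE
    have htp := two_point_exp_le (t := q i) (x := l * (m₁ - m₀)) (c := l ^ 2 * c i ^ 2) hqi.1 hqi.2
      (by
        rw [abs_mul, abs_of_nonneg hl]
        exact (mul_le_mul_of_nonneg_left hΔ hl).trans hci)
      (by
        rw [mul_pow]
        refine mul_le_mul_of_nonneg_left ?_ (sq_nonneg l)
        rw [← sq_abs]
        exact pow_le_pow_left₀ (abs_nonneg _) hΔ 2)
    have hx₀ : l * (m₀ - m) = -(q i * (l * (m₁ - m₀))) := by rw [hmm]; ring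
    have hx₁ : l * (m₁ - m) = (1 - q i) * (l * (m₁ - m₀)) := by rw [hmm]; ring
    calc _ ≤ (1 - q i) * (Real.exp (l * (m₀ - m)) * E) + q i * (Real.exp (l * (m₁ - m)) * E) := by
          refine add_le_add (mul_le_mul_of_nonneg_left ?_ (by linarith [hqi.2]))
            (mul_le_mul_of_nonneg_left ?_ hqi.1)
          · exact mul_le_mul_of_nonneg_left ih₀ (Real.exp_nonneg _)
          · exact mul_le_mul_of_nonneg_left ih₁ (Real.exp_nonneg _)
      _ = ((1 - q i) * Real.exp (-(q i * (l * (m₁ - m₀)))) +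
            q i * Real.exp ((1 - q i) * (l * (m₁ - m₀)))) * E := by rw [hx₀, hx₁]; ring
      _ ≤ Real.exp (q i * (l ^ 2 * c i ^ 2)) * E :=
          mul_le_mul_of_nonneg_right htp (Real.exp_nonneg _)
      _ = _ := by ring_nf

theorem bexp_upper_tail_le (hq : ∀ i ∈ S, 0 ≤ q i ∧ q i ≤ 1) {f : Finset ι → ℝ} {c : ι → ℝ}
    {s t : ℝ} (hs : 0 < s) (ht : 0 ≤ t) (hc : ∀ i ∈ S, t * c i ≤ 2 * s)
    (hf : ∀ i ∈ S, ∀ A ⊆ S, i ∉ A → |f (insert i A) - f A| ≤ c i)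
    (hvar : ∑ i ∈ S, q i * c i ^ 2 ≤ s) :
    bexp S q (fun A => if t ≤ f A - bexp S q f then 1 else 0) ≤ Real.exp (-(t ^ 2 / (4 * s))) := by
  set l := t / (2 * s) with hl
  have hl0 : 0 ≤ l := by positivity
  have h1 := bexp_exp_le hq hl0 (fun i hi => by
    rw [hl, div_mul_eq_mul_div, div_le_one (by positivity)]
    exact hc i hi) hf
  have h2 : bexp S q (fun A => if t ≤ f A - bexp S q f then 1 else 0) ≤
      bexp S q (fun A => Real.exp (-(l * t)) * Real.exp (l * (f A - bexp S q f))) := by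
    refine bexp_mono hq fun A _ => ?_
    rw [← Real.exp_add]
    split_ifs with h
    · exact Real.one_le_exp (by nlinarith)
    · exact Real.exp_nonneg _
  rw [bexp_const_mul] at h2
  refine h2.trans ((mul_le_mul_of_nonneg_left h1 (Real.exp_nonneg _)).trans ?_)
  rw [← Real.exp_add, Real.exp_le_exp]
  have h3 : l ^ 2 * ∑ i ∈ S, q i * c i ^ 2 ≤ l ^ 2 * s :=
    mul_le_mul_of_nonneg_left hvar (sq_nonneg l)
  have h4 : -(l * t) + l ^ 2 * s = -(t ^ 2 / (4 * s)) := by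
    rw [hl]; field_simp; ring
  linarith

theorem bexp_tail_le (hq : ∀ i ∈ S, 0 ≤ q i ∧ q i ≤ 1) {f : Finset ι → ℝ} {c : ι → ℝ}
    {s t : ℝ} (hs : 0 < s) (ht : 0 ≤ t) (hc : ∀ i ∈ S, t * c i ≤ 2 * s)
    (hf : ∀ i ∈ S, ∀ A ⊆ S, i ∉ A → |f (insert i A) - f A| ≤ c i)
    (hvar : ∑ i ∈ S, q i * c i ^ 2 ≤ s) :
    bexp S q (fun A => if t ≤ |f A - bexp S q f| then 1 else 0) ≤
      2 * Real.exp (-(t ^ 2 / (4 * s))) := by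
  have h1 := bexp_upper_tail_le hq hs ht hc hf hvar
  have h2 := bexp_upper_tail_le hq hs ht hc (f := fun A => -f A) (fun i hi A hA hiA => by
    rw [← abs_neg]
    simpa [neg_add_eq_sub] using hf i hi A hA hiA) hvar
  have h3 := bexp_mono hq (f := fun A => if t ≤ |f A - bexp S q f| then 1 else 0)
    (g := fun A => (if t ≤ f A - bexp S q f then 1 else 0) +
      (if t ≤ -f A - bexp S q (fun A => -f A) then 1 else 0)) fun A _ => by
    rw [bexp_neg]
    split_ifs with h h' h'' <;> norm_num
    rcases le_abs.1 h with h | h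
    · exact h' h
    · exact ‹¬ t ≤ -f A - -bexp S q f› (by linarith)
  rw [bexp_add] at h3
  linarith

end Bernoulli

section Nibble

variable {α : Type*} [DecidableEq α]

theorem bexp_disjoint {ι : Type*} [DecidableEq ι] {S : Finset ι} {q : ι → ℝ} {B : Finset ι}
    (hB : B ⊆ S) :
    bexp S q (fun A => if Disjoint B A then 1 else 0) = ∏ i ∈ B, (1 - q i) := by
  have h := bexp_indicator (q := q) (Finset.empty_subset S) hB (Finset.disjoint_empty_left _)
  simpa only [Finset.empty_subset, true_and, Finset.prod_empty, one_mul] using h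

theorem bexp_subset {ι : Type*} [DecidableEq ι] {S : Finset ι} {q : ι → ℝ} {B : Finset ι}
    (hB : B ⊆ S) :
    bexp S q (fun A => if B ⊆ A then 1 else 0) = ∏ i ∈ B, q i := by
  have h := bexp_indicator (q := q) hB (Finset.empty_subset S) (Finset.disjoint_empty_right _)
  simpa only [Finset.disjoint_empty_left, and_true, Finset.prod_empty, mul_one] using h

/-- Every product of numbers `1 - q i` with `q i ∈ [0, 1]` is close to `1 - ∑ q i`. -/
theorem prod_one_sub_bounds {ι : Type*} (B : Finset ι) (q : ι → ℝ)
    (hq : ∀ i ∈ B, 0 ≤ q i ∧ q i ≤ 1) :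
    1 - ∑ i ∈ B, q i ≤ ∏ i ∈ B, (1 - q i) ∧
      ∏ i ∈ B, (1 - q i) ≤ 1 - ∑ i ∈ B, q i + (∑ i ∈ B, q i) ^ 2 := by
  induction B using Finset.induction_on with
  | empty => simp
  | insert i B hi ih =>
    obtain ⟨h1, h2⟩ := ih fun j hj => hq j (Finset.mem_insert_of_mem hj)
    have hqi := hq i (Finset.mem_insert_self i B)
    have hs : 0 ≤ ∑ j ∈ B, q j :=
      Finset.sum_nonneg fun j hj => (hq j (Finset.mem_insert_of_mem hj)).1
    rw [Finset.prod_insert hi, Finset.sum_insert hi]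
    constructor
    · nlinarith [mul_le_mul_of_nonneg_left h1 (by linarith [hqi.2] : 0 ≤ 1 - q i),
        mul_nonneg hqi.1 hs]
    · nlinarith [mul_le_mul_of_nonneg_left h2 (by linarith [hqi.2] : 0 ≤ 1 - q i),
        mul_nonneg hqi.1 hs, mul_nonneg hqi.1 (sq_nonneg (∑ j ∈ B, q j)), sq_nonneg (q i)]

/-- The edges of `H` that meet `T`. -/
def meeting (H : Finset (Finset α)) (T : Finset α) : Finset (Finset α) :=
  H.filter fun e => ¬ Disjoint e T

/-- A weighted `4`-uniform hypergraph with weighted degrees `1 ± δ` and weighted codegrees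
at most `κ`. -/
structure NearRegular (V : Finset α) (H : Finset (Finset α)) (w : Finset α → ℝ) (δ κ : ℝ) :
    Prop where
  sub : ∀ e ∈ H, e ⊆ V
  card : ∀ e ∈ H, e.card = 4
  nonneg : ∀ e ∈ H, 0 ≤ w e
  deg : ∀ v ∈ V, |∑ e ∈ H with v ∈ e, w e - 1| ≤ δ
  codeg : ∀ u v, u ≠ v → ∑ e ∈ H with u ∈ e ∧ v ∈ e, w e ≤ κ

theorem sum_meeting_le {H : Finset (Finset α)} {w : Finset α → ℝ} (hw : ∀ e ∈ H, 0 ≤ w e)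
    (T : Finset α) : ∑ e ∈ meeting H T, w e ≤ ∑ u ∈ T, ∑ e ∈ H with u ∈ e, w e := by
  simp only [meeting, Finset.sum_filter]
  rw [Finset.sum_comm]
  refine Finset.sum_le_sum fun e he => ?_
  split_ifs with h
  · exact Finset.sum_nonneg fun u _ => by split_ifs <;> [exact hw e he; exact le_rfl]
  · obtain ⟨u, hue, huT⟩ := Finset.not_disjoint_iff.1 h
    refine le_trans ?_ (Finset.single_le_sum (f := fun u => if u ∈ e then w e else 0)
      (fun u _ => by
        change 0 ≤ if u ∈ e then w e else 0
        split_ifs <;> [exact hw e he; exact le_rfl]) huT)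
    simp [hue]

theorem le_sum_meeting {H : Finset (Finset α)} {w : Finset α → ℝ} (hw : ∀ e ∈ H, 0 ≤ w e)
    (T : Finset α) : ∑ u ∈ T, ∑ e ∈ H with u ∈ e, w e -
      ∑ x ∈ T.offDiag, ∑ e ∈ H with x.1 ∈ e ∧ x.2 ∈ e, w e ≤ ∑ e ∈ meeting H T, w e := by
  simp only [meeting, Finset.sum_filter]
  rw [Finset.sum_comm, Finset.sum_comm (s := T.offDiag), ← Finset.sum_sub_distrib]
  refine Finset.sum_le_sum fun e he => ?_
  have h1 : ∑ u ∈ T, (if u ∈ e then w e else 0) = ((T ∩ e).card : ℝ) * w e := by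
    rw [← Finset.sum_filter, Finset.sum_const, nsmul_eq_mul, Finset.filter_mem_eq_inter]
  have h2 : ∑ x ∈ T.offDiag, (if x.1 ∈ e ∧ x.2 ∈ e then w e else 0) =
      ((T ∩ e).offDiag.card : ℝ) * w e := by
    rw [← Finset.sum_filter, Finset.sum_const, nsmul_eq_mul]
    congr 3
    ext x
    simp only [Finset.mem_filter, Finset.mem_offDiag, Finset.mem_inter]
    tauto
  rw [h1, h2, ← sub_mul, Finset.offDiag_card]
  have hle : (T ∩ e).card ≤ (T ∩ e).card * (T ∩ e).card := Nat.le_mul_self _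
  push_cast [Nat.cast_sub hle]
  split_ifs with h
  · have : T ∩ e = ∅ := Finset.disjoint_iff_inter_eq_empty.1 h.symm
    simp [this]
  · have h3 : ((T ∩ e).card : ℝ) - ((T ∩ e).card * (T ∩ e).card - (T ∩ e).card) ≤ 1 := by
      nlinarith [sq_nonneg (((T ∩ e).card : ℝ) - 1)]
    nlinarith [hw e he]

variable {V : Finset α} {H : Finset (Finset α)} {w : Finset α → ℝ} {δ κ θ : ℝ}

theorem NearRegular.weight_le (h : NearRegular V H w δ κ) {e : Finset α} (he : e ∈ H) :
    w e ≤ κ := by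
  have hc : 1 < e.card := by rw [h.card e he]; norm_num
  obtain ⟨u, hu, v, hv, huv⟩ := Finset.one_lt_card.1 hc
  refine le_trans ?_ (h.codeg u v huv)
  exact Finset.single_le_sum (f := w) (fun f hf => h.nonneg f (Finset.mem_filter.1 hf).1)
    (Finset.mem_filter.2 ⟨he, hu, hv⟩)

theorem NearRegular.deg_le (h : NearRegular V H w δ κ) {v : α} (hv : v ∈ V) :
    ∑ e ∈ H with v ∈ e, w e ≤ 1 + δ := by linarith [(abs_le.1 (h.deg v hv)).2]

theorem NearRegular.le_deg (h : NearRegular V H w δ κ) {v : α} (hv : v ∈ V) :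
    1 - δ ≤ ∑ e ∈ H with v ∈ e, w e := by linarith [(abs_le.1 (h.deg v hv)).1]

theorem NearRegular.sum_meeting_le (h : NearRegular V H w δ κ) {T : Finset α} (hT : T ⊆ V) :
    ∑ e ∈ meeting H T, w e ≤ T.card * (1 + δ) := by
  refine (_root_.sum_meeting_le h.nonneg T).trans ?_
  rw [← nsmul_eq_mul]
  exact Finset.sum_le_card_nsmul _ _ _ fun u hu => h.deg_le (hT hu)

theorem NearRegular.le_sum_meeting (h : NearRegular V H w δ κ) {T : Finset α} (hT : T ⊆ V)
    (hκ : 0 ≤ κ) :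
    T.card * (1 - δ) - T.card * T.card * κ ≤ ∑ e ∈ meeting H T, w e := by
  refine le_trans ?_ (_root_.le_sum_meeting h.nonneg T)
  have h1 : (T.card : ℝ) * (1 - δ) ≤ ∑ u ∈ T, ∑ e ∈ H with u ∈ e, w e := by
    rw [← nsmul_eq_mul]
    exact Finset.card_nsmul_le_sum _ _ _ fun u hu => h.le_deg (hT hu)
  have h2 : ∑ x ∈ T.offDiag, ∑ e ∈ H with x.1 ∈ e ∧ x.2 ∈ e, w e ≤ T.card * T.card * κ := by
    refine (Finset.sum_le_card_nsmul _ _ κ fun x hx =>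
      h.codeg _ _ (Finset.mem_offDiag.1 hx).2.2).trans ?_
    rw [nsmul_eq_mul, Finset.offDiag_card]
    refine mul_le_mul_of_nonneg_right ?_ hκ
    rw [← Nat.cast_mul]
    exact Nat.cast_le.2 (Nat.sub_le _ _)
  linarith

theorem NearRegular.total_weight_le (h : NearRegular V H w δ κ) :
    4 * ∑ e ∈ H, w e ≤ V.card * (1 + δ) := by
  have h1 : ∑ v ∈ V, ∑ e ∈ H with v ∈ e, w e = 4 * ∑ e ∈ H, w e := by
    simp only [Finset.sum_filter]
    rw [Finset.sum_comm, Finset.mul_sum]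
    refine Finset.sum_congr rfl fun e he => ?_
    rw [← Finset.sum_filter, Finset.sum_const, nsmul_eq_mul, Finset.filter_mem_eq_inter,
      Finset.inter_eq_right.2 (h.sub e he), h.card e he]
    norm_num
  rw [← h1, ← nsmul_eq_mul]
  exact Finset.sum_le_card_nsmul _ _ _ fun v hv => h.deg_le hv

/-- The weight of the edges at `v` such that no edge of `A` meets their other vertices. -/
noncomputable def survivingDeg (H : Finset (Finset α)) (w : Finset α → ℝ) (v : α)
    (A : Finset (Finset α)) : ℝ :=
  ∑ e ∈ H with v ∈ e, w e * if Disjoint (meeting H (e.erase v)) A then 1 else 0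

theorem NearRegular.abs_bexp_survivingDeg_sub_le (h : NearRegular V H w δ κ) (hθ : 0 < θ)
    (hθ' : θ ≤ 1 / 100) (hκ : 0 ≤ κ) (hκθ : κ ≤ θ) (hδ : 0 ≤ δ) (hδ' : δ ≤ 1 / 2) {v : α}
    (hv : v ∈ V) :
    |bexp H (fun e => θ * w e) (survivingDeg H w v) - (1 - 3 * θ)| ≤
      (1 - 3 * θ) * δ + (3 / 2) * (3 * θ * δ + 30 * θ ^ 2) := by
  have hmean : bexp H (fun e => θ * w e) (survivingDeg H w v) =
      ∑ e ∈ H with v ∈ e, w e * ∏ a ∈ meeting H (e.erase v), (1 - θ * w a) := by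
    unfold survivingDeg
    rw [bexp_sum]
    refine Finset.sum_congr rfl fun e _ => ?_
    rw [bexp_const_mul, bexp_disjoint (B := meeting H (e.erase v)) (Finset.filter_subset _ _)]
  have hprod : ∀ e ∈ H.filter (v ∈ ·),
      |∏ a ∈ meeting H (e.erase v), (1 - θ * w a) - (1 - 3 * θ)| ≤ 3 * θ * δ + 30 * θ ^ 2 := by
    intro e he
    obtain ⟨heH, hve⟩ := Finset.mem_filter.1 he
    have hsub : e.erase v ⊆ V := (Finset.erase_subset _ _).trans (h.sub e heH)
    have hcard : ((e.erase v).card : ℝ) = 3 := by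
      rw [Finset.card_erase_of_mem hve, h.card e heH]; norm_num
    have h1 := h.sum_meeting_le hsub
    have h2 := h.le_sum_meeting hsub hκ
    rw [hcard] at h1 h2
    obtain ⟨h3, h4⟩ := prod_one_sub_bounds (meeting H (e.erase v)) (fun a => θ * w a)
      fun a ha => by
        have haH := (Finset.mem_filter.1 ha).1
        refine ⟨mul_nonneg hθ.le (h.nonneg a haH), ?_⟩
        nlinarith [h.weight_le haH, h.nonneg a haH]
    rw [← Finset.mul_sum] at h3 h4
    set T := ∑ a ∈ meeting H (e.erase v), w a
    have hT0 : 0 ≤ T := Finset.sum_nonneg fun a ha => h.nonneg a (Finset.mem_filter.1 ha).1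
    have h5 : θ * T ≤ θ * (3 * (1 + δ)) := mul_le_mul_of_nonneg_left h1 hθ.le
    have h6 : θ * (3 * (1 - δ) - 3 * 3 * κ) ≤ θ * T := mul_le_mul_of_nonneg_left h2 hθ.le
    have h7 : θ * κ ≤ θ * θ := mul_le_mul_of_nonneg_left hκθ hθ.le
    have h8 : T ^ 2 ≤ (9 / 2) ^ 2 := pow_le_pow_left₀ hT0 (by linarith) 2
    have h9 : θ ^ 2 * T ^ 2 ≤ θ ^ 2 * (9 / 2) ^ 2 := mul_le_mul_of_nonneg_left h8 (sq_nonneg θ)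
    rw [abs_le]
    constructor <;> nlinarith
  rw [hmean]
  have hsplit : ∑ e ∈ H with v ∈ e, w e * ∏ a ∈ meeting H (e.erase v), (1 - θ * w a) -
      (1 - 3 * θ) = (1 - 3 * θ) * (∑ e ∈ H with v ∈ e, w e - 1) +
      ∑ e ∈ H with v ∈ e, w e * (∏ a ∈ meeting H (e.erase v), (1 - θ * w a) - (1 - 3 * θ)) := by
    simp only [mul_sub, Finset.sum_sub_distrib, ← Finset.sum_mul]
    ring
  rw [hsplit]
  refine (abs_add_le _ _).trans (add_le_add ?_ ?_)
  · rw [abs_mul, abs_of_nonneg (by linarith : 0 ≤ 1 - 3 * θ)]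
    exact mul_le_mul_of_nonneg_left (h.deg v hv) (by linarith)
  · refine (Finset.abs_sum_le_sum_abs _ _).trans ?_
    have h1 : ∀ e ∈ H.filter (v ∈ ·),
        |w e * (∏ a ∈ meeting H (e.erase v), (1 - θ * w a) - (1 - 3 * θ))| ≤
          w e * (3 * θ * δ + 30 * θ ^ 2) := fun e he => by
      have hw := h.nonneg e (Finset.mem_filter.1 he).1
      rw [abs_mul, abs_of_nonneg hw]
      exact mul_le_mul_of_nonneg_left (hprod e he) hw
    refine (Finset.sum_le_sum h1).trans ?_
    rw [← Finset.sum_mul]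
    refine mul_le_mul_of_nonneg_right ?_ (by positivity)
    linarith [h.deg_le hv]

theorem NearRegular.survivingDeg_tail (h : NearRegular V H w δ κ) (hθ : 0 < θ)
    (hθ' : θ ≤ 1 / 100) (hκ : 0 < κ) (hκθ : κ ≤ θ) (hδ' : δ ≤ 1 / 2) {v : α}
    (hv : v ∈ V) :
    bexp H (fun e => θ * w e) (fun A => if θ ^ 2 ≤ |survivingDeg H w v A -
      bexp H (fun e => θ * w e) (survivingDeg H w v)| then 1 else 0) ≤
      2 * Real.exp (-(θ ^ 3 / (108 * κ))) := by
  set c : Finset α → ℝ := fun a => ∑ e ∈ H with v ∈ e ∧ a ∈ meeting H (e.erase v), w e with hc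
  have hc0 : ∀ a, 0 ≤ c a := fun a =>
    Finset.sum_nonneg fun e he => h.nonneg e (Finset.mem_filter.1 he).1
  have hc4 : ∀ a ∈ H, c a ≤ 4 * κ := by
    intro a ha
    have h1 : c a ≤ ∑ u ∈ a.erase v, ∑ e ∈ H with u ∈ e ∧ v ∈ e, w e := by
      rw [hc]
      simp only [Finset.sum_filter]
      rw [Finset.sum_comm]
      refine Finset.sum_le_sum fun e he => ?_
      have hnn : ∀ u ∈ a.erase v, 0 ≤ if u ∈ e ∧ v ∈ e then w e else 0 := fun u _ => by
        split_ifs <;> [exact h.nonneg e he; exact le_rfl]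
      split_ifs with hve
      · obtain ⟨u, hua, hue⟩ := Finset.not_disjoint_iff.1 (Finset.mem_filter.1 hve.2).2
        obtain ⟨huv, hue⟩ := Finset.mem_erase.1 hue
        refine le_trans ?_ (Finset.single_le_sum (f := fun u => if u ∈ e ∧ v ∈ e then w e else 0)
          hnn (Finset.mem_erase.2 ⟨huv, hua⟩))
        simp [hue, hve.1]
      · exact Finset.sum_nonneg hnn
    refine h1.trans ((Finset.sum_le_card_nsmul _ _ κ fun u hu =>
      h.codeg u v (Finset.mem_erase.1 hu).1).trans ?_)
    rw [nsmul_eq_mul]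
    refine mul_le_mul_of_nonneg_right ?_ hκ.le
    have := Finset.card_erase_le (s := a) (a := v)
    rw [h.card a ha] at this
    exact_mod_cast this
  have hq : ∀ e ∈ H, 0 ≤ θ * w e ∧ θ * w e ≤ 1 := fun e he =>
    ⟨mul_nonneg hθ.le (h.nonneg e he), by nlinarith [h.weight_le he, h.nonneg e he]⟩
  have hvar : ∑ a ∈ H, θ * w a * c a ^ 2 ≤ 27 * κ * θ := by
    have h1 : ∑ a ∈ H, θ * w a * c a ^ 2 ≤ ∑ a ∈ H, (4 * κ * θ) * (w a * c a) :=
      Finset.sum_le_sum fun a ha => by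
        have : w a * c a * c a ≤ w a * c a * (4 * κ) :=
          mul_le_mul_of_nonneg_left (hc4 a ha) (mul_nonneg (h.nonneg a ha) (hc0 a))
        nlinarith
    have h2 : ∑ a ∈ H, w a * c a =
        ∑ e ∈ H with v ∈ e, w e * ∑ a ∈ meeting H (e.erase v), w a := by
      simp only [hc, Finset.mul_sum, Finset.sum_filter, meeting, Finset.mem_filter]
      rw [Finset.sum_comm]
      refine Finset.sum_congr rfl fun e he => ?_
      by_cases hve : v ∈ e
      · simp only [hve, true_and, if_true]
        refine Finset.sum_congr rfl fun a ha => ?_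
        simp only [ha, true_and]
        split_ifs <;> ring
      · simp [hve]
    have h3 : ∑ a ∈ H, w a * c a ≤ (3 / 2) * (9 / 2) := by
      rw [h2]
      calc _ ≤ ∑ e ∈ H with v ∈ e, w e * (9 / 2) := Finset.sum_le_sum fun e he => by
            obtain ⟨heH, hve⟩ := Finset.mem_filter.1 he
            refine mul_le_mul_of_nonneg_left ?_ (h.nonneg e heH)
            have := h.sum_meeting_le ((Finset.erase_subset v _).trans (h.sub e heH))
            rw [Finset.card_erase_of_mem hve, h.card e heH] at this
            norm_num at this
            linarith
        _ ≤ _ := by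
            rw [← Finset.sum_mul]
            exact mul_le_mul_of_nonneg_right (by linarith [h.deg_le hv]) (by norm_num)
    rw [← Finset.mul_sum] at h1
    refine h1.trans ((mul_le_mul_of_nonneg_left h3 (by positivity)).trans ?_)
    linarith
  have htail := bexp_tail_le (S := H) (q := fun e => θ * w e) hq (f := survivingDeg H w v)
    (c := c) (s := 27 * κ * θ) (t := θ ^ 2) (by positivity) (by positivity) (fun a ha => by
      have := hc4 a ha
      nlinarith [mul_le_mul_of_nonneg_left this (sq_nonneg θ), mul_pos hκ hθ,
        mul_pos (mul_pos hκ hθ) hθ]) (fun a ha A hA haA => by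
      unfold survivingDeg
      rw [← Finset.sum_sub_distrib]
      refine (Finset.abs_sum_le_sum_abs _ _).trans ?_
      have hca : c a = ∑ e ∈ H with v ∈ e, if a ∈ meeting H (e.erase v) then w e else 0 := by
        simp only [hc, Finset.sum_filter, ite_and]
      rw [hca]
      refine Finset.sum_le_sum fun e he => ?_
      have hw := h.nonneg e (Finset.mem_filter.1 he).1
      simp only [Finset.disjoint_insert_right]
      by_cases hae : a ∈ meeting H (e.erase v)
      · by_cases hd : Disjoint (meeting H (e.erase v)) A
        · simp [hae, hd, abs_of_nonneg hw]
        · simp [hd, hae, hw]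
      · simp [hae]) hvar
  refine htail.trans (le_of_eq ?_)
  congr 3
  field_simp
  ring

end Nibble

section Round

variable {α : Type*} [DecidableEq α]
variable {V : Finset α} {H : Finset (Finset α)} {w : Finset α → ℝ} {δ κ θ : ℝ}

/-- The edges of `A` disjoint from all other edges of `A`. -/
def isolatedEdges (A : Finset (Finset α)) : Finset (Finset α) :=
  A.filter fun e => ∀ f ∈ A, f ≠ e → Disjoint e f

/-- The vertices covered by `A` but not by its isolated edges. -/
def wasted (A : Finset (Finset α)) : Finset α :=
  A.biUnion id \ (isolatedEdges A).biUnion id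

theorem NearRegular.bexp_wasted_le (h : NearRegular V H w δ κ) (hθ : 0 < θ)
    (hq : ∀ e ∈ H, 0 ≤ θ * w e ∧ θ * w e ≤ 1) (hδ' : δ ≤ 1 / 2) :
    bexp H (fun e => θ * w e) (fun A => ((wasted A).card : ℝ)) ≤ 9 * θ ^ 2 * V.card := by
  have h1 : ∀ A ⊆ H, ((wasted A).card : ℝ) ≤
      ∑ e ∈ H, ∑ f ∈ (meeting H e).erase e,
          4 * (if ({e, f} : Finset (Finset α)) ⊆ A then 1 else 0) := by
    intro A hA
    have hnn : ∀ e, ∀ f ∈ (meeting H e).erase e,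
        (0 : ℝ) ≤ 4 * (if ({e, f} : Finset (Finset α)) ⊆ A then 1 else 0) := fun e f _ => by
      split_ifs <;> norm_num
    have hsub : wasted A ⊆ (A \ isolatedEdges A).biUnion id := by
      intro x hx
      obtain ⟨hx1, hx2⟩ := Finset.mem_sdiff.1 hx
      obtain ⟨e, he, hxe⟩ := Finset.mem_biUnion.1 hx1
      refine Finset.mem_biUnion.2 ⟨e, Finset.mem_sdiff.2 ⟨he, fun hiso => hx2 ?_⟩, hxe⟩
      exact Finset.mem_biUnion.2 ⟨e, hiso, hxe⟩
    have hcard : (wasted A).card ≤ ∑ e ∈ A \ isolatedEdges A, 4 :=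
      ((Finset.card_le_card hsub).trans Finset.card_biUnion_le).trans
        (Finset.sum_le_sum fun e he => by simp [h.card e (hA (Finset.mem_sdiff.1 he).1)])
    calc ((wasted A).card : ℝ) ≤ ∑ e ∈ A \ isolatedEdges A, (4 : ℝ) := by exact_mod_cast hcard
      _ ≤ ∑ e ∈ A \ isolatedEdges A, ∑ f ∈ (meeting H e).erase e,
          4 * (if ({e, f} : Finset (Finset α)) ⊆ A then (1 : ℝ) else 0) := by
        refine Finset.sum_le_sum fun e he => ?_
        obtain ⟨heA, hiso⟩ := Finset.mem_sdiff.1 he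
        have : ∃ f ∈ A, f ≠ e ∧ ¬ Disjoint e f := by
          by_contra! hcon
          exact hiso (Finset.mem_filter.2 ⟨heA, hcon⟩)
        obtain ⟨f, hf, hfe, hd⟩ := this
        have hmem : f ∈ (meeting H e).erase e :=
          Finset.mem_erase.2 ⟨hfe, Finset.mem_filter.2 ⟨hA hf, fun hd' => hd hd'.symm⟩⟩
        refine le_trans ?_ (Finset.single_le_sum (hnn e) hmem)
        rw [if_pos (by simp [Finset.insert_subset_iff, heA, hf]), mul_one]
      _ ≤ _ := Finset.sum_le_sum_of_subset_of_nonneg (Finset.sdiff_subset.trans hA)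
          fun e _ _ => Finset.sum_nonneg (hnn e)
  refine (bexp_mono hq h1).trans ?_
  rw [bexp_sum]
  have h2 : ∀ e ∈ H, bexp H (fun e => θ * w e) (fun A => ∑ f ∈ (meeting H e).erase e,
      4 * (if ({e, f} : Finset (Finset α)) ⊆ A then 1 else 0)) ≤ 24 * θ ^ 2 * w e := by
    intro e he
    have hwe := h.nonneg e he
    rw [bexp_sum]
    have h3 : ∀ f ∈ (meeting H e).erase e, bexp H (fun e => θ * w e)
        (fun A => 4 * (if ({e, f} : Finset (Finset α)) ⊆ A then 1 else 0)) =
          4 * θ ^ 2 * w e * w f := by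
      intro f hf
      obtain ⟨hfe, hf⟩ := Finset.mem_erase.1 hf
      rw [bexp_const_mul, bexp_subset (B := {e, f}) (by
        simp [Finset.insert_subset_iff, he, (Finset.mem_filter.1 hf).1]),
        Finset.prod_pair hfe.symm]
      ring
    rw [Finset.sum_congr rfl h3, ← Finset.mul_sum]
    have h4 : ∑ f ∈ (meeting H e).erase e, w f ≤ 6 :=
      calc _ ≤ ∑ f ∈ meeting H e, w f :=
            Finset.sum_le_sum_of_subset_of_nonneg (Finset.erase_subset _ _)
              fun f hf _ => h.nonneg f (Finset.mem_filter.1 hf).1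
        _ ≤ 4 * (1 + δ) := by
            have := h.sum_meeting_le (h.sub e he)
            rw [h.card e he] at this
            exact_mod_cast this
        _ ≤ 6 := by linarith
    have h5 := mul_le_mul_of_nonneg_left h4 (by positivity : 0 ≤ 4 * θ ^ 2 * w e)
    linarith
  refine (Finset.sum_le_sum h2).trans ?_
  rw [← Finset.mul_sum]
  have h6 := h.total_weight_le
  have h7 : (V.card : ℝ) * (1 + δ) ≤ V.card * (3 / 2) :=
    mul_le_mul_of_nonneg_left (by linarith) (Nat.cast_nonneg _)
  nlinarith [sq_nonneg θ]

theorem NearRegular.bexp_uncovered_le (h : NearRegular V H w δ κ) (hθ : 0 < θ) (hθ' : θ ≤ 1)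
    (hq : ∀ e ∈ H, 0 ≤ θ * w e ∧ θ * w e ≤ 1) (hδ' : δ ≤ 1 / 2) :
    bexp H (fun e => θ * w e) (fun A => ((V \ A.biUnion id).card : ℝ)) ≤
      (1 - θ / 4) * V.card := by
  have h1 : ∀ A ⊆ H, ((V \ A.biUnion id).card : ℝ) =
      ∑ v ∈ V, if Disjoint (H.filter (v ∈ ·)) A then 1 else 0 := by
    intro A hA
    rw [Finset.sum_boole]
    congr 2
    ext v
    simp only [Finset.mem_sdiff, Finset.mem_biUnion, id, Finset.mem_filter, Finset.disjoint_left]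
    refine and_congr_right fun _ => ⟨fun hx e he hea => hx ⟨e, hea, he.2⟩, ?_⟩
    rintro hx ⟨e, he, hv⟩
    exact hx ⟨hA he, hv⟩ he
  rw [bexp_congr h1, bexp_sum, mul_comm, ← nsmul_eq_mul]
  refine Finset.sum_le_card_nsmul _ _ _ fun v hv => ?_
  rw [bexp_disjoint (B := H.filter (v ∈ ·)) (Finset.filter_subset _ _)]
  have h2 : ∏ e ∈ H with v ∈ e, (1 - θ * w e) ≤ Real.exp (-(θ * (1 / 2))) := by
    calc _ ≤ ∏ e ∈ H with v ∈ e, Real.exp (-(θ * w e)) :=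
          Finset.prod_le_prod (fun e he => by linarith [(hq e (Finset.mem_filter.1 he).1).2])
            fun e _ => by linarith [Real.add_one_le_exp (-(θ * w e))]
      _ = Real.exp (-(θ * ∑ e ∈ H with v ∈ e, w e)) := by
          rw [← Real.exp_sum, Finset.sum_neg_distrib, Finset.mul_sum]
      _ ≤ _ := by
          rw [Real.exp_le_exp]
          nlinarith [h.le_deg hv]
  have h3 := (abs_le.1 (Real.abs_exp_sub_one_sub_id_le (x := -(θ * (1 / 2))) (by
    rw [abs_neg, abs_of_nonneg (by positivity)]; linarith))).2
  nlinarith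

theorem NearRegular.restrict (h : NearRegular V H w δ κ) (hθ : 0 < θ)
    (hθ' : θ ≤ 1 / 100) (hκ : 0 < κ) (hκθ : κ ≤ θ) (hδ : 0 ≤ δ) (hδ' : δ ≤ 1 / 2)
    {A : Finset (Finset α)} (hA : A ⊆ H)
    (hgood : ∀ v ∈ V, |survivingDeg H w v A -
      bexp H (fun e => θ * w e) (survivingDeg H w v)| < θ ^ 2) :
    NearRegular (V \ A.biUnion id) (H.filter (· ⊆ V \ A.biUnion id))
      (fun e => w e / (1 - 3 * θ)) (δ * (1 + 9 * θ) + 50 * θ ^ 2) (κ * (1 + 6 * θ)) := by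
  have hpos : 0 < 1 - 3 * θ := by linarith
  have hinv : ∀ x : ℝ, 0 ≤ x → x / (1 - 3 * θ) ≤ x * (1 + 6 * θ) := fun x hx => by
    rw [div_le_iff₀ hpos]
    nlinarith [mul_nonneg hx hθ.le,
        mul_nonneg (mul_nonneg hx hθ.le) (by linarith : 0 ≤ 1 / 100 - θ)]
  refine ⟨fun e he => (Finset.mem_filter.1 he).2,
    fun e he => h.card e (Finset.mem_filter.1 he).1,
    fun e he => div_nonneg (h.nonneg e (Finset.mem_filter.1 he).1) hpos.le, ?_, ?_⟩
  · intro v hv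
    obtain ⟨hvV, hvA⟩ := Finset.mem_sdiff.1 hv
    have hdeg : ∑ e ∈ (H.filter (· ⊆ V \ A.biUnion id)) with v ∈ e, w e / (1 - 3 * θ) =
        survivingDeg H w v A / (1 - 3 * θ) := by
      rw [← Finset.sum_div]
      congr 1
      unfold survivingDeg
      rw [Finset.filter_filter, Finset.sum_filter, Finset.sum_filter]
      refine Finset.sum_congr rfl fun e he => ?_
      by_cases hve : v ∈ e
      · have hiff : e ⊆ V \ A.biUnion id ↔ Disjoint (meeting H (e.erase v)) A := by
          rw [Finset.disjoint_left]
          constructor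
          · intro hs a ha haA
            obtain ⟨u, hua, hue⟩ := Finset.not_disjoint_iff.1 (Finset.mem_filter.1 ha).2
            exact (Finset.mem_sdiff.1 (hs (Finset.mem_of_mem_erase hue))).2
              (Finset.mem_biUnion.2 ⟨a, haA, hua⟩)
          · intro hd x hx
            refine Finset.mem_sdiff.2 ⟨h.sub e he hx, fun hxA => ?_⟩
            obtain ⟨a, haA, hxa⟩ := Finset.mem_biUnion.1 hxA
            by_cases hxv : x = v
            · exact hvA (Finset.mem_biUnion.2 ⟨a, haA, hxv ▸ hxa⟩)
            · exact hd (Finset.mem_filter.2 ⟨hA haA, Finset.not_disjoint_iff.2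
                ⟨x, hxa, Finset.mem_erase.2 ⟨hxv, hx⟩⟩⟩) haA
        simp only [hve, and_true, hiff, if_true]
        split_ifs <;> simp
      · simp [hve]
    have h1 := h.abs_bexp_survivingDeg_sub_le hθ hθ' hκ.le hκθ hδ hδ' hvV
    have h2 := hgood v hvV
    have h3 : |survivingDeg H w v A - (1 - 3 * θ)| ≤
        (1 - 3 * θ) * δ + (3 / 2) * (3 * θ * δ + 30 * θ ^ 2) + θ ^ 2 := by
      have := abs_sub_le (survivingDeg H w v A) (bexp H (fun e => θ * w e) (survivingDeg H w v))
        (1 - 3 * θ)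
      linarith
    have h4 : survivingDeg H w v A / (1 - 3 * θ) - 1 =
        (survivingDeg H w v A - (1 - 3 * θ)) / (1 - 3 * θ) := by
      field_simp
    rw [hdeg, h4, abs_div, abs_of_pos hpos, div_le_iff₀ hpos]
    have h5 : 0 ≤ δ * θ * (1 / 100 - θ) := by
      apply mul_nonneg (by positivity); linarith
    have h6 : 0 ≤ θ ^ 2 * (1 / 100 - θ) := by
      apply mul_nonneg (by positivity); linarith
    nlinarith [mul_nonneg hδ hθ.le, sq_nonneg θ]
  · intro u v huv
    rw [← Finset.sum_div]
    have h1 : ∑ e ∈ (H.filter (· ⊆ V \ A.biUnion id)) with u ∈ e ∧ v ∈ e, w e ≤ κ := by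
      refine le_trans (Finset.sum_le_sum_of_subset_of_nonneg ?_ ?_) (h.codeg u v huv)
      · intro e he
        simp only [Finset.mem_filter] at he ⊢
        exact ⟨he.1.1, he.2⟩
      · exact fun e he _ => h.nonneg e (Finset.mem_filter.1 he).1
    exact (div_le_div_of_nonneg_right h1 hpos.le).trans (hinv κ hκ.le)

theorem NearRegular.exists_round (h : NearRegular V H w δ κ) (hθ : 0 < θ)
    (hθ' : θ ≤ 1 / 100) (hκ : 0 < κ) (hκθ : κ ≤ θ) (hδ : 0 ≤ δ) (hδ' : δ ≤ 1 / 2)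
    (hπ : V.card * (2 * Real.exp (-(θ ^ 3 / (108 * κ)))) ≤ θ ^ 2) {l : ℝ} (hl : 0 ≤ l)
    (hl' : l ≤ 2) :
    ∃ A ⊆ H, (wasted A).card + l * (V \ A.biUnion id).card ≤
        V.card * (12 * θ ^ 2 + l * (1 - θ / 4)) ∧
      NearRegular (V \ A.biUnion id) (H.filter (· ⊆ V \ A.biUnion id))
      (fun e => w e / (1 - 3 * θ)) (δ * (1 + 9 * θ) + 50 * θ ^ 2) (κ * (1 + 6 * θ)) := by
  have hq : ∀ e ∈ H, 0 ≤ θ * w e ∧ θ * w e ≤ 1 := fun e he =>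
    ⟨mul_nonneg hθ.le (h.nonneg e he), by nlinarith [h.weight_le he, h.nonneg e he]⟩
  set dev : α → Finset (Finset α) → ℝ := fun v A => |survivingDeg H w v A -
      bexp H (fun e => θ * w e) (survivingDeg H w v)| with hdev
  obtain ⟨A, hA, hle⟩ := exists_le_bexp hq (fun A => ((wasted A).card : ℝ) +
    (l * ((V \ A.biUnion id).card : ℝ) + 3 * V.card * ∑ v ∈ V, if θ ^ 2 ≤ dev v A then 1 else 0))
  rw [bexp_add, bexp_add, bexp_const_mul, bexp_const_mul, bexp_sum] at hle
  have h1 := h.bexp_wasted_le hθ hq hδ'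
  have h2 := h.bexp_uncovered_le hθ (by linarith) hq hδ'
  have h3 : ∑ v ∈ V, bexp H (fun e => θ * w e) (fun A => if θ ^ 2 ≤ dev v A then 1 else 0) ≤
      θ ^ 2 := by
    refine le_trans ?_ hπ
    rw [← nsmul_eq_mul]
    exact Finset.sum_le_card_nsmul _ _ _ fun v hv =>
      h.survivingDeg_tail hθ hθ' hκ hκθ hδ' hv
  have hV : (0 : ℝ) ≤ V.card := Nat.cast_nonneg _
  have h4 := mul_le_mul_of_nonneg_left h2 hl
  have h5 := mul_le_mul_of_nonneg_left h3 (by positivity : 0 ≤ 3 * (V.card : ℝ))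
  have hnn : 0 ≤ ∑ v ∈ V, if θ ^ 2 ≤ dev v A then (1 : ℝ) else 0 :=
    Finset.sum_nonneg fun v _ => by split_ifs <;> norm_num
  have h6 := mul_nonneg (by positivity : 0 ≤ 3 * (V.card : ℝ)) hnn
  refine ⟨A, hA, by linarith, h.restrict hθ hθ' hκ hκθ hδ hδ' hA fun v hv => ?_⟩
  by_contra! hbad
  have hone : 1 ≤ ∑ v ∈ V, if θ ^ 2 ≤ dev v A then (1 : ℝ) else 0 := by
    refine le_trans ?_ (Finset.single_le_sum (f := fun v => if θ ^ 2 ≤ dev v A then (1 : ℝ) else 0)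
      (fun v _ => by
        change 0 ≤ if θ ^ 2 ≤ dev v A then (1 : ℝ) else 0
        split_ifs <;> norm_num) hv)
    simp only [hdev]
    rw [if_pos hbad]
  have hVpos : (1 : ℝ) ≤ V.card := by exact_mod_cast Finset.card_pos.2 ⟨v, hv⟩
  have h7 := mul_le_mul_of_nonneg_left hone (by positivity : 0 ≤ 3 * (V.card : ℝ))
  have h8 : (0 : ℝ) ≤ (wasted A).card := Nat.cast_nonneg _
  have h9 : 0 ≤ l * ((V \ A.biUnion id).card : ℝ) := by positivity
  have h10 : l * ((1 - θ / 4) * V.card) ≤ 2 * V.card := by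
    have : l * (1 - θ / 4) ≤ 2 := by nlinarith
    nlinarith
  have h11 : θ ^ 2 * V.card ≤ 1 / 100 * V.card := by
    refine mul_le_mul_of_nonneg_right ?_ hV
    nlinarith
  nlinarith

/-- Iterating the random greedy round `r` times. -/
theorem NearRegular.exists_matching {K : ℝ} (hθ : 0 < θ) (hθ' : θ ≤ 1 / 100) (hK : K ≤ θ) (n : ℕ)
    (hπ : n * (2 * Real.exp (-(θ ^ 3 / (108 * K)))) ≤ θ ^ 2) (r : ℕ) :
    ∀ (V : Finset α) (H : Finset (Finset α)) (w : Finset α → ℝ) (δ κ : ℝ),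
      NearRegular V H w δ κ → V.card ≤ n → 0 < κ → 0 ≤ δ → κ * (1 + 6 * θ) ^ r ≤ K →
      (δ + 50 * θ ^ 2 * r) * (1 + 9 * θ) ^ r ≤ 1 / 2 →
      ∃ M ⊆ H, (∀ e ∈ M, ∀ f ∈ M, e ≠ f → Disjoint e f) ∧
        ((V \ M.biUnion id).card : ℝ) ≤ (48 * θ + (1 - θ / 4) ^ r) * V.card := by
  induction r with
  | zero =>
    intro V H w δ κ _ _ _ _ _ _
    refine ⟨∅, Finset.empty_subset _, by simp, ?_⟩
    simp only [Finset.biUnion_empty, Finset.sdiff_empty, pow_zero]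
    nlinarith [mul_nonneg hθ.le (Nat.cast_nonneg (α := ℝ) V.card)]
  | succ r ih =>
    intro V H w δ κ h hVn hκ hδ hκK hδr
    have hone6 : (1 : ℝ) ≤ (1 + 6 * θ) ^ (r + 1) := one_le_pow₀ (by linarith)
    have hone9 : (1 : ℝ) ≤ (1 + 9 * θ) ^ (r + 1) := one_le_pow₀ (by linarith)
    have hκK' : κ ≤ K := le_trans (by nlinarith) hκK
    have hδ2 : δ ≤ 1 / 2 := by
      have : 0 ≤ 50 * θ ^ 2 * ((r + 1 : ℕ) : ℝ) := by positivity
      nlinarith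
    have hKpos : 0 < K := hκ.trans_le hκK'
    have hπ' : V.card * (2 * Real.exp (-(θ ^ 3 / (108 * κ)))) ≤ θ ^ 2 := by
      refine le_trans (mul_le_mul (Nat.cast_le.2 hVn) ?_ (by positivity) (Nat.cast_nonneg _)) hπ
      refine mul_le_mul_of_nonneg_left (Real.exp_le_exp.2 (neg_le_neg ?_)) (by norm_num)
      exact div_le_div_of_nonneg_left (by positivity) (by positivity) (by linarith)
    have hq0 : 0 ≤ 1 - θ / 4 := by linarith
    have hq1 : 1 - θ / 4 ≤ 1 := by linarith
    obtain ⟨A, hA, hwaste, hnew⟩ := h.exists_round hθ hθ' hκ (hκK'.trans hK) hδ hδ2 hπ'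
      (l := 48 * θ + (1 - θ / 4) ^ r) (by positivity)
      (by linarith [pow_le_one₀ (n := r) hq0 hq1])
    obtain ⟨M, hM, hdisj, hleft⟩ := ih _ _ _ _ _ hnew
      ((Finset.card_le_card Finset.sdiff_subset).trans hVn) (by positivity) (by positivity)
      (by
        refine le_trans (le_of_eq ?_) hκK
        rw [pow_succ]; ring)
      (by
        refine le_trans ?_ hδr
        have h9 : (0 : ℝ) ≤ (1 + 9 * θ) ^ r := by positivity
        rw [pow_succ (1 + 9 * θ) r, mul_comm ((1 + 9 * θ) ^ r), ← mul_assoc]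
        refine mul_le_mul_of_nonneg_right ?_ h9
        push_cast
        have : 0 ≤ θ ^ 3 * (r + 1) := by positivity
        nlinarith)
    have hMU : M.biUnion id ⊆ V \ A.biUnion id := by
      intro x hx
      obtain ⟨e, he, hxe⟩ := Finset.mem_biUnion.1 hx
      exact (Finset.mem_filter.1 (hM he)).2 hxe
    have hiso : isolatedEdges A ⊆ A := Finset.filter_subset _ _
    have hcross : ∀ e ∈ isolatedEdges A, ∀ f ∈ M, Disjoint e f := by
      intro e he f hf
      refine Finset.disjoint_left.2 fun x hxe hxf => ?_
      exact (Finset.mem_sdiff.1 (hMU (Finset.mem_biUnion.2 ⟨f, hf, hxf⟩))).2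
        (Finset.mem_biUnion.2 ⟨e, hiso he, hxe⟩)
    refine ⟨isolatedEdges A ∪ M, Finset.union_subset (hiso.trans hA)
      (hM.trans (Finset.filter_subset _ _)), ?_, ?_⟩
    · intro e he f hf hef
      rcases Finset.mem_union.1 he with he | he <;> rcases Finset.mem_union.1 hf with hf | hf
      · exact (Finset.mem_filter.1 he).2 f (hiso hf) hef.symm
      · exact hcross e he f hf
      · exact (hcross f hf e he).symm
      · exact hdisj e he f hf hef
    · have hsub : V \ (isolatedEdges A ∪ M).biUnion id ⊆
          wasted A ∪ ((V \ A.biUnion id) \ M.biUnion id) := by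
        intro x hx
        rw [Finset.union_biUnion] at hx
        simp only [wasted, Finset.mem_union, Finset.mem_sdiff, not_or] at hx ⊢
        tauto
      have hcard : ((V \ (isolatedEdges A ∪ M).biUnion id).card : ℝ) ≤
          (wasted A).card + ((V \ A.biUnion id) \ M.biUnion id).card := by
        exact_mod_cast (Finset.card_le_card hsub).trans (Finset.card_union_le _ _)
      refine hcard.trans ((add_le_add le_rfl hleft).trans (hwaste.trans (le_of_eq ?_)))
      rw [pow_succ]; ring

end Round

section Fractional

variable {α : Type*} [DecidableEq α]

/-- The number of edges of `H` containing both `u` and `v`. -/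
def pairDeg (H : Finset (Finset α)) (u v : α) : ℕ := (H.filter fun e => u ∈ e ∧ v ∈ e).card

variable {V : Finset α} {H : Finset (Finset α)} {k : ℝ}

theorem sum_edges_sum (hsub : ∀ e ∈ H, e ⊆ V) (y : α → ℝ) (v : α) :
    ∑ e ∈ H with v ∈ e, ∑ u ∈ e, y u = ∑ u ∈ V, pairDeg H v u * y u := by
  have h1 : ∀ e ∈ H.filter (v ∈ ·), ∑ u ∈ e, y u = ∑ u ∈ V, if u ∈ e then y u else 0 := by
    intro e he
    rw [← Finset.sum_filter, Finset.filter_mem_eq_inter,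
      Finset.inter_eq_right.2 (hsub e (Finset.mem_filter.1 he).1)]
  rw [Finset.sum_congr rfl h1, Finset.sum_comm]
  refine Finset.sum_congr rfl fun u _ => ?_
  rw [← Finset.sum_filter, Finset.sum_const, nsmul_eq_mul, Finset.filter_filter, pairDeg]

theorem four_mul_pairDeg_self (hsub : ∀ e ∈ H, e ⊆ V) (hcard : ∀ e ∈ H, e.card = 4) (v : α) :
    4 * (pairDeg H v v : ℝ) = ∑ u ∈ V, (pairDeg H v u : ℝ) := by
  have h := sum_edges_sum hsub (fun _ => 1) v
  simp only [mul_one] at h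
  rw [← h, Finset.sum_congr rfl (g := fun _ => (4 : ℝ)) fun e he => by
    simp [hcard e (Finset.mem_filter.1 he).1]]
  simp [pairDeg, mul_comm]

theorem sum_abs_pairDeg_sub_le (hsub : ∀ e ∈ H, e ⊆ V) (hcard : ∀ e ∈ H, e.card = 4)
    (hk : 0 < k) (hV : 400 ≤ V.card) {v : α} (hv : v ∈ V)
    (hc : ∑ u ∈ V.erase v, |(pairDeg H v u : ℝ) - k| ≤ k * V.card / 100) :
    |(pairDeg H v v : ℝ) - k * V.card / 3| ≤ k * V.card / 3 / 40 ∧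
    ∑ u ∈ V, |(pairDeg H v u : ℝ) - k - if u = v then k * V.card / 3 else 0| ≤
      k * V.card / 3 / 20 := by
  have h1 := four_mul_pairDeg_self hsub hcard v
  rw [← Finset.add_sum_erase V _ hv] at h1
  have hcardE : ((V.erase v).card : ℝ) = V.card - 1 := by
    rw [Finset.card_erase_of_mem hv, Nat.cast_sub (by omega)]
    simp
  have h2 : ∑ u ∈ V.erase v, (pairDeg H v u : ℝ) - k * (V.card - 1) =
      ∑ u ∈ V.erase v, ((pairDeg H v u : ℝ) - k) := by
    rw [Finset.sum_sub_distrib, Finset.sum_const, nsmul_eq_mul, hcardE]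
    ring
  have h3 : |∑ u ∈ V.erase v, (pairDeg H v u : ℝ) - k * (V.card - 1)| ≤ k * V.card / 100 := by
    rw [h2]
    exact (Finset.abs_sum_le_sum_abs _ _).trans hc
  have hV' : (400 : ℝ) ≤ V.card := by exact_mod_cast hV
  have hkV : 400 * k ≤ k * V.card := by nlinarith
  obtain ⟨h4, h5⟩ := abs_le.1 h3
  have h6 : |(pairDeg H v v : ℝ) - k * V.card / 3| ≤ k * V.card / 300 + k / 3 := by
    rw [abs_le]
    constructor <;> linarith
  refine ⟨by linarith, ?_⟩
  rw [← Finset.add_sum_erase V _ hv, if_pos rfl]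
  have h7 : ∑ u ∈ V.erase v, |(pairDeg H v u : ℝ) - k - if u = v then k * V.card / 3 else 0| ≤
      k * V.card / 100 := by
    refine le_trans (le_of_eq (Finset.sum_congr rfl fun u hu => ?_)) hc
    rw [if_neg (Finset.mem_erase.1 hu).1, sub_zero]
  have h8 : |(pairDeg H v v : ℝ) - k - k * V.card / 3| ≤ k * V.card / 300 + k / 3 + k := by
    rw [abs_le] at h6 ⊢
    constructor <;> linarith
  linarith

theorem abs_le_of_abs_sum_edges_le (hsub : ∀ e ∈ H, e ⊆ V) (hcard : ∀ e ∈ H, e.card = 4)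
    (hk : 0 < k) (hV : 400 ≤ V.card)
    (hc : ∀ v ∈ V, ∑ u ∈ V.erase v, |(pairDeg H v u : ℝ) - k| ≤ k * V.card / 100)
    {y : α → ℝ} {ρ : ℝ} (hy : ∀ v ∈ V, |∑ e ∈ H with v ∈ e, ∑ u ∈ e, y u| ≤ ρ) :
    ∀ v ∈ V, k * V.card / 3 * |y v| ≤ 2 * ρ := by
  set d := k * V.card / 3 with hd
  have hV' : (400 : ℝ) ≤ V.card := by exact_mod_cast hV
  have hdpos : 0 < d := by rw [hd]; positivity
  set E : α → α → ℝ := fun v u => (pairDeg H v u : ℝ) - k - if u = v then d else 0 with hE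
  set s := ∑ u ∈ V, y u with hs
  have hrow : ∀ v ∈ V, ∑ e ∈ H with v ∈ e, ∑ u ∈ e, y u =
      d * y v + k * s + ∑ u ∈ V, E v u * y u := by
    intro v hv
    rw [sum_edges_sum hsub]
    have : ∑ u ∈ V, E v u * y u = ∑ u ∈ V, (pairDeg H v u : ℝ) * y u - k * s - d * y v := by
      simp only [hE, sub_mul, Finset.sum_sub_distrib, hs, Finset.mul_sum, ite_mul, zero_mul]
      rw [Finset.sum_ite_eq' V v, if_pos hv]
    rw [this]; ring
  obtain ⟨v₀, hv₀, hmax⟩ := V.exists_max_image (fun v => |y v|)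
    (Finset.card_pos.1 (by omega))
  set M := |y v₀| with hM
  have hM0 : 0 ≤ M := abs_nonneg _
  have hEy : ∀ v ∈ V, |∑ u ∈ V, E v u * y u| ≤ d * M / 20 := by
    intro v hv
    have h1 := (sum_abs_pairDeg_sub_le hsub hcard hk hV hv (hc v hv)).2
    calc _ ≤ ∑ u ∈ V, |E v u * y u| := Finset.abs_sum_le_sum_abs _ _
      _ ≤ ∑ u ∈ V, |E v u| * M := Finset.sum_le_sum fun u hu => by
          rw [abs_mul]
          exact mul_le_mul_of_nonneg_left (hmax u hu) (abs_nonneg _)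
      _ = (∑ u ∈ V, |E v u|) * M := by rw [Finset.sum_mul]
      _ ≤ d / 20 * M := mul_le_mul_of_nonneg_right h1 hM0
      _ = _ := by ring
  have hdev : ∀ v ∈ V, |d * y v + k * s| ≤ ρ + d * M / 20 := by
    intro v hv
    have h1 := hy v hv
    rw [hrow v hv] at h1
    have h2 := hEy v hv
    rw [abs_le] at h1 h2 ⊢
    constructor <;> linarith
  have hsum : |4 * d * s| ≤ V.card * (ρ + d * M / 20) := by
    have h1 : ∑ v ∈ V, (d * y v + k * s) = 4 * d * s := by
      rw [Finset.sum_add_distrib, ← Finset.mul_sum, Finset.sum_const, nsmul_eq_mul, ← hs, hd]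
      ring
    rw [← h1, ← nsmul_eq_mul]
    exact (Finset.abs_sum_le_sum_abs _ _).trans (Finset.sum_le_card_nsmul _ _ _ hdev)
  have hks : |k * s| ≤ 3 / 4 * (ρ + d * M / 20) := by
    have hVpos : (0 : ℝ) < V.card := by linarith
    have h1 : (V.card : ℝ) * |k * s| = 3 / 4 * |4 * d * s| := by
      rw [abs_mul, abs_mul (4 * d), abs_of_pos hk, abs_of_pos (by positivity : 0 < 4 * d), hd]
      ring
    have h2 : (V.card : ℝ) * |k * s| ≤ V.card * (3 / 4 * (ρ + d * M / 20)) := by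
      rw [h1]; linarith
    exact le_of_mul_le_mul_left h2 hVpos
  have hdM : d * M ≤ 7 / 4 * (ρ + d * M / 20) := by
    have h1 := hdev v₀ hv₀
    have h2 : d * M = |d * y v₀| := by rw [abs_mul, abs_of_pos hdpos]
    have h3 := abs_sub (d * y v₀ + k * s) (k * s)
    rw [add_sub_cancel_right] at h3
    linarith
  intro v hv
  have h1 := mul_le_mul_of_nonneg_left (hmax v hv) hdpos.le
  have h2 : 0 ≤ d * M := by positivity
  have h3 : d * |y v| ≤ d * M := h1
  linarith

/-- A `4`-uniform hypergraph whose codegrees are nearly constant on average carries an exact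
fractional perfect matching that is nearly uniform. -/
theorem exists_fractional_matching [Fintype α] (hsub : ∀ e ∈ H, e ⊆ V)
    (hcard : ∀ e ∈ H, e.card = 4) (hk : 0 < k) (hV : 400 ≤ V.card)
    (hc : ∀ v ∈ V, ∑ u ∈ V.erase v, |(pairDeg H v u : ℝ) - k| ≤ k * V.card / 100)
    (hc' : ∀ u v, u ≠ v → (pairDeg H u v : ℝ) ≤ 2 * k) :
    ∃ w : Finset α → ℝ, NearRegular V H w 0 (12 / V.card) := by
  have hV' : (400 : ℝ) ≤ V.card := by exact_mod_cast hV
  set d := k * V.card / 3 with hd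
  have hdpos : 0 < d := by rw [hd]; positivity
  let T : (α → ℝ) →ₗ[ℝ] (α → ℝ) :=
    { toFun := fun y v => if v ∈ V then ∑ e ∈ H with v ∈ e, ∑ u ∈ e, y u else y v
      map_add' := fun y z => by
        ext v
        by_cases hv : v ∈ V <;> simp [hv, Finset.sum_add_distrib]
      map_smul' := fun c y => by
        ext v
        by_cases hv : v ∈ V <;> simp [hv, Finset.mul_sum] }
  have hT : ∀ y v, T y v = if v ∈ V then ∑ e ∈ H with v ∈ e, ∑ u ∈ e, y u else y v :=
    fun _ _ => rfl
  have hinj : Function.Injective T := by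
    rw [injective_iff_map_eq_zero]
    intro y hy
    have h1 := abs_le_of_abs_sum_edges_le hsub hcard hk hV hc (y := y) (ρ := 0) fun v hv => by
      have := congrFun hy v
      rw [hT, if_pos hv] at this
      simp [this]
    ext v
    by_cases hv : v ∈ V
    · have h2 := h1 v hv
      have h3 : |y v| ≤ 0 := by
        by_contra! hpos
        have := mul_pos hdpos hpos
        rw [← hd] at h2
        linarith
      simpa using abs_nonpos_iff.1 h3
    · have := congrFun hy v
      rwa [hT, if_neg hv] at this
  obtain ⟨y, hy⟩ := LinearMap.injective_iff_surjective.1 hinj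
    fun v => if v ∈ V then d - pairDeg H v v else 0
  have hrow : ∀ v ∈ V, ∑ e ∈ H with v ∈ e, ∑ u ∈ e, y u = d - pairDeg H v v := by
    intro v hv
    have := congrFun hy v
    rwa [hT, if_pos hv, if_pos hv] at this
  have hy1 : ∀ v ∈ V, |y v| ≤ 1 / 20 := by
    intro v hv
    have h1 := abs_le_of_abs_sum_edges_le hsub hcard hk hV hc (y := y) (ρ := d / 40)
      (fun v hv => by
        rw [hrow v hv, abs_sub_comm]
        exact (sum_abs_pairDeg_sub_le hsub hcard hk hV hv (hc v hv)).1) v hv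
    rw [← hd] at h1
    have h2 : d * |y v| ≤ d * (1 / 20) := by linarith
    exact le_of_mul_le_mul_left h2 hdpos
  have hsum : ∀ e ∈ H, |∑ u ∈ e, y u| ≤ 1 / 5 := by
    intro e he
    refine (Finset.abs_sum_le_sum_abs _ _).trans
      ((Finset.sum_le_card_nsmul _ _ _ fun u hu => hy1 u (hsub e he hu)).trans ?_)
    rw [hcard e he]; norm_num
  refine ⟨fun e => (1 + ∑ u ∈ e, y u) / d, hsub, hcard, fun e he => ?_, fun v hv => ?_,
    fun u v huv => ?_⟩
  · have := (abs_le.1 (hsum e he)).1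
    exact div_nonneg (by linarith) hdpos.le
  · rw [← Finset.sum_div, Finset.sum_add_distrib, hrow v hv]
    have h1 : ∑ e ∈ H with v ∈ e, (1 : ℝ) = pairDeg H v v := by
      simp [pairDeg]
    rw [h1, add_sub_cancel, div_self hdpos.ne', sub_self, abs_zero]
  · have h1 : ∀ e ∈ H.filter (fun e => u ∈ e ∧ v ∈ e), (1 + ∑ u ∈ e, y u) / d ≤ 2 / d := by
      intro e he
      have := (abs_le.1 (hsum e (Finset.mem_filter.1 he).1)).2
      exact div_le_div_of_nonneg_right (by linarith) hdpos.le
    refine (Finset.sum_le_card_nsmul _ _ _ h1).trans ?_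
    rw [nsmul_eq_mul]
    refine (mul_le_mul_of_nonneg_right (hc' u v huv) (by positivity)).trans (le_of_eq ?_)
    rw [hd]
    field_simp
    ring

end Fractional

section NearPerfect

theorem NearRegular.exists_nearly_perfect_matching {α : Type*} [DecidableEq α]
    {V : Finset α} {H : Finset (Finset α)} {w : Finset α → ℝ} {y κ : ℝ} (hy : 10 ^ 6 ≤ y)
    (h : NearRegular V H w 0 κ) (hV : (V.card : ℝ) ≤ y ^ 1000) (hκ : 0 < κ)
    (hκ' : κ * y ^ 999 ≤ 24) :
    ∃ M ⊆ H, (∀ e ∈ M, ∀ f ∈ M, e ≠ f → Disjoint e f) ∧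
      ((V \ M.biUnion id).card : ℝ) * y ^ 2 ≤ 2 * V.card := by
  have hy0 : 0 < y := by linarith
  have hlog : Real.log y ≤ y := (Real.log_le_sub_one_of_pos hy0).trans (by linarith)
  have hlog1 : 1 ≤ Real.log y := by
    rw [Real.le_log_iff_exp_le hy0]
    linarith [Real.exp_one_lt_d9]
  have hpowlog : ∀ k : ℕ, Real.exp (k * Real.log y) = y ^ k := fun k => by
    rw [mul_comm, Real.exp_mul, Real.exp_log hy0, Real.rpow_natCast]
  set θ : ℝ := (y ^ 100)⁻¹ with hθdef
  have hθy : θ * y ^ 100 = 1 := inv_mul_cancel₀ (by positivity)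
  have hθ : 0 < θ := by positivity
  have hy100 : (100 : ℝ) ≤ y ^ 100 := by
    calc (100 : ℝ) ≤ y ^ 1 := by linarith
      _ ≤ y ^ 100 := pow_le_pow_right₀ (by linarith) (by norm_num)
  have hθ' : θ ≤ 1 / 100 := by
    rw [hθdef, one_div]
    exact inv_anti₀ (by norm_num) hy100
  set K : ℝ := (y ^ 900)⁻¹ with hKdef
  have hK : K ≤ θ := inv_anti₀ (by positivity) (pow_le_pow_right₀ (by linarith) (by norm_num))
  set r : ℕ := ⌈8 * y ^ 100 * Real.log y⌉₊ with hr
  have hr1 : 8 * y ^ 100 * Real.log y ≤ r := Nat.le_ceil _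
  have hr2 : (r : ℝ) ≤ 9 * y ^ 100 * Real.log y := by
    have h1 := (Nat.ceil_lt_add_one (by positivity : 0 ≤ 8 * y ^ 100 * Real.log y)).le
    have h2 : 1 ≤ y ^ 100 * Real.log y := by nlinarith
    linarith
  have hθr1 : 8 * Real.log y ≤ θ * r := by
    have h1 := mul_le_mul_of_nonneg_left hr1 hθ.le
    calc 8 * Real.log y = θ * y ^ 100 * (8 * Real.log y) := by rw [hθy, one_mul]
      _ ≤ _ := by linarith
  have hθr2 : θ * r ≤ 9 * Real.log y := by
    have h1 := mul_le_mul_of_nonneg_left hr2 hθ.le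
    calc _ ≤ θ * y ^ 100 * (9 * Real.log y) := by linarith
      _ = _ := by rw [hθy, one_mul]
  have hpow : ∀ c : ℕ, (1 + c * θ) ^ r ≤ y ^ (9 * c) := by
    intro c
    calc (1 + c * θ) ^ r ≤ Real.exp (c * θ) ^ r := by
          refine pow_le_pow_left₀ (by positivity) ?_ r
          linarith [Real.add_one_le_exp (c * θ)]
      _ = Real.exp (r * (c * θ)) := by rw [← Real.exp_nat_mul]
      _ ≤ Real.exp ((9 * c : ℕ) * Real.log y) := by
          rw [Real.exp_le_exp]
          push_cast
          nlinarith [mul_le_mul_of_nonneg_left hθr2 (Nat.cast_nonneg (α := ℝ) c)]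
      _ = _ := hpowlog _
  have hbase : (V.card : ℝ) * (2 * Real.exp (-(θ ^ 3 / (108 * K)))) ≤ θ ^ 2 := by
    have h1 : θ ^ 3 / (108 * K) = y ^ 600 / 108 := by
      rw [hθdef, hKdef]
      field_simp
    have h2 : (1201 : ℕ) * Real.log y ≤ y ^ 600 / 108 := by
      have h3 : (10 ^ 6) * y ≤ y ^ 600 := by
        calc (10 ^ 6) * y ≤ y * y := by gcongr
          _ = y ^ 2 := by ring
          _ ≤ y ^ 600 := pow_le_pow_right₀ (by linarith) (by norm_num)
      push_cast
      linarith
    have h3 : Real.exp (-(θ ^ 3 / (108 * K))) ≤ (y ^ 1201)⁻¹ := by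
      rw [h1, Real.exp_neg, ← hpowlog 1201]
      exact inv_anti₀ (Real.exp_pos _) (Real.exp_le_exp.2 h2)
    calc (V.card : ℝ) * (2 * Real.exp (-(θ ^ 3 / (108 * K))))
        ≤ y ^ 1000 * (2 * (y ^ 1201)⁻¹) := by gcongr
      _ = 2 / y * θ ^ 2 := by
          rw [hθdef]
          field_simp
      _ ≤ 1 * θ ^ 2 := by
          refine mul_le_mul_of_nonneg_right ?_ (sq_nonneg θ)
          rw [div_le_one hy0]
          linarith
      _ = _ := one_mul _
  obtain ⟨M, hM, hdisj, hleft⟩ := NearRegular.exists_matching hθ hθ' hK V.card hbase r V H w 0 κ h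
    le_rfl hκ le_rfl (by
      have h1 := hpow 6
      push_cast at h1
      calc κ * (1 + 6 * θ) ^ r ≤ κ * y ^ (9 * 6) := by gcongr
        _ ≤ K := by
          rw [hKdef, le_inv_comm₀ (by positivity) (by positivity)]
          rw [le_inv_comm₀ (by positivity) (by positivity)]
          rw [← one_div, le_div_iff₀ (by positivity)]
          have h2 : κ * y ^ 999 = κ * y ^ (9 * 6) * y ^ 900 * y ^ 45 := by ring
          have h3 : (24 : ℝ) ≤ y ^ 45 := by
            calc (24 : ℝ) ≤ y ^ 1 := by linarith
              _ ≤ y ^ 45 := pow_le_pow_right₀ (by linarith) (by norm_num)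
          rw [h2] at hκ'
          by_contra! hcon
          have h4 : (24 : ℝ) < κ * y ^ (9 * 6) * y ^ 900 * y ^ 45 := by
            nlinarith
          linarith) (by
      have h1 := hpow 9
      push_cast at h1
      have h2 : 50 * θ ^ 2 * r ≤ 450 * θ * y := by
        have : θ * r ≤ 9 * y := by linarith
        nlinarith
      calc (0 + 50 * θ ^ 2 * r) * (1 + 9 * θ) ^ r ≤ (450 * θ * y) * y ^ (9 * 9) := by
            rw [zero_add]
            gcongr
        _ ≤ 1 / 2 := by
            rw [hθdef]
            have h3 : 450 * (y ^ 100)⁻¹ * y * y ^ (9 * 9) = 450 / y ^ 18 := by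
              field_simp
            rw [h3, div_le_iff₀ (by positivity)]
            have h4 : y ≤ y ^ 18 := by
              calc y = y ^ 1 := (pow_one y).symm
                _ ≤ y ^ 18 := pow_le_pow_right₀ (by linarith) (by norm_num)
            linarith)
  refine ⟨M, hM, hdisj, ?_⟩
  have h1 : (1 - θ / 4) ^ r ≤ (y ^ 2)⁻¹ := by
    calc (1 - θ / 4) ^ r ≤ Real.exp (-(θ / 4)) ^ r := by
          refine pow_le_pow_left₀ (by linarith) ?_ r
          linarith [Real.add_one_le_exp (-(θ / 4))]
      _ = Real.exp (r * (-(θ / 4))) := by rw [← Real.exp_nat_mul]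
      _ ≤ Real.exp (-((2 : ℕ) * Real.log y)) := by
          rw [Real.exp_le_exp]
          push_cast
          linarith
      _ = _ := by rw [Real.exp_neg, hpowlog]
  have h2 : 48 * θ ≤ (y ^ 2)⁻¹ := by
    rw [hθdef, ← div_eq_mul_inv, div_le_iff₀ (by positivity)]
    have h3 : (y ^ 2)⁻¹ * y ^ 100 = y ^ 98 := by field_simp
    rw [h3]
    calc (48 : ℝ) ≤ y ^ 1 := by linarith
      _ ≤ y ^ 98 := pow_le_pow_right₀ (by linarith) (by norm_num)
  calc ((V \ M.biUnion id).card : ℝ) * y ^ 2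
      ≤ ((48 * θ + (1 - θ / 4) ^ r) * V.card) * y ^ 2 := by gcongr
    _ ≤ (((y ^ 2)⁻¹ + (y ^ 2)⁻¹) * V.card) * y ^ 2 := by gcongr
    _ = _ := by field_simp; ring

variable {G : Type*} [AddCommGroup G] [DecidableEq G]

/-- The elements `a` of `X` with `t - a ∈ X` and `a ≠ t - a`. -/
def pairSet (X : Finset G) (t : G) : Finset G := X.filter fun a => t - a ∈ X ∧ a ≠ t - a

/-- The `4`-subsets of `V` with sum `α`. -/
def quads (V : Finset G) (α : G) : Finset (Finset G) :=
  (V.powersetCard 4).filter fun e => ∑ x ∈ e, x = α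

theorem two_mul_pairDeg_bounds {V : Finset G} {α u v : G} (hu : u ∈ V) (hv : v ∈ V) (huv : u ≠ v) :
    2 * pairDeg (quads V α) u v ≤ (pairSet V (α - u - v)).card ∧
      (pairSet V (α - u - v)).card ≤ 2 * pairDeg (quads V α) u v + 4 := by
  set h := α - u - v with hh
  set B : Finset G := {u, v, h - u, h - v} with hB
  set s := pairSet V h \ B with hs
  have hmem : ∀ r ∈ s, (r ∈ V ∧ h - r ∈ V ∧ r ≠ h - r) ∧ r ≠ u ∧ r ≠ v ∧ h - r ≠ u ∧ h - r ≠ v := by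
    intro r hr
    simp only [hs, hB, pairSet, Finset.mem_sdiff, Finset.mem_filter, Finset.mem_insert,
      Finset.mem_singleton, not_or] at hr
    refine ⟨hr.1, hr.2.1, hr.2.2.1, fun h1 => hr.2.2.2.1 ?_, fun h1 => hr.2.2.2.2 ?_⟩
    · rw [← h1]; abel
    · rw [← h1]; abel
  have hcard : s.card = 2 * pairDeg (quads V α) u v := by
    rw [Finset.card_eq_sum_card_fiberwise (f := fun r => ({u, v, r, h - r} : Finset G))
      (t := (quads V α).filter fun e => u ∈ e ∧ v ∈ e), pairDeg]
    · rw [Finset.sum_const_nat (m := 2), mul_comm]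
      intro e he
      simp only [quads, Finset.mem_filter, Finset.mem_powersetCard] at he
      obtain ⟨⟨⟨heV, he4⟩, hesum⟩, hue, hve⟩ := he
      have hfib : (s.filter fun r => ({u, v, r, h - r} : Finset G) = e) = (e.erase u).erase v := by
        ext r
        simp only [Finset.mem_filter, Finset.mem_erase]
        constructor
        · rintro ⟨hr, rfl⟩
          obtain ⟨-, h1, h2, -, -⟩ := hmem r hr
          exact ⟨h2, h1, by simp⟩
        · rintro ⟨hrv, hru, hre⟩
          have hc1 : ((e.erase u).erase v).card = 2 := by
            rw [Finset.card_erase_of_mem (Finset.mem_erase.2 ⟨huv.symm, hve⟩),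
              Finset.card_erase_of_mem hue, he4]
          have hr1 : r ∈ (e.erase u).erase v :=
            Finset.mem_erase.2 ⟨hrv, Finset.mem_erase.2 ⟨hru, hre⟩⟩
          have hc2 : (((e.erase u).erase v).erase r).card = 1 := by
            rw [Finset.card_erase_of_mem hr1, hc1]
          obtain ⟨r', hr'⟩ := Finset.card_eq_one.1 hc2
          have hr'e : r' ∈ ((e.erase u).erase v).erase r := by rw [hr']; simp
          obtain ⟨hr'r, hr'2⟩ := Finset.mem_erase.1 hr'e
          obtain ⟨hr'v, hr'3⟩ := Finset.mem_erase.1 hr'2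
          obtain ⟨hr'u, hr'4⟩ := Finset.mem_erase.1 hr'3
          have he' : e = {u, v, r, r'} := by
            rw [← Finset.insert_erase hue, ← Finset.insert_erase
              (Finset.mem_erase.2 ⟨huv.symm, hve⟩ : v ∈ e.erase u), ← Finset.insert_erase hr1, hr']
          have hsum : u + (v + (r + r')) = α := by
            rw [← hesum, he', Finset.sum_insert, Finset.sum_insert, Finset.sum_pair hr'r.symm]
            · simp [Ne.symm hrv, Ne.symm hr'v]
            · simp [huv, Ne.symm hru, Ne.symm hr'u]
          have hhr : h - r = r' := by rw [hh, ← hsum]; abel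
          refine ⟨?_, by rw [hhr, ← he']⟩
          simp only [hs, hB, pairSet, Finset.mem_sdiff, Finset.mem_filter, Finset.mem_insert,
            Finset.mem_singleton, not_or]
          rw [hhr]
          refine ⟨⟨heV hre, heV hr'4, hr'r.symm⟩, hru, hrv, fun h1 => hr'u ?_, fun h1 => hr'v ?_⟩
          · rw [← hhr, h1]; abel
          · rw [← hhr, h1]; abel
      rw [hfib, Finset.card_erase_of_mem (Finset.mem_erase.2 ⟨huv.symm, hve⟩),
              Finset.card_erase_of_mem hue, he4]
    · intro r hr
      obtain ⟨⟨h1, h2, h3⟩, h4, h5, h6, h7⟩ := hmem r hr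
      have hn1 : v ∉ ({r, h - r} : Finset G) := by simp [Ne.symm h5, Ne.symm h7]
      have hn2 : u ∉ ({v, r, h - r} : Finset G) := by simp [huv, Ne.symm h4, Ne.symm h6]
      simp only [quads, Finset.coe_filter, Set.mem_ofPred_eq, Finset.mem_filter,
        Finset.mem_powersetCard]
      refine ⟨⟨⟨?_, ?_⟩, ?_⟩, by simp, by simp⟩
      · simp [Finset.insert_subset_iff, hu, hv, h1, h2]
      · rw [Finset.card_insert_of_notMem hn2, Finset.card_insert_of_notMem hn1,
          Finset.card_pair h3]
      · rw [Finset.sum_insert hn2, Finset.sum_insert hn1, Finset.sum_pair h3, hh]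
        abel
  rw [← hcard]
  refine ⟨Finset.card_le_card Finset.sdiff_subset, ?_⟩
  have h1 : (pairSet V h).card - B.card ≤ s.card := Finset.le_card_sdiff B (pairSet V h)
  have h2 : B.card ≤ 4 := Finset.card_le_four
  omega

/-- A set all of whose nondegenerate sums are represented about equally often by pairs has a
nearly perfect matching by `4`-sets of a prescribed sum. -/
theorem exists_nearly_perfect_quads [Fintype G] {V D : Finset G} {α : G} {y k : ℝ}
    (hy : 10 ^ 6 ≤ y) (hV : (V.card : ℝ) ≤ y ^ 1000) (hV' : y ^ 999 ≤ 2 * V.card) (hk : 4000 ≤ k)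
    (hup : ∀ h, ((pairSet V h).card : ℝ) ≤ 2 * (k * (1 + 1 / 1000)))
    (hlow : ∀ h, h ∉ D → 2 * (k * (1 - 1 / 1000)) ≤ (pairSet V h).card)
    (hD : (D.card : ℝ) * 10000 ≤ V.card) :
    ∃ M ⊆ quads V α, (∀ e ∈ M, ∀ f ∈ M, e ≠ f → Disjoint e f) ∧
      ((V \ M.biUnion id).card : ℝ) * y ^ 2 ≤ 2 * V.card := by
  have hsub : ∀ e ∈ quads V α, e ⊆ V := fun e he =>
    (Finset.mem_powersetCard.1 (Finset.mem_filter.1 he).1).1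
  have hcard : ∀ e ∈ quads V α, e.card = 4 := fun e he =>
    (Finset.mem_powersetCard.1 (Finset.mem_filter.1 he).1).2
  have hy0 : 0 < y := by linarith
  have hV400 : (400 : ℝ) ≤ V.card := by
    have : y ≤ y ^ 999 := by
      calc y = y ^ 1 := (pow_one y).symm
        _ ≤ y ^ 999 := pow_le_pow_right₀ (by linarith) (by norm_num)
    linarith
  have hupd : ∀ u v, u ≠ v → (pairDeg (quads V α) u v : ℝ) ≤ k * (1 + 1 / 1000) := by
    intro u v huv
    by_cases hu : u ∈ V
    · by_cases hv : v ∈ V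
      · have h1 : (2 * pairDeg (quads V α) u v : ℝ) ≤ (pairSet V (α - u - v)).card := by
          exact_mod_cast (two_mul_pairDeg_bounds hu hv huv).1
        linarith [hup (α - u - v)]
      · have : pairDeg (quads V α) u v = 0 := by
          rw [pairDeg, Finset.card_eq_zero, Finset.filter_eq_empty_iff]
          exact fun e he h => hv (hsub e he h.2)
        rw [this, Nat.cast_zero]
        positivity
    · have : pairDeg (quads V α) u v = 0 := by
        rw [pairDeg, Finset.card_eq_zero, Finset.filter_eq_empty_iff]
        exact fun e he h => hu (hsub e he h.1)
      rw [this, Nat.cast_zero]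
      positivity
  obtain ⟨w, hw⟩ := exists_fractional_matching (k := k) hsub hcard (by linarith)
    (by exact_mod_cast hV400) (fun v hv => by
      have h1 : ∀ u ∈ V.erase v, |(pairDeg (quads V α) v u : ℝ) - k| ≤
          (k / 1000 + 2) + if α - v - u ∈ D then k else 0 := by
        intro u hu
        obtain ⟨huv, hu⟩ := Finset.mem_erase.1 hu
        have h2 := hupd v u huv.symm
        have h3 : ((pairSet V (α - v - u)).card : ℝ) ≤ 2 * pairDeg (quads V α) v u + 4 := by
          exact_mod_cast (two_mul_pairDeg_bounds hv hu huv.symm).2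
        rw [abs_le]
        split_ifs with hD'
        · have : (0 : ℝ) ≤ pairDeg (quads V α) v u := Nat.cast_nonneg _
          constructor <;> linarith
        · have := hlow _ hD'
          constructor <;> linarith
      have h2 : ((V.erase v).filter fun u => α - v - u ∈ D).card ≤ D.card := by
        refine Finset.card_le_card_of_injOn (fun u => α - v - u)
          (fun u hu => (Finset.mem_filter.1 hu).2) fun a _ b _ hab => ?_
        exact sub_right_injective hab
      have h2' : (((V.erase v).filter fun u => α - v - u ∈ D).card : ℝ) ≤ D.card := by
        exact_mod_cast h2
      have h3 : ((V.erase v).card : ℝ) ≤ V.card := by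
        exact_mod_cast Finset.card_le_card (Finset.erase_subset v V)
      refine (Finset.sum_le_sum h1).trans ?_
      rw [Finset.sum_add_distrib, Finset.sum_const, nsmul_eq_mul, ← Finset.sum_filter,
        Finset.sum_const, nsmul_eq_mul]
      have h4 := mul_le_mul_of_nonneg_right h2' (by linarith : 0 ≤ k)
      have h5 := mul_le_mul_of_nonneg_right h3 (by linarith : 0 ≤ k / 1000 + 2)
      have h6 := mul_le_mul_of_nonneg_right hD (by linarith : 0 ≤ k)
      have h7 := mul_le_mul_of_nonneg_left hk (Nat.cast_nonneg (α := ℝ) V.card)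
      linarith) (fun u v huv => by linarith [hupd u v huv])
  refine hw.exists_nearly_perfect_matching hy hV (by positivity) ?_
  rw [div_mul_eq_mul_div, div_le_iff₀ (by linarith)]
  linarith

end NearPerfect

section Absorb

variable {G : Type*} [AddCommGroup G] {ι : Type*} [DecidableEq ι]

/-- `QuadSum α m` says that the multiset `m` splits into quadruples of sum `α`. -/
inductive QuadSum (α : G) : Multiset G → Prop
  | zero : QuadSum α 0
  | add {a b c d : G} {m : Multiset G} (h : a + b + c + d = α) (hm : QuadSum α m) :
      QuadSum α ({a} + {b} + {c} + {d} + m)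

/-- A reserve of quadruples `p i, p' i, e i, e' i` of sum `α`, indexed by `i ∈ I`, that can be
recombined. The sum `p i + p' i` is `t₀` shifted by a label `x ∈ S`, or is `t₀` itself when
`cls i = none`. After any `B` indices are used up, every sum outside `Bad` can still be completed
in a way that leaves behind a good sum. -/
structure Reserve (α t₀ : G) (S Bad : Finset G) (B : ℕ) (I : Finset ι) (cls : ι → Option G)
    (p p' e e' : ι → G) : Prop where
  sum_p : ∀ i ∈ I, p i + p' i = t₀ + (cls i).getD 0
  sum_e : ∀ i ∈ I, e i + e' i = α - t₀ - (cls i).getD 0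
  fresh : ∀ F : Finset ι, F.card ≤ B → ∀ a b : G, ∃ i ∈ I, i ∉ F ∧
    α - a - p i ∉ Bad ∧ α - b - e i ∉ Bad
  rich_p : ∀ F : Finset ι, F.card ≤ B → ∀ x ∈ S, ∀ h ∉ Bad, ∀ b : G, ∃ i ∈ I, ∃ j ∈ I,
    i ∉ F ∧ j ∉ F ∧ cls i = some x ∧ cls j = none ∧ p i + e j = h ∧ α - p' i - b ∉ Bad
  rich_e : ∀ F : Finset ι, F.card ≤ B → ∀ x ∈ S, ∀ h ∉ Bad, ∀ b : G, ∃ i ∈ I, ∃ j ∈ I,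
    i ∉ F ∧ j ∉ F ∧ cls i = some x ∧ cls j = none ∧ e i + p j = h ∧ α - e' i - b ∉ Bad

/-- A group of four elements two of which can be completed using a reserve. -/
def IsOpenGroup (α : G) (Bad : Finset G) (g : Multiset G) : Prop :=
  ∃ u v w z : G, g = {u} + {v} + {w} + {z} ∧ α - u - v ∉ Bad

variable {α t₀ : G} {S Bad : Finset G} {B : ℕ} {I : Finset ι} {cls : ι → Option G}
  {p p' e e' : ι → G}

/-- The multiset of points of the reserve quadruples with index in `T`. -/
def reservePoints (p p' e e' : ι → G) (T : Finset ι) : Multiset G :=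
  ∑ i ∈ T, ({p i} + {p' i} + {e i} + {e' i})

theorem reservePoints_union {G : Type*} {p p' e e' : ι → G} {T₁ T₂ : Finset ι}
    (h : Disjoint T₁ T₂) :
    reservePoints p p' e e' (T₁ ∪ T₂) = reservePoints p p' e e' T₁ + reservePoints p p' e e' T₂ :=
  Finset.sum_union h

theorem Reserve.quadSum_reservePoints (hR : Reserve α t₀ S Bad B I cls p p' e e')
    {T : Finset ι} (hT : T ⊆ I) : QuadSum α (reservePoints p p' e e' T) := by
  induction T using Finset.induction_on with
  | empty => exact QuadSum.zero
  | insert i T hi ih =>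
    rw [reservePoints, Finset.sum_insert hi]
    refine QuadSum.add ?_ (ih fun j hj => hT (Finset.mem_insert_of_mem hj))
    have hiI := hT (Finset.mem_insert_self i T)
    rw [add_assoc, hR.sum_p i hiI, hR.sum_e i hiI]
    abel

theorem Reserve.exists_transfer (hR : Reserve α t₀ S Bad B I cls p p' e e') {g₁ g₂ : Multiset G}
    (h₁ : IsOpenGroup α Bad g₁) (h₂ : IsOpenGroup α Bad g₂) {x : G} (hx : x ∈ S) {F : Finset ι}
    (hF : F.card + 4 ≤ B) :
    ∃ T ⊆ I, Disjoint T F ∧ T.card ≤ 4 ∧ ∃ g₁' g₂', IsOpenGroup α Bad g₁' ∧ IsOpenGroup α Bad g₂' ∧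
      g₁'.sum = g₁.sum + x ∧ g₂'.sum = g₂.sum - x ∧
      ∀ m, QuadSum α (g₁' + g₂' + m) →
        QuadSum α (g₁ + g₂ + reservePoints p p' e e' T + m) := by
  obtain ⟨u, v, w, z, rfl, huv⟩ := h₁
  obtain ⟨u', v', w', z', rfl, huv'⟩ := h₂
  obtain ⟨i, hi, j, hj, hiF, hjF, hci, hcj, hsum, hgood⟩ :=
    hR.rich_p F (by omega) x hx _ huv w
  obtain ⟨i₂, hi₂, j₂, hj₂, hiF₂, hjF₂, hci₂, hcj₂, hsum₂, hgood₂⟩ :=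
    hR.rich_e (F ∪ {i, j}) (by
      have := Finset.card_union_le F {i, j}
      have := Finset.card_le_two (a := i) (b := j)
      omega) x hx _ huv' w'
  simp only [Finset.mem_union, Finset.mem_insert, Finset.mem_singleton, not_or] at hiF₂ hjF₂
  have hij : i ≠ j := fun h => by rw [h, hcj] at hci; cases hci
  have hij₂ : i₂ ≠ j₂ := fun h => by rw [h, hcj₂] at hci₂; cases hci₂
  have p1 := hR.sum_p i hi
  have p2 := hR.sum_p j hj
  have p3 := hR.sum_p i₂ hi₂
  have p4 := hR.sum_p j₂ hj₂
  have e1 := hR.sum_e i hi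
  have e2 := hR.sum_e j hj
  have e3 := hR.sum_e i₂ hi₂
  have e4 := hR.sum_e j₂ hj₂
  rw [hci, Option.getD_some] at p1 e1
  rw [hcj, Option.getD_none] at p2 e2
  rw [hci₂, Option.getD_some] at p3 e3
  rw [hcj₂, Option.getD_none] at p4 e4
  refine ⟨{i, j, i₂, j₂}, ?_, ?_, Finset.card_le_four, {p' i} + {w} + {e' j} + {z},
    {e' i₂} + {w'} + {p' j₂} + {z'}, ⟨_, _, _, _, rfl, hgood⟩, ⟨_, _, _, _, rfl, hgood₂⟩,
    ?_, ?_, ?_⟩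
  · simp [Finset.insert_subset_iff, hi, hj, hi₂, hj₂]
  · simp [Finset.disjoint_left, hiF, hjF, hiF₂.1, hjF₂.1]
  · simp only [Multiset.sum_add, Multiset.sum_singleton]
    rw [eq_sub_of_add_eq' p1, eq_sub_of_add_eq' e2, eq_sub_of_add_eq' hsum]
    abel
  · simp only [Multiset.sum_add, Multiset.sum_singleton]
    rw [eq_sub_of_add_eq' p4, eq_sub_of_add_eq' e3, eq_sub_of_add_eq' hsum₂]
    abel
  · intro m hm
    have key := QuadSum.add (a := u) (b := v) (c := p i) (d := e j)
      (by rw [add_assoc, hsum]; abel)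
      (QuadSum.add (a := u') (b := v') (c := e i₂) (d := p j₂)
        (by rw [add_assoc, hsum₂]; abel)
        (QuadSum.add (a := e i) (b := e' i) (c := p i₂) (d := p' i₂)
          (by rw [add_assoc, e1, p3]; abel)
          (QuadSum.add (a := p j) (b := p' j) (c := e j₂) (d := e' j₂)
            (by rw [add_assoc, p2, e4]; abel) hm)))
    have hpts : reservePoints p p' e e' {i, j, i₂, j₂} =
        ({p i} + {p' i} + {e i} + {e' i}) + (({p j} + {p' j} + {e j} + {e' j}) +
        (({p i₂} + {p' i₂} + {e i₂} + {e' i₂}) + ({p j₂} + {p' j₂} + {e j₂} + {e' j₂}))) := by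
      rw [reservePoints, Finset.sum_insert, Finset.sum_insert, Finset.sum_pair hij₂]
      · simp [Ne.symm hiF₂.2.2, Ne.symm hjF₂.2.2]
      · simp [hij, Ne.symm hiF₂.2.1, Ne.symm hjF₂.2.1]
    rw [hpts]
    convert key using 1
    abel

theorem Reserve.exists_close (hR : Reserve α t₀ S Bad B I cls p p' e e') (l : List G) :
    ∀ {g₁ g₂ : Multiset G} {F : Finset ι}, IsOpenGroup α Bad g₁ → IsOpenGroup α Bad g₂ →
    (∀ x ∈ l, x ∈ S) → g₁.sum + l.sum = α → F.card + 4 * l.length ≤ B →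
    ∃ T ⊆ I, Disjoint T F ∧ T.card ≤ 4 * l.length ∧ ∃ g₂', IsOpenGroup α Bad g₂' ∧
      g₂'.sum = g₂.sum - l.sum ∧ ∀ m, QuadSum α (g₂' + m) →
          QuadSum α (g₁ + g₂ + reservePoints p p' e e' T + m) := by
  induction l with
  | nil =>
    intro g₁ g₂ F h₁ h₂ _ hsum _
    refine ⟨∅, Finset.empty_subset _, Finset.disjoint_empty_left _, by simp, g₂, h₂, by simp,
        fun m hm => ?_⟩
    obtain ⟨u, v, w, z, rfl, -⟩ := h₁
    have := QuadSum.add (a := u) (b := v) (c := w) (d := z) (by simpa [add_assoc] using hsum) hm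
    simpa [reservePoints, add_assoc] using this
  | cons x l ih =>
    intro g₁ g₂ F h₁ h₂ hl hsum hF
    rw [List.length_cons] at hF
    obtain ⟨T, hT, hTF, hTc, g₁', g₂', h₁', h₂', hs₁, hs₂, hstep⟩ :=
      hR.exists_transfer h₁ h₂ (hl x (by simp)) (F := F) (by omega)
    obtain ⟨T', hT', hTF', hTc', g₃, h₃, hs₃, hstep'⟩ :=
        ih (g₁ := g₁') (g₂ := g₂') (F := F ∪ T) h₁' h₂'
      (fun y hy => hl y (by simp [hy])) (by
        rw [hs₁, ← hsum, List.sum_cons]; abel) (by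
        have := Finset.card_union_le F T
        omega)
    rw [Finset.disjoint_union_right] at hTF'
    refine ⟨T ∪ T', Finset.union_subset hT hT', Finset.disjoint_union_left.2 ⟨hTF, hTF'.1⟩, ?_,
      g₃, h₃, by rw [hs₃, hs₂, List.sum_cons]; abel, fun m hm => ?_⟩
    · have := Finset.card_union_le T T'
      rw [List.length_cons]
      omega
    · have h1 := hstep (reservePoints p p' e e' T' + m) (by
        rw [← add_assoc]
        exact hstep' m hm)
      rw [reservePoints_union hTF'.2.symm]
      convert h1 using 1
      abel

/-- Four elements can be turned into two open groups using up one index. -/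
theorem Reserve.exists_open {ι : Type*} {I : Finset ι} {cls : ι → Option G} {p p' e e' : ι → G}
    (hR : Reserve α t₀ S Bad B I cls p p' e e') (a b c d : G)
    {F : Finset ι} (hF : F.card ≤ B) :
    ∃ i ∈ I, i ∉ F ∧ ∃ g₁ g₂, IsOpenGroup α Bad g₁ ∧ IsOpenGroup α Bad g₂ ∧
      g₁ + g₂ = {a} + {b} + {c} + {d} + ({p i} + {p' i} + {e i} + {e' i}) := by
  obtain ⟨i, hi, hiF, h1, h2⟩ := hR.fresh F hF a b
  exact ⟨i, hi, hiF, {a} + {p i} + {c} + {p' i}, {b} + {e i} + {d} + {e' i},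
    ⟨_, _, _, _, rfl, h1⟩, ⟨_, _, _, _, rfl, h2⟩, by abel⟩

/-- A multiset splits into quadruples. -/
inductive FourList : ℕ → Multiset G → Prop
  | zero : FourList 0 0
  | add {n : ℕ} {m : Multiset G} (a b c d : G) (hm : FourList n m) :
      FourList (n + 1) ({a} + {b} + {c} + {d} + m)

theorem fourList_of_length {G : Type*} {n : ℕ} :
    ∀ {l : List G}, l.length = 4 * n → FourList n (l : Multiset G) := by
  induction n with
  | zero =>
    intro l hl
    have h0 : l = [] := List.length_eq_zero_iff.1 (by simpa using hl)
    subst h0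
    exact FourList.zero
  | succ n ih =>
    intro l hl
    match l, hl with
    | a :: b :: c :: d :: l, hl =>
      have := FourList.add a b c d (ih (l := l) (by simp only [List.length_cons] at hl; omega))
      simpa [← Multiset.cons_coe, ← Multiset.singleton_add, add_assoc] using this
    | [], hl | [_], hl | [_, _], hl | [_, _, _], hl =>
      simp only [List.length_cons, List.length_nil] at hl
      omega

theorem fourList_of_card {G : Type*} {n : ℕ} {m : Multiset G} (hm : m.card = 4 * n) :
    FourList n m := by
  induction m using Quotient.inductionOn with
  | h l => exact fourList_of_length hm

theorem Reserve.absorb_of_open (hR : Reserve α t₀ S Bad B I cls p p' e e') {W : ℕ}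
    (hS : ∀ y : G, ∃ l : List G, (∀ x ∈ l, x ∈ S) ∧ l.sum = y ∧ l.length ≤ W) {n : ℕ}
    {m : Multiset G} (hm : FourList n m) :
    ∀ {g : Multiset G} {F : Finset ι}, IsOpenGroup α Bad g → F ⊆ I →
      g.sum + m.sum = (n + 1) • α → F.card + n * (8 * W + 1) ≤ B →
      QuadSum α (g + m + reservePoints p p' e e' (I \ F)) := by
  induction hm with
  | zero =>
    intro g F hg _ hsum _
    obtain ⟨u, v, w, z, rfl, -⟩ := hg
    have := QuadSum.add (a := u) (b := v) (c := w) (d := z) (by simpa [add_assoc] using hsum)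
      (hR.quadSum_reservePoints (T := I \ F) Finset.sdiff_subset)
    simpa [add_assoc] using this
  | @add n m a b c d hm ih =>
    intro g F hg hFI hsum hB
    have hB' : F.card + n * (8 * W + 1) + 8 * W + 1 ≤ B := by
      rw [add_mul, one_mul] at hB
      omega
    obtain ⟨i, hi, hiF, g₁, g₂, hg₁, hg₂, hgg⟩ := hR.exists_open a b c d (F := F) (by omega)
    obtain ⟨l, hlS, hls, hlW⟩ := hS (α - g.sum)
    have hc1 : (insert i F).card = F.card + 1 := Finset.card_insert_of_notMem hiF
    obtain ⟨T, hT, hTF, hTc, g₃, hg₃, hs₃, hstep⟩ := hR.exists_close l (F := insert i F) hg hg₁ hlS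
      (by rw [hls]; abel) (by omega)
    obtain ⟨l', hlS', hls', hlW'⟩ := hS (α - g₃.sum)
    have hc2 : (T ∪ insert i F).card ≤ T.card + (insert i F).card := Finset.card_union_le _ _
    obtain ⟨T', hT', hTF', hTc', g₄, hg₄, hs₄, hstep'⟩ := hR.exists_close l' (F := T ∪ insert i F)
      hg₃ hg₂ hlS' (by rw [hls']; abel) (by omega)
    have hc3 : (T' ∪ (T ∪ insert i F)).card ≤ T'.card + (T ∪ insert i F).card :=
      Finset.card_union_le _ _
    have hF' : T' ∪ (T ∪ insert i F) ⊆ I :=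
      Finset.union_subset hT' (Finset.union_subset hT (Finset.insert_subset hi hFI))
    have hsplit : I \ F = {i} ∪ (T ∪ (T' ∪ (I \ (T' ∪ (T ∪ insert i F))))) := by
      ext j
      simp only [Finset.mem_sdiff, Finset.mem_union, Finset.mem_singleton]
      constructor
      · rintro ⟨hjI, hjF⟩
        by_cases h1 : j = i
        · exact Or.inl h1
        by_cases h2 : j ∈ T
        · exact Or.inr (Or.inl h2)
        by_cases h3 : j ∈ T'
        · exact Or.inr (Or.inr (Or.inl h3))
        refine Or.inr (Or.inr (Or.inr ⟨hjI, ?_⟩))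
        rintro (h | h | h)
        · exact h3 h
        · exact h2 h
        · exact (Finset.mem_insert.1 h).elim h1 hjF
      · rintro (rfl | h | h | h)
        · exact ⟨hi, hiF⟩
        · exact ⟨hT h, fun hF => Finset.disjoint_left.1 hTF h (Finset.mem_insert_of_mem hF)⟩
        · exact ⟨hT' h, fun hF => Finset.disjoint_left.1 hTF' h
            (Finset.mem_union_right _ (Finset.mem_insert_of_mem hF))⟩
        · exact ⟨h.1, fun hF => h.2 (Or.inr (Or.inr (Finset.mem_insert_of_mem hF)))⟩
    rw [Finset.disjoint_union_right] at hTF'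
    have hd1 : Disjoint T' (I \ (T' ∪ (T ∪ insert i F))) :=
      Finset.disjoint_left.2 fun j hj h => (Finset.mem_sdiff.1 h).2 (by simp [hj])
    have hd2 : Disjoint T (T' ∪ (I \ (T' ∪ (T ∪ insert i F)))) := by
      refine Finset.disjoint_union_right.2 ⟨hTF'.1.symm, ?_⟩
      exact Finset.disjoint_left.2 fun j hj h => (Finset.mem_sdiff.1 h).2 (by simp [hj])
    have hd3 : Disjoint {i} (T ∪ (T' ∪ (I \ (T' ∪ (T ∪ insert i F))))) := by
      rw [Finset.disjoint_singleton_left]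
      intro h
      simp only [Finset.mem_union, Finset.mem_sdiff] at h
      rcases h with h | h | h
      · exact Finset.disjoint_left.1 hTF h (by simp)
      · exact Finset.disjoint_left.1 hTF'.2 h (by simp)
      · exact h.2 (by simp)
    rw [hsplit, reservePoints_union hd3, reservePoints_union hd2, reservePoints_union hd1]
    set R := reservePoints p p' e e' (I \ (T' ∪ (T ∪ insert i F))) with hRdef
    have hpi : reservePoints p p' e e' {i} = {p i} + {p' i} + {e i} + {e' i} := by
      simp [reservePoints]
    have himp : QuadSum α (g₄ + m + R) → QuadSum α (g + ({a} + {b} + {c} + {d} + m) +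
        (reservePoints p p' e e' {i} + (reservePoints p p' e e' T +
          (reservePoints p p' e e' T' + R)))) := by
      intro h
      rw [add_assoc] at h
      have h1 := hstep (g₂ + reservePoints p p' e e' T' + (m + R)) (by
        convert hstep' (m + R) h using 1
        abel)
      have h2 : g + ({a} + {b} + {c} + {d} + m) + (reservePoints p p' e e' {i} +
          (reservePoints p p' e e' T + (reservePoints p p' e e' T' + R))) =
          g + (g₁ + g₂) + reservePoints p p' e e' T + reservePoints p p' e e' T' + m + R := by
        rw [hgg, hpi]; abel
      rw [h2]
      convert h1 using 1
      abel
    refine himp (ih hg₄ hF' ?_ (by omega))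
    have h1 : g₁.sum + g₂.sum = a + b + c + d + α := by
      rw [← Multiset.sum_add, hgg]
      simp only [Multiset.sum_add, Multiset.sum_singleton]
      rw [add_assoc (p i + p' i), hR.sum_p i hi, hR.sum_e i hi]
      abel
    simp only [Multiset.sum_add, Multiset.sum_singleton] at hsum
    rw [hs₄, hls', hs₃, hls]
    have h2 : g₂.sum - (α - (g₁.sum - (α - g.sum))) + m.sum =
        (g₁.sum + g₂.sum) + g.sum + m.sum - α - α := by abel
    have h3 : g₁.sum + g₂.sum + g.sum + m.sum - α - α =
        (g.sum + (a + b + c + d + m.sum)) - α := by rw [h1]; abel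
    rw [h2, h3, hsum]
    rw [add_smul _ 1, one_smul, add_sub_cancel_right]

/-- A reserve absorbs any small leftover of the right size and sum. -/
theorem Reserve.absorb (hR : Reserve α t₀ S Bad B I cls p p' e e') {W : ℕ}
    (hS : ∀ y : G, ∃ l : List G, (∀ x ∈ l, x ∈ S) ∧ l.sum = y ∧ l.length ≤ W) {n : ℕ}
    {m : Multiset G} (hcard : m.card = 4 * n) (hsum : m.sum = n • α)
    (hB : (n + 1) * (8 * W + 1) ≤ B) :
    QuadSum α (m + reservePoints p p' e e' I) := by
  cases fourList_of_card hcard with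
  | zero => simpa using hR.quadSum_reservePoints subset_rfl
  | @add n m a b c d hm =>
    have hB' : n * (8 * W + 1) + (8 * W + 1) ≤ B := by
      rw [add_mul, add_mul, one_mul] at hB
      omega
    obtain ⟨i, hi, -, g₁, g₂, hg₁, hg₂, hgg⟩ := hR.exists_open a b c d (F := ∅) (by simp)
    obtain ⟨l, hlS, hls, hlW⟩ := hS (α - g₁.sum)
    obtain ⟨T, hT, hTF, hTc, g₃, hg₃, hs₃, hstep⟩ := hR.exists_close l (F := {i}) hg₁ hg₂ hlS
      (by rw [hls]; abel) (by rw [Finset.card_singleton]; omega)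
    have hc : (T ∪ {i}).card ≤ T.card + 1 := Finset.card_union_le _ _
    have hF : T ∪ {i} ⊆ I := Finset.union_subset hT (Finset.singleton_subset_iff.2 hi)
    have hsplit : I = {i} ∪ (T ∪ (I \ (T ∪ {i}))) := by
      ext j
      simp only [Finset.mem_sdiff, Finset.mem_union, Finset.mem_singleton]
      constructor
      · tauto
      · rintro (rfl | h | h)
        · exact hi
        · exact hT h
        · exact h.1
    have hd1 : Disjoint T (I \ (T ∪ {i})) :=
      Finset.disjoint_left.2 fun j hj h => (Finset.mem_sdiff.1 h).2 (by simp [hj])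
    have hd2 : Disjoint {i} (T ∪ (I \ (T ∪ {i}))) := by
      rw [Finset.disjoint_singleton_left]
      intro h
      simp only [Finset.mem_union, Finset.mem_sdiff] at h
      rcases h with h | h
      · exact Finset.disjoint_left.1 hTF h (by simp)
      · exact h.2 (by simp)
    have h1 : g₁.sum + g₂.sum = a + b + c + d + α := by
      rw [← Multiset.sum_add, hgg]
      simp only [Multiset.sum_add, Multiset.sum_singleton]
      rw [add_assoc (p i + p' i), hR.sum_p i hi, hR.sum_e i hi]
      abel
    simp only [Multiset.sum_add, Multiset.sum_singleton] at hsum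
    have h := hR.absorb_of_open hS hm hg₃ hF (by
      rw [hs₃, hls, ← hsum]
      have h2 : g₂.sum - (α - g₁.sum) + m.sum = g₁.sum + g₂.sum + m.sum - α := by abel
      rw [h2, h1]
      abel) (by omega)
    have h2 := hstep (m + reservePoints p p' e e' (I \ (T ∪ {i}))) (by rwa [← add_assoc])
    have hpi : reservePoints p p' e e' {i} = {p i} + {p' i} + {e i} + {e' i} := by
      simp [reservePoints]
    rw [hsplit, reservePoints_union hd2, reservePoints_union hd1, hpi]
    rw [hgg] at h2
    convert h2 using 1
    abel

end Absorb

section Letters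

theorem QuadSum.exists_partition {G : Type*} [AddCommGroup G] [DecidableEq G] {α : G}
    {m : Multiset G} (h : QuadSum α m) : ∀ {X : Finset G}, X.val = m →
    ∃ P : Finset (Finset G), (∀ A ∈ P, ∀ B ∈ P, A ≠ B → Disjoint A B) ∧ P.biUnion id = X ∧
      ∀ A ∈ P, A.card = 4 ∧ ∑ x ∈ A, x = α := by
  induction h with
  | zero =>
    intro X hX
    exact ⟨∅, by simp, by simpa using (Finset.val_eq_zero.1 hX).symm, by simp⟩
  | @add a b c d m habcd hm ih =>
    intro X hX
    have hnd := X.nodup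
    rw [hX] at hnd
    have hm' : m.Nodup := (Multiset.nodup_add.1 hnd).2.1
    have hq : ({a} + {b} + {c} + {d} : Multiset G).Nodup := (Multiset.nodup_add.1 hnd).1
    have hdisj := (Multiset.nodup_add.1 hnd).2.2
    obtain ⟨P, hP1, hP2, hP3⟩ := ih (X := ⟨m, hm'⟩) rfl
    set Q : Finset G := ⟨{a} + {b} + {c} + {d}, hq⟩ with hQ
    have hQval : Q.val = {a} + {b} + {c} + {d} := rfl
    have hsub : ∀ A ∈ P, A ⊆ ⟨m, hm'⟩ := fun A hA => by
      rw [← hP2]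
      exact Finset.subset_biUnion_of_mem id hA
    have hQm : Disjoint Q ⟨m, hm'⟩ := Finset.disjoint_left.2 fun x hx hx' =>
      Multiset.disjoint_left.1 hdisj hx hx'
    refine ⟨insert Q P, ?_, ?_, ?_⟩
    · intro A hA B hB hAB
      rcases Finset.mem_insert.1 hA with rfl | hA' <;> rcases Finset.mem_insert.1 hB with rfl | hB'
      · exact absurd rfl hAB
      · exact hQm.mono_right (hsub B hB')
      · exact (hQm.mono_right (hsub A hA')).symm
      · exact hP1 A hA' B hB' hAB
    · rw [Finset.biUnion_insert, hP2]
      ext x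
      rw [← Finset.mem_val (s := X), hX]
      simp [hQ, ← Finset.mem_val]
    · intro A hA
      rcases Finset.mem_insert.1 hA with rfl | hA'
      · refine ⟨by rw [Finset.card, hQval]; rfl, ?_⟩
        rw [Finset.sum_eq_multiset_sum, hQval]
        simpa only [Multiset.map_add, Multiset.map_singleton, Multiset.sum_add,
            Multiset.sum_singleton]
          using habcd
      · exact hP3 A hA'

/-- A finite abelian group has a generating set of at most logarithmic size. -/
theorem exists_small_generating (G : Type*) [AddCommGroup G] [Fintype G] :
    ∃ T : Finset G, AddSubgroup.closure (T : Set G) = ⊤ ∧ 2 ^ T.card ≤ Fintype.card G := by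
  have key : ∀ k : ℕ, ∃ T : Finset G, 2 ^ T.card ≤ Nat.card (AddSubgroup.closure (T : Set G)) ∧
      (AddSubgroup.closure (T : Set G) = ⊤ ∨ k ≤ T.card) := by
    intro k
    induction k with
    | zero => exact ⟨∅, by simp, Or.inr (Nat.zero_le _)⟩
    | succ k ih =>
      obtain ⟨T, hT, h | h⟩ := ih
      · exact ⟨T, hT, Or.inl h⟩
      by_cases htop : AddSubgroup.closure (T : Set G) = ⊤
      · exact ⟨T, hT, Or.inl htop⟩
      obtain ⟨g, hg⟩ : ∃ g, g ∉ AddSubgroup.closure (T : Set G) := by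
        by_contra! hc
        exact htop ((AddSubgroup.eq_top_iff' _).2 hc)
      have hgT : g ∉ T := fun h => hg (AddSubgroup.subset_closure h)
      have hle : AddSubgroup.closure (T : Set G) ≤
          AddSubgroup.closure ((insert g T : Finset G) : Set G) :=
        AddSubgroup.closure_mono (by simp)
      have hdvd := AddSubgroup.card_dvd_of_le hle
      have hne : Nat.card (AddSubgroup.closure (T : Set G)) ≠
          Nat.card (AddSubgroup.closure ((insert g T : Finset G) : Set G)) := by
        intro heq
        have := AddSubgroup.eq_of_le_of_card_ge hle heq.ge
        apply hg
        rw [this]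
        exact AddSubgroup.subset_closure (by simp)
      have hpos : 0 < Nat.card (AddSubgroup.closure ((insert g T : Finset G) : Set G)) :=
          Nat.card_pos
      refine ⟨insert g T, ?_, Or.inr (by rw [Finset.card_insert_of_notMem hgT]; omega)⟩
      rw [Finset.card_insert_of_notMem hgT, pow_succ]
      obtain ⟨c, hc⟩ := hdvd
      rw [hc] at hne hpos ⊢
      have : 2 ≤ c := by
        rcases c with _ | _ | c
        · simp at hpos
        · simp at hne
        · omega
      exact Nat.mul_le_mul hT this
  obtain ⟨T, hT, h⟩ := key (Fintype.card G)
  have hcard : Nat.card (AddSubgroup.closure (T : Set G)) ≤ Fintype.card G := by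
    rw [← Nat.card_eq_fintype_card]
    exact Nat.card_le_card_of_injective _ Subtype.val_injective
  rcases h with h | h
  · exact ⟨T, h, hT.trans hcard⟩
  · exact absurd (h.trans_lt (Nat.lt_two_pow_self.trans_le (hT.trans hcard))) (lt_irrefl _)

/-- Every element is a short sum of elements of a small set. -/
theorem exists_letters (G : Type*) [AddCommGroup G] [Fintype G] [DecidableEq G] :
    ∃ S : Finset G, S.card ≤ (Nat.log 2 (Fintype.card G) + 1) ^ 2 ∧
      ∀ y : G, ∃ l : List G, (∀ x ∈ l, x ∈ S) ∧ l.sum = y ∧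
        l.length ≤ (Nat.log 2 (Fintype.card G) + 1) ^ 2 := by
  obtain ⟨T, hT, hTc⟩ := exists_small_generating G
  set L := Nat.log 2 (Fintype.card G) + 1 with hL
  have hTL : T.card ≤ L := (Nat.le_log_of_pow_le (by norm_num) hTc).trans (Nat.le_succ _)
  have hn : Fintype.card G < 2 ^ L := Nat.lt_pow_succ_log_self (by norm_num) _
  let S : Finset G := (T ×ˢ Finset.range L).image fun z => 2 ^ z.2 • z.1
  have hmult : ∀ x ∈ T, ∀ c : ℕ, ∃ l : List G, (∀ z ∈ l, z ∈ S) ∧ l.sum = c • x ∧ l.length ≤ L := by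
    intro x hx c
    let c' := c % Fintype.card G
    have hc' : c' < 2 ^ L := (Nat.mod_lt _ Fintype.card_pos).trans hn
    have hbits : ∀ i ∈ c'.bitIndices, i < L := fun i hi =>
      (Nat.pow_lt_pow_iff_right (by norm_num : 1 < 2)).1
          ((Nat.two_pow_le_of_mem_bitIndices hi).trans_lt hc')
    refine ⟨c'.bitIndices.map fun i => 2 ^ i • x, ?_, ?_, ?_⟩
    · intro z hz
      obtain ⟨i, hi, rfl⟩ := List.mem_map.1 hz
      exact Finset.mem_image.2 ⟨(x, i), by simp [hx, hbits i hi], rfl⟩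
    · have h1 : (c'.bitIndices.map fun i => 2 ^ i • x).sum =
          (c'.bitIndices.map fun i => 2 ^ i).sum • x := by
        induction c'.bitIndices with
        | nil => simp
        | cons a l ih => simp [ih, add_smul]
      rw [h1, Nat.sum_map_two_pow_bitIndices, mod_card_nsmul]
    · rw [List.length_map]
      have hnd : c'.bitIndices.Nodup := Nat.bitIndices_sorted.nodup
      rw [← List.toFinset_card_of_nodup hnd]
      calc _ ≤ (Finset.range L).card := Finset.card_le_card fun i hi => by
            simpa using hbits i (List.mem_toFinset.1 hi)
        _ = L := Finset.card_range L
  refine ⟨S, ?_, fun y => ?_⟩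
  · refine Finset.card_image_le.trans ?_
    rw [Finset.card_product, Finset.card_range, sq]
    exact Nat.mul_le_mul_right _ hTL
  · have hy : y ∈ AddSubgroup.closure (T : Set G) := by rw [hT]; trivial
    have hcoef : ∃ f : G → ℕ, y = ∑ x ∈ T, f x • x := by
      induction hy using AddSubgroup.closure_induction with
      | mem x hx =>
        exact ⟨fun z => if z = x then 1 else 0, by simp [ite_smul, Finset.mem_coe.1 hx]⟩
      | zero => exact ⟨0, by simp⟩
      | add a b _ _ ha hb =>
        obtain ⟨f, rfl⟩ := ha
        obtain ⟨g, rfl⟩ := hb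
        exact ⟨f + g, by simp [add_smul, Finset.sum_add_distrib]⟩
      | neg a _ ha =>
        obtain ⟨f, rfl⟩ := ha
        refine ⟨fun x => f x * (Fintype.card G - 1), ?_⟩
        have hpos : 0 < Fintype.card G := Fintype.card_pos
        rw [← Finset.sum_neg_distrib]
        refine Finset.sum_congr rfl fun x _ => ?_
        rw [neg_eq_iff_add_eq_zero, ← add_smul]
        have : f x + f x * (Fintype.card G - 1) = f x * Fintype.card G := by
          obtain ⟨k, hk⟩ := Nat.exists_eq_succ_of_ne_zero hpos.ne'
          rw [hk]; simp; ring
        rw [this, mul_smul, card_nsmul_eq_zero, smul_zero]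
    obtain ⟨f, rfl⟩ := hcoef
    have hsum : ∀ U ⊆ T, ∃ l : List G, (∀ z ∈ l, z ∈ S) ∧ l.sum = ∑ x ∈ U, f x • x ∧
        l.length ≤ U.card * L := by
      intro U
      induction U using Finset.induction_on with
      | empty => exact fun _ => ⟨[], by simp⟩
      | insert a U ha ih =>
        intro hU
        obtain ⟨l, h1, h2, h3⟩ := ih fun z hz => hU (Finset.mem_insert_of_mem hz)
        obtain ⟨l', h1', h2', h3'⟩ := hmult a (hU (Finset.mem_insert_self a U)) (f a)
        refine ⟨l' ++ l, fun z hz => (List.mem_append.1 hz).elim (h1' z) (h1 z), ?_, ?_⟩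
        · rw [List.sum_append, Finset.sum_insert ha, h2, h2']
        · rw [List.length_append, Finset.card_insert_of_notMem ha, add_mul, one_mul]
          omega
    obtain ⟨l, h1, h2, h3⟩ := hsum T subset_rfl
    exact ⟨l, h1, h2, h3.trans (by rw [sq]; exact Nat.mul_le_mul_right _ hTL)⟩

end Letters

section Counts

variable {β ω κ : Type*} [DecidableEq β]

theorem bexp_sum_le {S : Finset β} {q : β → ℝ} (Ω : Finset ω) (f : ω → Finset β → ℝ) {η : ℝ}
    (h : ∀ w, bexp S q (f w) ≤ η) : bexp S q (fun A => ∑ w ∈ Ω, f w A) ≤ Ω.card * η := by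
  calc _ = ∑ w ∈ Ω, bexp S q (f w) := bexp_sum _ _
    _ ≤ ∑ _w ∈ Ω, η := Finset.sum_le_sum fun w _ => h w
    _ = _ := by rw [Finset.sum_const, nsmul_eq_mul]

theorem sum_le_abs_indicator_nonneg (Ω : Finset ω) (f : ω → ℝ) (E : ℝ) :
    0 ≤ ∑ w ∈ Ω, if E ≤ |f w| then (1 : ℝ) else 0 :=
  Finset.sum_nonneg fun w _ => by split_ifs <;> norm_num

theorem abs_lt_of_sum_indicator_lt_one {Ω : Finset ω} {f : ω → ℝ} {E : ℝ}
    (h : ∑ w ∈ Ω, (if E ≤ |f w| then (1 : ℝ) else 0) < 1) {w : ω} (hw : w ∈ Ω) : |f w| < E := by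
  by_contra! hE
  have h1 := Finset.single_le_sum (f := fun w => if E ≤ |f w| then (1 : ℝ) else 0)
    (fun w _ => by split_ifs <;> norm_num) hw
  simp only [if_pos hE] at h1
  linarith

/-- Concentration of the number of occurring events, when changing one element of the random set
affects few events. -/
theorem bexp_count_tail_le {S : Finset β} {q : β → ℝ} (hq : ∀ i ∈ S, 0 ≤ q i ∧ q i ≤ 1)
    (K : Finset κ) (ev : κ → Finset β → Prop) [∀ k A, Decidable (ev k A)] (m : ℕ) {s t : ℝ}
    (hs : 0 < s) (ht : 0 ≤ t)
    (htm : t * m ≤ 2 * s) (hvar : S.card * (m : ℝ) ^ 2 ≤ s)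
    (hinf : ∀ i ∈ S, (K.filter fun k => ∃ A, ¬(ev k (insert i A) ↔ ev k A)).card ≤ m)
    {μ : ℝ} (hμ : ∑ k ∈ K, bexp S q (fun A => if ev k A then 1 else 0) = μ) :
    bexp S q (fun A => if t ≤ |((K.filter fun k => ev k A).card : ℝ) - μ| then 1 else 0) ≤
      2 * Real.exp (-(t ^ 2 / (4 * s))) := by
  set f : Finset β → ℝ := fun A => ((K.filter fun k => ev k A).card : ℝ) with hf
  have hfsum : ∀ A, f A = ∑ k ∈ K, if ev k A then (1 : ℝ) else 0 := fun A => by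
    rw [hf, Finset.sum_boole]
  have hmean : bexp S q f = μ := by
    rw [← hμ, ← bexp_sum]
    exact bexp_congr fun A _ => hfsum A
  rw [← hmean]
  refine bexp_tail_le hq hs ht (c := fun _ => (m : ℝ)) (fun _ _ => htm) ?_ ?_
  · intro i hi A _ _
    change |f (insert i A) - f A| ≤ m
    rw [hfsum, hfsum, ← Finset.sum_sub_distrib]
    refine (Finset.abs_sum_le_sum_abs _ _).trans ?_
    calc _ ≤ ∑ k ∈ K, if ∃ A, ¬(ev k (insert i A) ↔ ev k A) then (1 : ℝ) else 0 := by
          refine Finset.sum_le_sum fun k _ => ?_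
          by_cases hk : ev k (insert i A) ↔ ev k A
          · have : (if ev k (insert i A) then (1 : ℝ) else 0) - (if ev k A then 1 else 0) = 0 := by
              simp only [hk, sub_self]
            rw [this, abs_zero]
            split_ifs <;> norm_num
          · have hex : ∃ A, ¬(ev k (insert i A) ↔ ev k A) := ⟨A, hk⟩
            rw [if_pos hex]
            split_ifs <;> norm_num
      _ = ((K.filter fun k => ∃ A, ¬(ev k (insert i A) ↔ ev k A)).card : ℝ) := by
          rw [Finset.sum_boole]
      _ ≤ m := by exact_mod_cast hinf i hi
  · calc ∑ i ∈ S, q i * (m : ℝ) ^ 2 ≤ ∑ _i ∈ S, (m : ℝ) ^ 2 :=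
        Finset.sum_le_sum fun i hi => mul_le_of_le_one_left (by positivity) (hq i hi).2
      _ = S.card * (m : ℝ) ^ 2 := by rw [Finset.sum_const, nsmul_eq_mul]
      _ ≤ s := hvar

/-- Concentration of the number of configurations inside a random set. -/
theorem bexp_configurations_tail_le {S : Finset β} {p : ℝ} (hp0 : 0 ≤ p) (hp1 : p ≤ 1)
    (K : Finset κ) (pts : κ → Finset β) (m : ℕ) (hpts : ∀ k ∈ K, pts k ⊆ S ∧ (pts k).card = m)
    (hdeg : ∀ x, (K.filter fun k => x ∈ pts k).card ≤ m) {s t : ℝ} (hs : 0 < s) (ht : 0 ≤ t)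
    (htm : t * m ≤ 2 * s) (hvar : S.card * (m : ℝ) ^ 2 ≤ s) :
    bexp S (fun _ => p) (fun A =>
      if t ≤ |((K.filter fun k => pts k ⊆ A).card : ℝ) - p ^ m * K.card| then 1 else 0) ≤
      2 * Real.exp (-(t ^ 2 / (4 * s))) := by
  refine bexp_count_tail_le (fun _ _ => ⟨hp0, hp1⟩) K (fun k A => pts k ⊆ A) m hs ht htm hvar ?_ ?_
  · intro i _
    refine (Finset.card_le_card fun k hk => ?_).trans (hdeg i)
    simp only [Finset.mem_filter] at hk ⊢
    refine ⟨hk.1, ?_⟩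
    obtain ⟨A, hA⟩ := hk.2
    by_contra hi
    exact hA (Finset.subset_insert_iff_of_notMem hi)
  · calc _ = ∑ k ∈ K, p ^ m := Finset.sum_congr rfl fun k hk => by
          rw [bexp_subset (hpts k hk).1, Finset.prod_const, (hpts k hk).2]
      _ = _ := by rw [Finset.sum_const, nsmul_eq_mul, mul_comm]

/-- The colour of `x` when colours are encoded by `r` bits. -/
def bitColour {r : ℕ} (A : Finset (β × Fin r)) (x : β) : Finset (Fin r) :=
  Finset.univ.filter fun i => (x, i) ∈ A

/-- Concentration of the number of configurations receiving prescribed colours. -/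
theorem bexp_colours_tail_le {X : Finset β} {r : ℕ} (K : Finset κ) (pts : κ → Finset β)
    (γ : κ → β → Finset (Fin r)) (m : ℕ) (hpts : ∀ k ∈ K, pts k ⊆ X ∧ (pts k).card = m)
    (hdeg : ∀ x, (K.filter fun k => x ∈ pts k).card ≤ m) {s t : ℝ} (hs : 0 < s) (ht : 0 ≤ t)
    (htm : t * m ≤ 2 * s) (hvar : (X.card * r : ℕ) * (m : ℝ) ^ 2 ≤ s) :
    bexp (X ×ˢ (Finset.univ : Finset (Fin r))) (fun _ => 1 / 2) (fun A =>
      if t ≤ |((K.filter fun k => ∀ x ∈ pts k, bitColour A x = γ k x).card : ℝ) -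
        K.card / ((2 : ℝ) ^ r) ^ m| then 1 else 0) ≤
      2 * Real.exp (-(t ^ 2 / (4 * s))) := by
  refine bexp_count_tail_le (fun _ _ => by norm_num) K
    (fun k A => ∀ x ∈ pts k, bitColour A x = γ k x) m hs ht htm (by simpa using hvar) ?_ ?_
  · rintro ⟨y, i⟩ _
    refine (Finset.card_le_card fun k hk => ?_).trans (hdeg y)
    simp only [Finset.mem_filter] at hk ⊢
    refine ⟨hk.1, ?_⟩
    obtain ⟨A, hA⟩ := hk.2
    by_contra hy
    refine hA (forall₂_congr fun x hx => ?_)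
    have hxy : x ≠ y := fun h => hy (h ▸ hx)
    have : bitColour (insert (y, i) A) x = bitColour A x := by
      ext j
      simp [bitColour, hxy]
    rw [this]
  · have hk : ∀ k ∈ K, bexp (X ×ˢ (Finset.univ : Finset (Fin r))) (fun _ => 1 / 2)
        (fun A => if ∀ x ∈ pts k, bitColour A x = γ k x then 1 else 0) = 1 / ((2 : ℝ) ^ r) ^ m := by
      intro k hk
      set D := pts k ×ˢ (Finset.univ : Finset (Fin r)) with hD
      have hDS : D ⊆ X ×ˢ Finset.univ := Finset.product_subset_product_left (hpts k hk).1
      have h := bexp_indicator (q := fun _ => (1 / 2 : ℝ))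
        (B₁ := D.filter fun z => z.2 ∈ γ k z.1) (B₂ := D.filter fun z => z.2 ∉ γ k z.1)
        ((Finset.filter_subset _ _).trans hDS) ((Finset.filter_subset _ _).trans hDS)
        (Finset.disjoint_filter_filter_not _ _ _)
      rw [Finset.prod_const, Finset.prod_const] at h
      norm_num only [] at h
      rw [← pow_add, Finset.card_filter_add_card_filter_not, hD, Finset.card_product,
        (hpts k hk).2, Finset.card_univ, Fintype.card_fin] at h
      rw [← pow_mul, mul_comm r m, ← one_div_pow, ← h]
      refine bexp_congr fun A _ => if_congr ?_ rfl rfl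
      constructor
      · intro hA
        constructor
        · rintro ⟨x, i⟩ hx
          simp only [Finset.mem_filter, Finset.mem_product, Finset.mem_univ, and_true] at hx
          have := hx.2
          rw [← hA x hx.1] at this
          simpa [bitColour] using this
        · refine Finset.disjoint_left.2 ?_
          rintro ⟨x, i⟩ hx hxA
          simp only [Finset.mem_filter, Finset.mem_product, Finset.mem_univ, and_true] at hx
          have := hx.2
          rw [← hA x hx.1] at this
          exact this (by simpa [bitColour] using hxA)
      · rintro ⟨h1, h2⟩ x hx
        ext i
        simp only [bitColour, Finset.mem_filter, Finset.mem_univ, true_and]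
        constructor
        · intro hxA
          by_contra hi
          exact Finset.disjoint_left.1 h2 (by simp [hx, hi]) hxA
        · intro hi
          exact h1 (by simp [hx, hi])
    rw [Finset.sum_congr rfl hk, Finset.sum_const, nsmul_eq_mul, mul_one_div]

end Counts

section Typical

variable {G : Type*} [AddCommGroup G] [DecidableEq G]

/-- The elements `a` of `X` that form a nondegenerate configuration
`a, t₁ - a, h - a, t₂ - (h - a)` in `X`. -/
def quadSet (X : Finset G) (t₁ t₂ h : G) : Finset G :=
  X.filter fun a => ({a, t₁ - a, h - a, t₂ - (h - a)} : Finset G) ⊆ X ∧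
    ({a, t₁ - a, h - a, t₂ - (h - a)} : Finset G).card = 4

/-- `X` has about as many elements, pairs and quadruples of prescribed type as a `p`-random set,
up to an error `E`. -/
structure Typical [Fintype G] (X : Finset G) (p E : ℝ) : Prop where
  card : |(X.card : ℝ) - p * Fintype.card G| ≤ E
  pair : ∀ t, |((pairSet X t).card : ℝ) - p ^ 2 * (pairSet Finset.univ t).card| ≤ E
  quad : ∀ t₁ t₂ h,
    |((quadSet X t₁ t₂ h).card : ℝ) - p ^ 4 * (quadSet Finset.univ t₁ t₂ h).card| ≤ E

theorem card_filter_mem_pair_le (K : Finset G) (t x : G) :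
    (K.filter fun a => x ∈ ({a, t - a} : Finset G)).card ≤ 2 := by
  refine (Finset.card_le_card fun a ha => ?_).trans (Finset.card_le_two (a := x) (b := t - x))
  simp only [Finset.mem_filter, Finset.mem_insert, Finset.mem_singleton] at ha ⊢
  rcases ha.2 with h | h
  · exact Or.inl h.symm
  · exact Or.inr (by rw [h]; abel)

theorem card_filter_mem_quad_le (K : Finset G) (t₁ t₂ h x : G) :
    (K.filter fun a => x ∈ ({a, t₁ - a, h - a, t₂ - (h - a)} : Finset G)).card ≤ 4 := by
  refine (Finset.card_le_card fun a ha => ?_).trans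
    (Finset.card_le_four (a := x) (b := t₁ - x) (c := h - x) (d := h - (t₂ - x)))
  simp only [Finset.mem_filter, Finset.mem_insert, Finset.mem_singleton] at ha ⊢
  rcases ha.2 with h | h | h | h
  · exact Or.inl h.symm
  · exact Or.inr (Or.inl (by rw [h]; abel))
  · exact Or.inr (Or.inr (Or.inl (by rw [h]; abel)))
  · exact Or.inr (Or.inr (Or.inr (by rw [h]; abel)))

theorem pairSet_eq_filter [Fintype G] (X : Finset G) (t : G) :
    pairSet X t = (pairSet Finset.univ t).filter fun a => ({a, t - a} : Finset G) ⊆ X := by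
  ext a
  simp only [pairSet, Finset.mem_filter, Finset.mem_univ, true_and, Finset.insert_subset_iff,
    Finset.singleton_subset_iff]
  tauto

theorem quadSet_eq_filter [Fintype G] (X : Finset G) (t₁ t₂ h : G) :
    quadSet X t₁ t₂ h = (quadSet Finset.univ t₁ t₂ h).filter fun a =>
      ({a, t₁ - a, h - a, t₂ - (h - a)} : Finset G) ⊆ X := by
  ext a
  simp only [quadSet, Finset.mem_filter, Finset.mem_univ, true_and, Finset.insert_subset_iff,
    Finset.singleton_subset_iff]
  tauto

theorem abs_card_filter_sub_le {G κ : Type*} [DecidableEq G] (K : Finset κ) (pts : κ → Finset G)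
    {m : ℕ} (hdeg : ∀ x, (K.filter fun k => x ∈ pts k).card ≤ m) (X R : Finset G) :
    |((K.filter fun k => pts k ⊆ X).card : ℝ) - (K.filter fun k => pts k ⊆ R).card| ≤
      m * (symmDiff X R).card := by
  have key : ∀ X R : Finset G, (K.filter fun k => pts k ⊆ X).card ≤
      (K.filter fun k => pts k ⊆ R).card + m * (symmDiff X R).card := by
    intro X R
    have hsub : (K.filter fun k => pts k ⊆ X) ⊆ (K.filter fun k => pts k ⊆ R) ∪
        (symmDiff X R).biUnion fun x => K.filter fun k => x ∈ pts k := by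
      intro k hk
      simp only [Finset.mem_filter, Finset.mem_union, Finset.mem_biUnion] at hk ⊢
      by_cases h : pts k ⊆ R
      · exact Or.inl ⟨hk.1, h⟩
      · obtain ⟨x, hx, hxR⟩ := Finset.not_subset.1 h
        exact Or.inr ⟨x, Finset.mem_symmDiff.2 (Or.inl ⟨hk.2 hx, hxR⟩), hk.1, hx⟩
    refine (Finset.card_le_card hsub).trans ((Finset.card_union_le _ _).trans ?_)
    gcongr
    rw [mul_comm]
    exact Finset.card_biUnion_le_card_mul _ _ _ fun x _ => hdeg x
  have h1 := key X R
  have h2 := key R X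
  rw [symmDiff_comm] at h2
  rw [abs_le]
  constructor
  · have : ((K.filter fun k => pts k ⊆ R).card : ℝ) ≤ (K.filter fun k => pts k ⊆ X).card +
        m * (symmDiff X R).card := by exact_mod_cast h2
    linarith
  · have : ((K.filter fun k => pts k ⊆ X).card : ℝ) ≤ (K.filter fun k => pts k ⊆ R).card +
        m * (symmDiff X R).card := by exact_mod_cast h1
    linarith

theorem Typical.of_symmDiff [Fintype G] {R X : Finset G} {p E E' : ℝ} (hR : Typical R p E)
    (h : E + 4 * (symmDiff X R).card ≤ E') : Typical X p E' := by
  have h0 : (0 : ℝ) ≤ (symmDiff X R).card := Nat.cast_nonneg _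
  refine ⟨?_, fun t => ?_, fun t₁ t₂ s => ?_⟩
  · have h1 := abs_card_filter_sub_le (Finset.univ : Finset G) (fun a => {a}) (m := 1)
      (fun x => by simp [Finset.filter_eq]) X R
    simp only [Finset.singleton_subset_iff, Finset.filter_univ_mem, Nat.cast_one, one_mul] at h1
    have h2 := hR.card
    rw [abs_le] at *
    constructor <;> linarith
  · have h1 := abs_card_filter_sub_le (pairSet Finset.univ t) (fun a => {a, t - a}) (m := 2)
      (fun x => card_filter_mem_pair_le _ t x) X R
    rw [← pairSet_eq_filter, ← pairSet_eq_filter] at h1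
    have h2 := hR.pair t
    rw [abs_le] at *
    push_cast at h1
    constructor <;> linarith
  · have h1 := abs_card_filter_sub_le (quadSet Finset.univ t₁ t₂ s)
      (fun a => {a, t₁ - a, s - a, t₂ - (s - a)}) (m := 4)
      (fun x => card_filter_mem_quad_le _ t₁ t₂ s x) X R
    rw [← quadSet_eq_filter, ← quadSet_eq_filter] at h1
    have h2 := hR.quad t₁ t₂ s
    rw [abs_le] at *
    push_cast at h1
    constructor <;> linarith

/-- A random set is typical with high probability. -/
theorem bexp_not_typical_le [Fintype G] {p E : ℝ} (hp0 : 0 ≤ p) (hp1 : p ≤ 1) (hE : 0 ≤ E)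
    (hEn : E ≤ Fintype.card G) :
    bexp (Finset.univ : Finset G) (fun _ => p) (fun R => if Typical R p E then 0 else 1) ≤
      6 * (Fintype.card G : ℝ) ^ 3 * Real.exp (-(E ^ 2 / (64 * Fintype.card G))) := by
  set n : ℝ := (Fintype.card G : ℝ) with hn
  have hn1 : 1 ≤ n := by
    rw [hn]; exact_mod_cast Fintype.card_pos
  have hq : ∀ i ∈ (Finset.univ : Finset G), 0 ≤ p ∧ p ≤ 1 := fun _ _ => ⟨hp0, hp1⟩
  have hcardn : ((Finset.univ : Finset G).card : ℝ) = n := by rw [Finset.card_univ]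
  have hmm : ∀ m : ℕ, m ≤ 4 → E * m ≤ 2 * (16 * n) ∧
      ((Finset.univ : Finset G).card : ℝ) * (m : ℝ) ^ 2 ≤ 16 * n := by
    intro m hm
    have hm' : (m : ℝ) ≤ 4 := by exact_mod_cast hm
    have hm0 : (0 : ℝ) ≤ m := Nat.cast_nonneg m
    have hm2 : (m : ℝ) ^ 2 ≤ 16 := by nlinarith
    rw [hcardn]
    constructor <;> nlinarith
  set η : ℝ := 2 * Real.exp (-(E ^ 2 / (4 * (16 * n)))) with hη
  have h1 := bexp_configurations_tail_le (S := (Finset.univ : Finset G)) hp0 hp1 Finset.univ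
    (fun a => {a}) 1 (fun a _ => ⟨Finset.subset_univ _, Finset.card_singleton a⟩)
    (fun x => by simp [Finset.filter_eq]) (by positivity) hE (hmm 1 (by norm_num)).1
    (hmm 1 (by norm_num)).2
  have h2 := fun t => bexp_configurations_tail_le (S := (Finset.univ : Finset G)) hp0 hp1
    (pairSet Finset.univ t) (fun a => {a, t - a}) 2
    (fun a ha => ⟨Finset.subset_univ _, Finset.card_pair (by simpa [pairSet] using ha)⟩)
    (fun x => card_filter_mem_pair_le _ t x) (by positivity) hE (hmm 2 (by norm_num)).1
    (hmm 2 (by norm_num)).2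
  have h3 := fun w : G × G × G =>
      bexp_configurations_tail_le (S := (Finset.univ : Finset G)) hp0 hp1
    (quadSet Finset.univ w.1 w.2.1 w.2.2) (fun a => {a, w.1 - a, w.2.2 - a, w.2.1 - (w.2.2 - a)}) 4
    (fun a ha => ⟨Finset.subset_univ _, (Finset.mem_filter.1 ha).2.2⟩)
    (fun x => card_filter_mem_quad_le _ _ _ _ x) (by positivity) hE (hmm 4 (by norm_num)).1
    (hmm 4 (by norm_num)).2
  have hle : bexp (Finset.univ : Finset G) (fun _ => p) (fun R => if Typical R p E then 0 else 1) ≤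
      (η + (Finset.univ : Finset G).card * η) +
        (Finset.univ : Finset (G × G × G)).card * η := by
    refine le_trans ?_ (add_le_add (add_le_add h1 (bexp_sum_le Finset.univ _ h2))
      (bexp_sum_le Finset.univ _ h3))
    rw [← bexp_add, ← bexp_add]
    refine bexp_mono hq fun R _ => ?_
    have hb := sum_le_abs_indicator_nonneg Finset.univ (fun t : G =>
      (((pairSet Finset.univ t).filter fun a => {a, t - a} ⊆ R).card : ℝ) -
        p ^ 2 * (pairSet Finset.univ t).card) E
    have hc := sum_le_abs_indicator_nonneg Finset.univ (fun w : G × G × G =>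
      (((quadSet Finset.univ w.1 w.2.1 w.2.2).filter fun a =>
        {a, w.1 - a, w.2.2 - a, w.2.1 - (w.2.2 - a)} ⊆ R).card : ℝ) -
        p ^ 4 * (quadSet Finset.univ w.1 w.2.1 w.2.2).card) E
    have ha : (0 : ℝ) ≤ if E ≤ |(((Finset.univ : Finset G).filter fun a => {a} ⊆ R).card : ℝ) -
        p ^ 1 * (Finset.univ : Finset G).card| then 1 else 0 := by split_ifs <;> norm_num
    by_cases hT : Typical R p E
    · rw [if_pos hT]
      exact add_nonneg (add_nonneg ha hb) hc
    rw [if_neg hT]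
    by_contra! hlt
    refine hT ⟨?_, fun t => ?_, fun t₁ t₂ s => ?_⟩
    · by_contra! hlt'
      rw [if_pos (by simpa [Finset.singleton_subset_iff, Finset.filter_univ_mem] using
        hlt'.le)] at hlt
      linarith
    · rw [pairSet_eq_filter R]
      exact (abs_lt_of_sum_indicator_lt_one (by linarith) (Finset.mem_univ t)).le
    · rw [quadSet_eq_filter R]
      exact (abs_lt_of_sum_indicator_lt_one (f := fun w : G × G × G =>
        (((quadSet Finset.univ w.1 w.2.1 w.2.2).filter fun a =>
        {a, w.1 - a, w.2.2 - a, w.2.1 - (w.2.2 - a)} ⊆ R).card : ℝ) -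
        p ^ 4 * (quadSet Finset.univ w.1 w.2.1 w.2.2).card) (by linarith)
          (Finset.mem_univ (t₁, t₂, s))).le
  refine hle.trans ?_
  have hc3 : ((Finset.univ : Finset (G × G × G)).card : ℝ) = n ^ 3 := by
    rw [Finset.card_univ, Fintype.card_prod, Fintype.card_prod, hn]; push_cast; ring
  rw [hcardn, hc3]
  have hη' : η = 2 * Real.exp (-(E ^ 2 / (64 * n))) := by rw [hη]; ring_nf
  rw [hη']
  have hexp := Real.exp_pos (-(E ^ 2 / (64 * n)))
  have hn2 : n ≤ n ^ 3 := le_self_pow₀ hn1 (by norm_num)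
  nlinarith

theorem ne_of_card_four {G : Type*} [DecidableEq G] {a b c d : G}
    (h : ({a, b, c, d} : Finset G).card = 4) :
    a ≠ b ∧ a ≠ c ∧ a ≠ d ∧ b ≠ c ∧ b ≠ d ∧ c ≠ d := by
  have key : ∀ x y z : G, ({x, y, z} : Finset G).card ≠ 4 := fun x y z h => by
    have := Finset.card_le_three (a := x) (b := y) (c := z)
    omega
  refine ⟨?_, ?_, ?_, ?_, ?_, ?_⟩ <;> rintro rfl
  · exact key a c d (by rw [← h]; congr 1; ext; simp)
  · exact key a b d (by rw [← h]; congr 1; ext; simp; tauto)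
  · exact key a b c (by rw [← h]; congr 1; ext; simp; tauto)
  · exact key a b d (by rw [← h]; congr 1; ext; simp)
  · exact key a b c (by rw [← h]; congr 1; ext; simp; tauto)
  · exact key a b c (by rw [← h]; congr 1; ext; simp)

/-- There is a colouring of `X` for which pairs and quadruples are equidistributed. -/
theorem exists_colouring [Fintype G] {X : Finset G} {r : ℕ} {E : ℝ} (hr : 1 ≤ r) (hE : 0 ≤ E)
    (hEn : E ≤ X.card)
    (hprob : 4 * ((Fintype.card G : ℝ) ^ 3 * ((2 : ℝ) ^ r) ^ 4) *
      Real.exp (-(E ^ 2 / (64 * (X.card * r : ℕ)))) < 1) (hX : X.Nonempty) :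
    ∃ col : G → Finset (Fin r),
      (∀ t c₁ c₂, |(((pairSet X t).filter fun a => col a = c₁ ∧ col (t - a) = c₂).card : ℝ) -
        (pairSet X t).card / ((2 : ℝ) ^ r) ^ 2| ≤ E) ∧
      ∀ t₁ t₂ h c₁ c₂ c₃ c₄, |(((quadSet X t₁ t₂ h).filter fun a => col a = c₁ ∧
        col (t₁ - a) = c₂ ∧ col (h - a) = c₃ ∧ col (t₂ - (h - a)) = c₄).card : ℝ) -
        (quadSet X t₁ t₂ h).card / ((2 : ℝ) ^ r) ^ 4| ≤ E := by
  set s : ℝ := 16 * (X.card * r : ℕ) with hs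
  have hXr : (X.card : ℝ) ≤ (X.card * r : ℕ) := by
    exact_mod_cast Nat.le_mul_of_pos_right _ hr
  have hX0 : (0 : ℝ) < X.card := by exact_mod_cast hX.card_pos
  have hs0 : 0 < s := by linarith
  have hmm : ∀ m : ℕ, m ≤ 4 → E * m ≤ 2 * s ∧ (X.card * r : ℕ) * (m : ℝ) ^ 2 ≤ s := by
    intro m hm
    have hm' : (m : ℝ) ≤ 4 := by exact_mod_cast hm
    have hm0 : (0 : ℝ) ≤ m := Nat.cast_nonneg m
    have hm2 : (m : ℝ) ^ 2 ≤ 16 := by nlinarith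
    constructor <;> nlinarith
  have hq : ∀ i ∈ X ×ˢ (Finset.univ : Finset (Fin r)), (0 : ℝ) ≤ 1 / 2 ∧ (1 : ℝ) / 2 ≤ 1 :=
    fun _ _ => by norm_num
  set η : ℝ := 2 * Real.exp (-(E ^ 2 / (4 * s))) with hη
  have h2 := fun w : G × Finset (Fin r) × Finset (Fin r) =>
      bexp_colours_tail_le (pairSet X w.1) (fun a => {a, w.1 - a})
    (fun a x => if x = a then w.2.1 else w.2.2) 2 (fun a ha => by
        simp only [pairSet, Finset.mem_filter] at ha
        refine ⟨?_, Finset.card_pair ha.2.2⟩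
        simp [Finset.insert_subset_iff, ha.1, ha.2.1])
      (fun x => card_filter_mem_pair_le _ w.1 x) hs0 hE (hmm 2 (by norm_num)).1
          (hmm 2 (by norm_num)).2
  have h4 := fun w : (G × G × G) × (Finset (Fin r) × Finset (Fin r)) ×
      (Finset (Fin r) × Finset (Fin r)) => bexp_colours_tail_le (quadSet X w.1.1 w.1.2.1 w.1.2.2)
    (fun a => {a, w.1.1 - a, w.1.2.2 - a, w.1.2.1 - (w.1.2.2 - a)})
    (fun a x => if x = a then w.2.1.1 else if x = w.1.1 - a then w.2.1.2 else
            if x = w.1.2.2 - a then w.2.2.1 else w.2.2.2) 4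
      (fun a ha => (Finset.mem_filter.1 ha).2)
      (fun x => card_filter_mem_quad_le _ _ _ _ x) hs0 hE (hmm 4 (by norm_num)).1
          (hmm 4 (by norm_num)).2
  have hsum := add_le_add
    (bexp_sum_le (Finset.univ : Finset (G × Finset (Fin r) × Finset (Fin r))) _ h2)
    (bexp_sum_le (Finset.univ : Finset ((G × G × G) × (Finset (Fin r) × Finset (Fin r)) ×
      (Finset (Fin r) × Finset (Fin r)))) _ h4)
  rw [← bexp_add] at hsum
  obtain ⟨A, -, hA⟩ := exists_le_bexp hq (S := X ×ˢ (Finset.univ : Finset (Fin r))) (fun A => _)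
  have hlt := hA.trans hsum
  have hη' : η = 2 * Real.exp (-(E ^ 2 / (64 * (X.card * r : ℕ)))) := by rw [hη, hs]; ring_nf
  have hexp := Real.exp_pos (-(E ^ 2 / (64 * (X.card * r : ℕ))))
  have hn1 : (1 : ℝ) ≤ Fintype.card G := by exact_mod_cast Fintype.card_pos
  have hr1 : (1 : ℝ) ≤ 2 ^ r := one_le_pow₀ (by norm_num)
  have hcard2 : ((Finset.univ : Finset (G × Finset (Fin r) × Finset (Fin r))).card : ℝ) =
      Fintype.card G * (2 ^ r) ^ 2 := by
    rw [Finset.card_univ, Fintype.card_prod, Fintype.card_prod, Fintype.card_finset,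
      Fintype.card_fin]
    push_cast
    ring
  have hcard4 : ((Finset.univ : Finset ((G × G × G) × (Finset (Fin r) × Finset (Fin r)) ×
      (Finset (Fin r) × Finset (Fin r)))).card : ℝ) = (Fintype.card G : ℝ) ^ 3 * (2 ^ r) ^ 4 := by
    rw [Finset.card_univ, Fintype.card_prod, Fintype.card_prod, Fintype.card_prod,
      Fintype.card_prod, Fintype.card_prod, Fintype.card_finset, Fintype.card_fin]
    push_cast
    ring
  have hcard : (Fintype.card G : ℝ) * (2 ^ r) ^ 2 ≤ (Fintype.card G : ℝ) ^ 3 * (2 ^ r) ^ 4 :=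
    mul_le_mul (le_self_pow₀ hn1 (by norm_num)) (pow_le_pow_right₀ hr1 (by norm_num))
        (by positivity)
      (by positivity)
  rw [hcard2, hcard4, ← hη, hη'] at hlt
  have hlt1 : (Fintype.card G : ℝ) * (2 ^ r) ^ 2 *
        (2 * Real.exp (-(E ^ 2 / (64 * (X.card * r : ℕ))))) +
      (Fintype.card G : ℝ) ^ 3 * (2 ^ r) ^ 4 *
          (2 * Real.exp (-(E ^ 2 / (64 * (X.card * r : ℕ))))) < 1 := by
    have := mul_le_mul_of_nonneg_right hcard (by positivity :
      0 ≤ 2 * Real.exp (-(E ^ 2 / (64 * (X.card * r : ℕ)))))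
    linarith
  have hlt2 := hlt.trans_lt hlt1
  have ha := (le_add_of_nonneg_right (sum_le_abs_indicator_nonneg _ _ _)).trans_lt hlt2
  have hb := (le_add_of_nonneg_left (sum_le_abs_indicator_nonneg _ _ _)).trans_lt hlt2
  refine ⟨bitColour A, fun t c₁ c₂ => ?_, fun t₁ t₂ h c₁ c₂ c₃ c₄ => ?_⟩
  · have key := (abs_lt_of_sum_indicator_lt_one ha (Finset.mem_univ (t, c₁, c₂))).le
    refine (le_of_eq (congrArg (fun K : Finset G => |(K.card : ℝ) - _|) ?_)).trans key
    ext a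
    simp only [Finset.mem_filter]
    refine and_congr_right fun ha => ?_
    have hne : t - a ≠ a := fun h => (Finset.mem_filter.1 ha).2.2 h.symm
    simp [hne]
  · have key := (abs_lt_of_sum_indicator_lt_one hb
      (Finset.mem_univ ((t₁, t₂, h), (c₁, c₂), (c₃, c₄)))).le
    refine (le_of_eq (congrArg (fun K : Finset G => |(K.card : ℝ) - _|) ?_)).trans key
    ext a
    simp only [Finset.mem_filter]
    refine and_congr_right fun ha => ?_
    obtain ⟨n1, n2, n3, n4, n5, n6⟩ := ne_of_card_four (Finset.mem_filter.1 ha).2.2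
    simp [n1.symm, n2.symm, n3.symm, n4.symm, n5.symm, n6.symm]

end Typical

section Families

variable {G : Type*} [AddCommGroup G]

theorem card_filter_mem_le_of_injOn {κ β : Type*} {K : Finset κ} {f : κ → β}
    (hf : Set.InjOn f K) (F : Finset β) : (K.filter fun a => f a ∈ F).card ≤ F.card :=
  Finset.card_le_card_of_injOn f (fun _ ha => (Finset.mem_filter.1 ha).2)
    fun _ ha _ hb h => hf (Finset.mem_filter.1 ha).1 (Finset.mem_filter.1 hb).1 h

theorem exists_avoiding_of_injOn {κ β₁ β₂ β₃ : Type*} {K : Finset κ} {f₁ : κ → β₁} {f₂ : κ → β₂}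
    {f₃ : κ → β₃} (h₁ : Set.InjOn f₁ K) (h₂ : Set.InjOn f₂ K) (h₃ : Set.InjOn f₃ K)
    {F₁ : Finset β₁} {F₂ : Finset β₂} {F₃ : Finset β₃}
    (h : F₁.card + F₂.card + F₃.card < K.card) : ∃ a ∈ K, f₁ a ∉ F₁ ∧ f₂ a ∉ F₂ ∧ f₃ a ∉ F₃ := by
  by_contra! hcon
  have hsub : K ⊆ (K.filter fun a => f₁ a ∈ F₁) ∪ (K.filter fun a => f₂ a ∈ F₂) ∪
      (K.filter fun a => f₃ a ∈ F₃) := by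
    intro a ha
    have := hcon a ha
    simp only [Finset.mem_union, Finset.mem_filter, ha, true_and]
    tauto
  have := (Finset.card_le_card hsub).trans (Finset.card_union_le _ _)
  have := Finset.card_union_le (K.filter fun a => f₁ a ∈ F₁) (K.filter fun a => f₂ a ∈ F₂)
  have := card_filter_mem_le_of_injOn h₁ F₁
  have := card_filter_mem_le_of_injOn h₂ F₂
  have := card_filter_mem_le_of_injOn h₃ F₃
  omega

/-- The index set of the reserve with first points in the sets `P c`. -/
noncomputable def familyIndex (S : Finset G) (P : Option G → Finset G) : Finset (Option G × G) :=
  (Finset.insertNone S).biUnion fun c => (P c).image fun a => (c, a)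

theorem mem_familyIndex {G : Type*} {S : Finset G} {P : Option G → Finset G}
    {i : Option G × G} :
    i ∈ familyIndex S P ↔ i.1 ∈ Finset.insertNone S ∧ i.2 ∈ P i.1 := by
  obtain ⟨c, a⟩ := i
  simp only [familyIndex, Finset.mem_biUnion, Finset.mem_image, Prod.mk.injEq]
  constructor
  · rintro ⟨d, hd, b, hb, rfl, rfl⟩
    exact ⟨hd, hb⟩
  · exact fun h => ⟨c, h.1, a, h.2, rfl, rfl⟩

theorem Reserve.of_families {α t₀ : G} {S Bad : Finset G} {B : ℕ} {P Q : Option G → Finset G}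
    {φ : Option G → G → G} (hφ : ∀ c ∈ Finset.insertNone S, Set.BijOn (φ c) (P c) (Q c))
    (hfresh : B + 2 * Bad.card < (P none).card)
    (hP : ∀ x ∈ S, ∀ h ∉ Bad,
      2 * B + Bad.card < ((P (some x)).filter fun a => h - a ∈ Q none).card)
    (hQ : ∀ x ∈ S, ∀ h ∉ Bad,
      2 * B + Bad.card < ((Q (some x)).filter fun a => h - a ∈ P none).card) :
    Reserve α t₀ S Bad B (familyIndex S P) Prod.fst Prod.snd
      (fun i => t₀ + i.1.getD 0 - i.2) (fun i => φ i.1 i.2)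
      (fun i => α - t₀ - i.1.getD 0 - φ i.1 i.2) := by
  have hnone : none ∈ Finset.insertNone S := Finset.none_mem_insertNone
  have hsome : ∀ x ∈ S, some x ∈ Finset.insertNone S := fun x hx => Finset.some_mem_insertNone.2 hx
  refine ⟨fun i _ => by abel, fun i _ => by abel, fun F hF a b => ?_,
    fun F hF x hx h hh b => ?_, fun F hF x hx h hh b => ?_⟩
  · obtain ⟨c, hc, h1, h2, h3⟩ := exists_avoiding_of_injOn (K := P none)
      (f₁ := fun c => ((none : Option G), c)) (f₂ := fun c => α - a - c)
      (f₃ := fun c => α - b - φ none c) (F₁ := F) (F₂ := Bad) (F₃ := Bad)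
      (fun u _ v _ huv => (Prod.mk.inj huv).2) (fun u _ v _ huv => by simpa using huv)
      (fun u hu v hv huv => (hφ none hnone).injOn hu hv (by simpa using huv)) (by omega)
    exact ⟨(none, c), mem_familyIndex.2 ⟨hnone, hc⟩, h1, h2, h3⟩
  · have hsurj : ∀ a, h - a ∈ Q none → ∃ b ∈ P none, φ none b = h - a := fun a ha =>
      (hφ none hnone).surjOn ha
    choose! ψ hψP hψ using hsurj
    obtain ⟨c, hc, h1, h2, h3⟩ := exists_avoiding_of_injOn
      (K := (P (some x)).filter fun a => h - a ∈ Q none)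
      (f₁ := fun c => (some x, c)) (f₂ := fun c => ((none : Option G), ψ c))
      (f₃ := fun c => α - (t₀ + x - c) - b) (F₁ := F) (F₂ := F) (F₃ := Bad)
      (fun u _ v _ huv => (Prod.mk.inj huv).2)
      (fun u hu v hv huv => by
        have h1 := hψ u (Finset.mem_filter.1 hu).2
        rw [(Prod.mk.inj huv).2, hψ v (Finset.mem_filter.1 hv).2] at h1
        simpa using h1.symm)
      (fun u _ v _ huv => by simpa using huv)
      (by have := hP x hx h hh; omega)
    obtain ⟨hcP, hcQ⟩ := Finset.mem_filter.1 hc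
    exact ⟨(some x, c), mem_familyIndex.2 ⟨hsome x hx, hcP⟩, (none, ψ c),
      mem_familyIndex.2 ⟨hnone, hψP c hcQ⟩, h1, h2, rfl, rfl,
      by simp only [hψ c hcQ]; abel, h3⟩
  · have hsurj : ∀ a, a ∈ Q (some x) → ∃ b ∈ P (some x), φ (some x) b = a := fun a ha =>
      (hφ _ (hsome x hx)).surjOn ha
    choose! ψ hψP hψ using hsurj
    obtain ⟨c, hc, h1, h2, h3⟩ := exists_avoiding_of_injOn
      (K := (Q (some x)).filter fun a => h - a ∈ P none)
      (f₁ := fun c => (some x, ψ c)) (f₂ := fun c => ((none : Option G), h - c))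
      (f₃ := fun c => α - (α - t₀ - x - c) - b) (F₁ := F) (F₂ := F) (F₃ := Bad)
      (fun u hu v hv huv => by
        have h1 := hψ u (Finset.mem_filter.1 hu).1
        rw [(Prod.mk.inj huv).2, hψ v (Finset.mem_filter.1 hv).1] at h1
        exact h1.symm)
      (fun u _ v _ huv => by simpa using (Prod.mk.inj huv).2)
      (fun u _ v _ huv => by simpa using huv)
      (by have := hQ x hx h hh; omega)
    obtain ⟨hcQ, hcP⟩ := Finset.mem_filter.1 hc
    refine ⟨(some x, ψ c), mem_familyIndex.2 ⟨hsome x hx, hψP c hcQ⟩, (none, h - c),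
      mem_familyIndex.2 ⟨hnone, hcP⟩, h1, h2, rfl, rfl, ?_, ?_⟩
    · simp only [hψ c hcQ]; abel
    · simp only [hψ c hcQ, Option.getD_some]
      exact h3

theorem reservePoints_eq_map_add {G ι : Type*} (p p' e e' : ι → G) (I : Finset ι) :
    reservePoints p p' e e' I = I.val.map p + I.val.map p' + I.val.map e + I.val.map e' := by
  have key : ∀ f : ι → G, ∑ i ∈ I, ({f i} : Multiset G) = I.val.map f := fun f => by
    have := Multiset.sum_map_singleton (I.val.map f)
    rwa [Multiset.map_map] at this
  rw [reservePoints, Finset.sum_add_distrib, Finset.sum_add_distrib, Finset.sum_add_distrib]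
  simp only [key]

theorem nodup_reservePoints {G ι Γ : Type*} {p p' e e' : ι → G} {I : Finset ι} {col : G → Γ}
    {γ : Fin 4 → ι → Γ} (hp : Set.InjOn p I) (hp' : Set.InjOn p' I) (he : Set.InjOn e I)
    (he' : Set.InjOn e' I) (hγ : ∀ a b, a ≠ b → ∀ i ∈ I, ∀ j ∈ I, γ a i ≠ γ b j)
    (h0 : ∀ i ∈ I, col (p i) = γ 0 i) (h1 : ∀ i ∈ I, col (p' i) = γ 1 i)
    (h2 : ∀ i ∈ I, col (e i) = γ 2 i) (h3 : ∀ i ∈ I, col (e' i) = γ 3 i) :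
    (reservePoints p p' e e' I).Nodup := by
  have hnd : ∀ f : ι → G, Set.InjOn f I → (I.val.map f).Nodup := fun f hf =>
    I.nodup.map_on fun a ha b hb h => hf ha hb h
  have hdis : ∀ (a b : Fin 4) (f g : ι → G), a ≠ b → (∀ i ∈ I, col (f i) = γ a i) →
      (∀ i ∈ I, col (g i) = γ b i) → Disjoint (I.val.map f) (I.val.map g) := by
    intro a b f g hab hf hg
    rw [Multiset.disjoint_left]
    intro x hx hx'
    obtain ⟨i, hi, rfl⟩ := Multiset.mem_map.1 hx
    obtain ⟨j, hj, hij⟩ := Multiset.mem_map.1 hx'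
    exact hγ a b hab i hi j hj (by rw [← hf i hi, ← hg j hj, hij])
  rw [reservePoints_eq_map_add, Multiset.nodup_add, Multiset.nodup_add, Multiset.nodup_add,
    Multiset.disjoint_add_left, Multiset.disjoint_add_left, Multiset.disjoint_add_left]
  exact ⟨⟨⟨hnd p hp, hnd p' hp', hdis 0 1 p p' (by decide) h0 h1⟩, hnd e he,
    hdis 0 2 p e (by decide) h0 h2, hdis 1 2 p' e (by decide) h1 h2⟩, hnd e' he',
    ⟨hdis 0 3 p e' (by decide) h0 h3, hdis 1 3 p' e' (by decide) h1 h3⟩,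
    hdis 2 3 e e' (by decide) h2 h3⟩

end Families

section Degenerate

variable {G : Type*} [AddCommGroup G] [Fintype G]

/-- The `t` that can be written in more than `E` ways as `a + a`. -/
noncomputable def degenerateSums (G : Type*) [AddCommGroup G] [Fintype G] (E : ℝ) : Finset G :=
  Finset.univ.filter fun t => E < ((Finset.univ.filter fun a : G => a = t - a).card : ℝ)

theorem card_halves_le {E : ℝ} {t : G} (ht : t ∉ degenerateSums G E) :
    ((Finset.univ.filter fun a : G => a = t - a).card : ℝ) ≤ E := by
  simpa [degenerateSums] using ht

theorem card_degenerateSums_mul_le (E : ℝ) :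
    ((degenerateSums G E).card : ℝ) * E ≤ Fintype.card G := by
  have h := Finset.card_eq_sum_card_fiberwise (f := fun a : G => a + a)
    (s := Finset.univ) (t := Finset.univ) (fun _ _ => Finset.mem_coe.2 (Finset.mem_univ _))
  calc ((degenerateSums G E).card : ℝ) * E = ∑ t ∈ degenerateSums G E, E := by simp
    _ ≤ ∑ t ∈ degenerateSums G E, ((Finset.univ.filter fun a : G => a + a = t).card : ℝ) := by
        refine Finset.sum_le_sum fun t ht => ?_
        refine (Finset.mem_filter.1 ht).2.le.trans (le_of_eq ?_)
        congr 2
        ext a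
        simp [eq_sub_iff_add_eq]
    _ ≤ ∑ t : G, ((Finset.univ.filter fun a : G => a + a = t).card : ℝ) :=
        Finset.sum_le_sum_of_subset_of_nonneg (Finset.subset_univ _) fun _ _ _ => by positivity
    _ = Fintype.card G := by
        rw [← Finset.card_univ, h]
        push_cast
        rfl

theorem card_le_card_pairSet_univ {E : ℝ} {t : G} (ht : t ∉ degenerateSums G E) :
    (Fintype.card G : ℝ) ≤ (pairSet (Finset.univ : Finset G) t).card + E := by
  have h1 := card_halves_le ht
  have hsub : (Finset.univ : Finset G) ⊆ pairSet Finset.univ t ∪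
      Finset.univ.filter fun a : G => a = t - a := by
    intro a _
    simp only [pairSet, Finset.mem_union, Finset.mem_filter, Finset.mem_univ, true_and]
    tauto
  have h2 := (Finset.card_le_card hsub).trans (Finset.card_union_le _ _)
  rw [Finset.card_univ] at h2
  have h3 : (Fintype.card G : ℝ) ≤ (pairSet (Finset.univ : Finset G) t).card +
    (Finset.univ.filter fun a : G => a = t - a).card := by exact_mod_cast h2
  linarith

/-- The `h` for which the configurations counted by `quadSet _ t₁ t₂ h` are often degenerate. -/
noncomputable def degenerateShifts (E : ℝ) (t₁ t₂ : G) : Finset G :=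
  {t₁, t₂} ∪ Finset.univ.filter fun h => t₁ - t₂ + h ∈ degenerateSums G E

theorem card_degenerateShifts_le (E : ℝ) (t₁ t₂ : G) :
    (degenerateShifts E t₁ t₂).card ≤ (degenerateSums G E).card + 2 := by
  refine (Finset.card_union_le _ _).trans ?_
  have h1 := Finset.card_le_two (a := t₁) (b := t₂)
  have h2 := card_filter_mem_le_of_injOn (K := Finset.univ) (f := fun h => t₁ - t₂ + h)
    (fun a _ b _ hab => by simpa using hab) (degenerateSums G E)
  omega

theorem card_le_card_quadSet_univ {E : ℝ} {t₁ t₂ h : G} (ht₁ : t₁ ∉ degenerateSums G E)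
    (ht₂ : t₂ ∉ degenerateSums G E) (hh : h ∉ degenerateSums G E)
    (hs : h ∉ degenerateShifts E t₁ t₂) :
    (Fintype.card G : ℝ) ≤ (quadSet (Finset.univ : Finset G) t₁ t₂ h).card + 4 * E := by
  simp only [degenerateShifts, Finset.mem_union, Finset.mem_insert, Finset.mem_singleton,
    Finset.mem_filter, Finset.mem_univ, true_and, not_or] at hs
  have h1 := card_halves_le ht₁
  have h2 := card_halves_le ht₂
  have h3 := card_halves_le hh
  have h4 := card_halves_le hs.2
  have h5 := card_filter_mem_le_of_injOn (K := (Finset.univ : Finset G)) (f := fun a => h - a)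
    (fun a _ b _ hab => by simpa using hab) (Finset.univ.filter fun a : G => a = t₂ - a)
  simp only [Finset.mem_filter, Finset.mem_univ, true_and] at h5
  have hsub : (Finset.univ : Finset G) ⊆ quadSet Finset.univ t₁ t₂ h ∪
      ((Finset.univ.filter fun a : G => a = t₁ - a) ∪
      (Finset.univ.filter fun a : G => h - a = t₂ - (h - a)) ∪
      ((Finset.univ.filter fun a : G => a = h - a) ∪
      (Finset.univ.filter fun a : G => a = t₁ - t₂ + h - a))) := by
    intro a _
    simp only [quadSet, Finset.mem_union, Finset.mem_filter, Finset.mem_univ, true_and,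
      Finset.subset_univ]
    by_contra! hcon
    obtain ⟨hc, ⟨n1, n2⟩, n3, n4⟩ := hcon
    refine hc ?_
    have m1 : a ≠ t₂ - (h - a) := fun he => hs.1.2 (by
      have : t₂ - (h - a) = a + (t₂ - h) := by abel
      rw [this] at he
      exact (sub_eq_zero.1 (left_eq_add.1 he)).symm)
    have m2 : t₁ - a ≠ h - a := fun he => hs.1.1 (sub_left_injective he).symm
    have m3 : t₁ - a ≠ t₂ - (h - a) := fun he => n4 (by
      have : t₁ - t₂ + h - a = (t₁ - a) - t₂ + h := by abel
      rw [this, he]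
      abel)
    rw [Finset.card_insert_of_notMem, Finset.card_insert_of_notMem, Finset.card_pair n2]
    · simp [m2, m3]
    · simp [n1, n3, m1]
  have h6 := (Finset.card_le_card hsub).trans (Finset.card_union_le _ _)
  have h7 := Finset.card_union_le ((Finset.univ.filter fun a : G => a = t₁ - a) ∪
      (Finset.univ.filter fun a : G => h - a = t₂ - (h - a)))
      ((Finset.univ.filter fun a : G => a = h - a) ∪
      (Finset.univ.filter fun a : G => a = t₁ - t₂ + h - a))
  have h8 := Finset.card_union_le (Finset.univ.filter fun a : G => a = t₁ - a)
      (Finset.univ.filter fun a : G => h - a = t₂ - (h - a))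
  have h9 := Finset.card_union_le (Finset.univ.filter fun a : G => a = h - a)
      (Finset.univ.filter fun a : G => a = t₁ - t₂ + h - a)
  rw [Finset.card_univ] at h6
  have h10 : Fintype.card G ≤ (quadSet (Finset.univ : Finset G) t₁ t₂ h).card +
      ((Finset.univ.filter fun a : G => a = t₁ - a).card +
      (Finset.univ.filter fun a : G => a = t₂ - a).card +
      ((Finset.univ.filter fun a : G => a = h - a).card +
      (Finset.univ.filter fun a : G => a = t₁ - t₂ + h - a).card)) := by omega
  have h11 : (Fintype.card G : ℝ) ≤ (quadSet (Finset.univ : Finset G) t₁ t₂ h).card +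
      ((Finset.univ.filter fun a : G => a = t₁ - a).card +
      (Finset.univ.filter fun a : G => a = t₂ - a).card +
      ((Finset.univ.filter fun a : G => a = h - a).card +
      (Finset.univ.filter fun a : G => a = t₁ - t₂ + h - a).card)) := by exact_mod_cast h10
  linarith

theorem Typical.le_card_pairSet {X : Finset G} {p E : ℝ} (hX : Typical X p E) (hp : 0 ≤ p)
    (hp1 : p ≤ 1) (hE : 0 ≤ E) {t : G} (ht : t ∉ degenerateSums G E) :
    p ^ 2 * Fintype.card G - 2 * E ≤ (pairSet X t).card := by
  have h1 := card_le_card_pairSet_univ ht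
  have h2 := (abs_le.1 (hX.pair t)).1
  have hp2 : p ^ 2 ≤ 1 := pow_le_one₀ hp hp1
  have h3 := mul_le_mul_of_nonneg_left h1 (sq_nonneg p)
  nlinarith

theorem Typical.card_pairSet_le {X : Finset G} {p E : ℝ} (hX : Typical X p E) (t : G) :
    ((pairSet X t).card : ℝ) ≤ p ^ 2 * Fintype.card G + E := by
  have h2 := (abs_le.1 (hX.pair t)).2
  have h1 : ((pairSet (Finset.univ : Finset G) t).card : ℝ) ≤ Fintype.card G := by
    exact_mod_cast Finset.card_le_univ _
  have h3 := mul_le_mul_of_nonneg_left h1 (sq_nonneg p)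
  linarith

theorem Typical.le_card_quadSet {X : Finset G} {p E : ℝ} (hX : Typical X p E) (hp : 0 ≤ p)
    (hp1 : p ≤ 1) (hE : 0 ≤ E) {t₁ t₂ h : G} (ht₁ : t₁ ∉ degenerateSums G E)
    (ht₂ : t₂ ∉ degenerateSums G E) (hh : h ∉ degenerateSums G E)
    (hs : h ∉ degenerateShifts E t₁ t₂) :
    p ^ 4 * Fintype.card G - 5 * E ≤ (quadSet X t₁ t₂ h).card := by
  have h1 := card_le_card_quadSet_univ ht₁ ht₂ hh hs
  have h2 := (abs_le.1 (hX.quad t₁ t₂ h)).1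
  have hp2 : p ^ 4 ≤ 1 := pow_le_one₀ hp hp1
  have h3 := mul_le_mul_of_nonneg_left h1 (by positivity : 0 ≤ p ^ 4)
  nlinarith

/-- The pairs in `X` of sum `t` whose members have colours `c₁` and `c₂`. -/
noncomputable def colouredPairs {r : ℕ} (col : G → Finset (Fin r)) (X : Finset G) (t : G)
    (c₁ c₂ : Finset (Fin r)) :
    Finset G :=
  (pairSet X t).filter fun a => col a = c₁ ∧ col (t - a) = c₂

theorem exists_base_sum {S : Finset G} {E : ℝ} (α : G) (hS : 2 * ((S.card : ℝ) + 1) < E) :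
    ∃ t₀ : G, ∀ c ∈ Finset.insertNone S, t₀ + c.getD 0 ∉ degenerateSums G E ∧
      α - t₀ - c.getD 0 ∉ degenerateSums G E := by
  by_contra! hcon
  have hE : 0 < E := lt_of_le_of_lt (by positivity) hS
  have hsub : (Finset.univ : Finset G) ⊆ (Finset.insertNone S).biUnion fun c =>
      (Finset.univ.filter fun t => t + c.getD 0 ∈ degenerateSums G E) ∪
      (Finset.univ.filter fun t => α - t - c.getD 0 ∈ degenerateSums G E) := by
    intro t _
    obtain ⟨c, hc, h⟩ := hcon t
    simp only [Finset.mem_biUnion, Finset.mem_union, Finset.mem_filter, Finset.mem_univ, true_and]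
    exact ⟨c, hc, by tauto⟩
  have h1 := (Finset.card_le_card hsub).trans (Finset.card_biUnion_le_card_mul _ _
    (2 * (degenerateSums G E).card) fun c _ => by
      have h1 := card_filter_mem_le_of_injOn (K := Finset.univ) (f := fun t => t + c.getD 0)
        (fun a _ b _ hab => by simpa using hab) (degenerateSums G E)
      have h2 := card_filter_mem_le_of_injOn (K := Finset.univ) (f := fun t => α - t - c.getD 0)
        (fun a _ b _ hab => by simpa using hab) (degenerateSums G E)
      have h3 := Finset.card_union_le
        (Finset.univ.filter fun t => t + c.getD 0 ∈ degenerateSums G E)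
        (Finset.univ.filter fun t => α - t - c.getD 0 ∈ degenerateSums G E)
      omega)
  rw [Finset.card_univ, Finset.card_insertNone] at h1
  have h2 : (Fintype.card G : ℝ) ≤ (S.card + 1) * (2 * (degenerateSums G E).card) := by
    exact_mod_cast h1
  have h3 := card_degenerateSums_mul_le (G := G) E
  have h4 : (0 : ℝ) < Fintype.card G := by exact_mod_cast Fintype.card_pos
  have h5 : (0 : ℝ) ≤ (degenerateSums G E).card := Nat.cast_nonneg _
  nlinarith

theorem card_filter_sub_mem_trim {A A' B B' : Finset G} (h : G) (hA : A' ⊆ A) (hB : B' ⊆ B) :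
    (A.filter fun a => h - a ∈ B).card + A'.card + B'.card ≤
      (A'.filter fun a => h - a ∈ B').card + A.card + B.card := by
  have hsub : (A.filter fun a => h - a ∈ B) ⊆ (A'.filter fun a => h - a ∈ B') ∪
      ((A \ A') ∪ Finset.univ.filter fun a => h - a ∈ B \ B') := by
    intro a
    simp only [Finset.mem_union, Finset.mem_filter, Finset.mem_univ, true_and, Finset.mem_sdiff]
    tauto
  have h1 := (Finset.card_le_card hsub).trans (Finset.card_union_le _ _)
  have h2 := Finset.card_union_le (A \ A') (Finset.univ.filter fun a => h - a ∈ B \ B')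
  have h3 := card_filter_mem_le_of_injOn (K := Finset.univ) (f := fun a => h - a)
        (fun a _ b _ hab => by simpa using hab) (B \ B')
  rw [Finset.card_sdiff_of_subset hA] at h2
  rw [Finset.card_sdiff_of_subset hB] at h3
  have := Finset.card_le_card hA
  have := Finset.card_le_card hB
  omega

end Degenerate

section Pool

variable {G : Type*} [AddCommGroup G] [Fintype G]

theorem exists_injOn_finset_fin {κ : Type*} (T : Finset κ) {r : ℕ} (h : T.card ≤ 2 ^ r) :
    ∃ γ : κ → Finset (Fin r), Set.InjOn γ T := by
  obtain ⟨f⟩ := Function.Embedding.nonempty_of_card_le (α := T) (β := Finset (Fin r))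
    (by simpa using h)
  refine ⟨fun x => if hx : x ∈ T then f ⟨x, hx⟩ else ∅, fun a ha b hb hab => ?_⟩
  have ha' : a ∈ T := ha
  have hb' : b ∈ T := hb
  simp only [ha', hb', dif_pos] at hab
  simpa using f.injective hab

set_option maxHeartbeats 2000000 in
/-- A typical set contains a reserve. -/
theorem exists_reserve {X S : Finset G} {p E : ℝ} (α : G) {r B : ℕ} (hX : Typical X p E)
    (hp : 0 < p) (hp1 : p ≤ 1) (hE : 1 ≤ E) (hr : 1 ≤ r) (hS : 4 * (S.card + 1) ≤ 2 ^ r)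
    (hSE : 2 * ((S.card : ℝ) + 1) < E) (hCE : 64 * ((2 : ℝ) ^ r) ^ 4 * E ≤ p ^ 4 * Fintype.card G)
    (hprob : 4 * ((Fintype.card G : ℝ) ^ 3 * ((2 : ℝ) ^ r) ^ 4) *
      Real.exp (-(E ^ 2 / (64 * (X.card * r : ℕ)))) < 1)
    (hB : 2 * (B : ℝ) + 4 * (S.card + 1) * (Fintype.card G / E + 2) <
      p ^ 4 * Fintype.card G / (2 * ((2 : ℝ) ^ r) ^ 4)) :
    ∃ (t₀ : G) (Bad : Finset G) (I : Finset (Option G × G)) (cls : Option G × G → Option G)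
      (a a' e e' : Option G × G → G), Reserve α t₀ S Bad B I cls a a' e e' ∧
      (reservePoints a a' e e' I).Nodup ∧ (∀ x ∈ reservePoints a a' e e' I, x ∈ X) ∧
      ((reservePoints a a' e e' I).card : ℝ) ≤
        4 * (S.card + 1) * (p ^ 2 * Fintype.card G / ((2 : ℝ) ^ r) ^ 2) := by
  set n : ℝ := (Fintype.card G : ℝ) with hn
  set C : ℝ := (2 : ℝ) ^ r with hC
  have hn0 : 0 < n := by rw [hn]; exact_mod_cast Fintype.card_pos
  have hC1 : 1 ≤ C := one_le_pow₀ (by norm_num)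
  have hC4 : 1 ≤ C ^ 4 := one_le_pow₀ hC1
  have hC2 : 1 ≤ C ^ 2 := one_le_pow₀ hC1
  have hE0 : 0 < E := by linarith
  have hp4p2 : p ^ 4 ≤ p ^ 2 := pow_le_pow_of_le_one hp.le hp1 (by norm_num)
  have hp4p : p ^ 4 ≤ p := pow_le_of_le_one hp.le hp1 (by norm_num)
  have hp2 : p ^ 2 ≤ 1 := pow_le_one₀ hp.le hp1
  have hEC : E ≤ C ^ 4 * E := le_mul_of_one_le_left hE0.le hC4
  have hpn : p ^ 4 * n ≤ p * n := mul_le_mul_of_nonneg_right hp4p hn0.le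
  have hEX : E ≤ X.card := by
    have := (abs_le.1 hX.card).1
    nlinarith
  have hXne : X.Nonempty := by
    rw [← Finset.card_pos]
    exact_mod_cast hE0.trans_le hEX
  obtain ⟨col, hcol2, hcol4⟩ := exists_colouring hr hE0.le hEX hprob hXne
  obtain ⟨t₀, ht₀⟩ := exists_base_sum α hSE
  obtain ⟨γ, hγ⟩ := exists_injOn_finset_fin
    (Finset.insertNone S ×ˢ (Finset.univ : Finset (Fin 4))) (r := r) (by
      rw [Finset.card_product, Finset.card_insertNone, Finset.card_univ, Fintype.card_fin]
      omega)
  have hγ' : ∀ c ∈ Finset.insertNone S, ∀ d ∈ Finset.insertNone S, ∀ k l, γ (c, k) = γ (d, l) →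
      c = d ∧ k = l := fun c hc d hd k l h => by
    have := hγ (by simpa using hc) (by simpa using hd) h
    exact Prod.mk.inj this
  -- sizes of the classes
  have hEp : E ≤ p ^ 2 * n / C ^ 2 / 64 := by
    rw [le_div_iff₀ (by norm_num), le_div_iff₀ (by positivity)]
    have h1 : p ^ 4 * n ≤ p ^ 2 * n := mul_le_mul_of_nonneg_right hp4p2 hn0.le
    have h2 : E * 64 * C ^ 2 ≤ E * 64 * C ^ 4 :=
      mul_le_mul_of_nonneg_left (pow_le_pow_right₀ hC1 (by norm_num)) (by positivity)
    linarith
  have hlow : ∀ t ∉ degenerateSums G E, ∀ c₁ c₂,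
      p ^ 2 * n / C ^ 2 - 3 * E ≤ (colouredPairs col X t c₁ c₂).card := by
    intro t ht c₁ c₂
    have h1 := hX.le_card_pairSet hp.le hp1 hE0.le ht
    have h2 := (abs_le.1 (hcol2 t c₁ c₂)).1
    have h3 : (p ^ 2 * n - 2 * E) / C ^ 2 ≤ (pairSet X t).card / C ^ 2 := by gcongr
    have h4 : (2 * E) / C ^ 2 ≤ 2 * E := div_le_self (by linarith) hC2
    rw [sub_div] at h3
    unfold colouredPairs
    linarith
  have hup : ∀ t c₁ c₂, ((colouredPairs col X t c₁ c₂).card : ℝ) ≤ p ^ 2 * n / C ^ 2 + 2 * E := by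
    intro t c₁ c₂
    have h1 := hX.card_pairSet_le t
    have h2 := (abs_le.1 (hcol2 t c₁ c₂)).2
    have h3 : ((pairSet X t).card : ℝ) / C ^ 2 ≤ (p ^ 2 * n + E) / C ^ 2 := by gcongr
    have h4 : E / C ^ 2 ≤ E := div_le_self (by linarith) hC2
    rw [add_div] at h3
    unfold colouredPairs
    linarith
  set m : ℕ := ⌈p ^ 2 * n / C ^ 2 - 3 * E⌉₊ with hm
  have hm1 : p ^ 2 * n / C ^ 2 - 3 * E ≤ m := Nat.le_ceil _
  have hm2 : (m : ℝ) ≤ p ^ 2 * n / C ^ 2 := by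
    have := Nat.ceil_lt_add_one (a := p ^ 2 * n / C ^ 2 - 3 * E) (by linarith)
    linarith
  have htrim : ∀ t ∉ degenerateSums G E, ∀ c₁ c₂, ∃ A ⊆ colouredPairs col X t c₁ c₂, A.card = m :=
    fun t ht c₁ c₂ => Finset.exists_subset_card_eq (Nat.ceil_le.2 (hlow t ht c₁ c₂))
  have hPex : ∀ c ∈ Finset.insertNone S,
      ∃ A ⊆ colouredPairs col X (t₀ + c.getD 0) (γ (c, 0)) (γ (c, 1)),
      A.card = m := fun c hc => htrim _ (ht₀ c hc).1 _ _
  have hQex : ∀ c ∈ Finset.insertNone S,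
      ∃ A ⊆ colouredPairs col X (α - t₀ - c.getD 0) (γ (c, 2)) (γ (c, 3)), A.card = m :=
    fun c hc => htrim _ (ht₀ c hc).2 _ _
  choose! P hPsub hPcard using hPex
  choose! Q hQsub hQcard using hQex
  have hφex : ∀ c ∈ Finset.insertNone S, ∃ φ : G → G, Set.BijOn φ (P c) (Q c) := by
    intro c hc
    exact (Set.finite_coe_iff.1 inferInstance : (P c : Set G).Finite).exists_bijOn_of_encard_eq
      (by rw [Set.encard_coe_eq_coe_finsetCard, Set.encard_coe_eq_coe_finsetCard, hPcard c hc,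
          hQcard c hc])
  choose! φ hφ using hφex
  -- rich configurations
  have hrich : ∀ t₁ ∉ degenerateSums G E, ∀ t₂ ∉ degenerateSums G E, ∀ h ∉ degenerateSums G E,
      h ∉ degenerateShifts E t₁ t₂ → ∀ c₁ c₂ c₃ c₄, ∀ A ⊆ colouredPairs col X t₁ c₁ c₂,
      ∀ A' ⊆ colouredPairs col X t₂ c₃ c₄, A.card = m → A'.card = m →
      p ^ 4 * n / (2 * C ^ 4) ≤ (A.filter fun a => h - a ∈ A').card := by
    intro t₁ ht₁ t₂ ht₂ h hh hs c₁ c₂ c₃ c₄ A hA A' hA' hAm hAm'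
    have h1 := hX.le_card_quadSet hp.le hp1 hE0.le ht₁ ht₂ hh hs
    have h2 := (abs_le.1 (hcol4 t₁ t₂ h c₁ c₂ c₃ c₄)).1
    have h3 : (p ^ 4 * n - 5 * E) / C ^ 4 ≤ (quadSet X t₁ t₂ h).card / C ^ 4 := by gcongr
    have h4 : (5 * E) / C ^ 4 ≤ 5 * E := div_le_self (by linarith) hC4
    rw [sub_div] at h3
    have hsub : ((quadSet X t₁ t₂ h).filter fun a => col a = c₁ ∧
        col (t₁ - a) = c₂ ∧ col (h - a) = c₃ ∧ col (t₂ - (h - a)) = c₄) ⊆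
        (colouredPairs col X t₁ c₁ c₂).filter fun a => h - a ∈ colouredPairs col X t₂ c₃ c₄ := by
      intro a ha
      simp only [quadSet, Finset.mem_filter, Finset.insert_subset_iff,
        Finset.singleton_subset_iff] at ha
      obtain ⟨⟨haX, ⟨-, g1, g2, g3⟩, hc4⟩, k1, k2, k3, k4⟩ := ha
      obtain ⟨n1, -, -, -, -, n6⟩ := ne_of_card_four hc4
      simp only [colouredPairs, pairSet, Finset.mem_filter]
      exact ⟨⟨⟨haX, g1, n1⟩, k1, k2⟩, ⟨g2, g3, n6⟩, k3, k4⟩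
    have h5 : (((quadSet X t₁ t₂ h).filter fun a => col a = c₁ ∧
        col (t₁ - a) = c₂ ∧ col (h - a) = c₃ ∧ col (t₂ - (h - a)) = c₄).card : ℝ) ≤
        ((colouredPairs col X t₁ c₁ c₂).filter fun a =>
            h - a ∈ colouredPairs col X t₂ c₃ c₄).card := by
      exact_mod_cast Finset.card_le_card hsub
    have h6 : (((colouredPairs col X t₁ c₁ c₂).filter fun a =>
        h - a ∈ colouredPairs col X t₂ c₃ c₄).card : ℝ) + m + m ≤
        (A.filter fun a => h - a ∈ A').card + (colouredPairs col X t₁ c₁ c₂).card +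
          (colouredPairs col X t₂ c₃ c₄).card := by
      have := card_filter_sub_mem_trim h hA hA'
      rw [hAm, hAm'] at this
      exact_mod_cast this
    have h7 := hup t₁ c₁ c₂
    have h8 := hup t₂ c₃ c₄
    have h9 : 32 * E ≤ p ^ 4 * n / (2 * C ^ 4) := by
      rw [le_div_iff₀ (by positivity)]
      linarith
    have h10 : p ^ 4 * n / C ^ 4 = p ^ 4 * n / (2 * C ^ 4) + p ^ 4 * n / (2 * C ^ 4) := by
      field_simp
      ring
    linarith
  -- bad sums
  set Bad : Finset G := degenerateSums G E ∪
    (S.biUnion fun x => degenerateShifts E (t₀ + x) (α - t₀) ∪ degenerateShifts E (α - t₀ - x) t₀)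
    with hBad
  have hBadcard : (Bad.card : ℝ) ≤ 2 * (S.card + 1) * (n / E + 2) := by
    have h1 := Finset.card_union_le (degenerateSums G E) (S.biUnion fun x =>
      degenerateShifts E (t₀ + x) (α - t₀) ∪ degenerateShifts E (α - t₀ - x) t₀)
    have h2 := Finset.card_biUnion_le_card_mul S (fun x =>
      degenerateShifts E (t₀ + x) (α - t₀) ∪ degenerateShifts E (α - t₀ - x) t₀)
      (2 * ((degenerateSums G E).card + 2)) fun x _ => by
        have h1 := Finset.card_union_le (degenerateShifts E (t₀ + x) (α - t₀))
          (degenerateShifts E (α - t₀ - x) t₀)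
        have h2 := card_degenerateShifts_le E (t₀ + x) (α - t₀)
        have h3 := card_degenerateShifts_le E (α - t₀ - x) t₀
        omega
    have h3 : (Bad.card : ℝ) ≤ (degenerateSums G E).card +
        S.card * (2 * ((degenerateSums G E).card + 2)) := by
      exact_mod_cast h1.trans (Nat.add_le_add_left h2 _)
    have h4 : ((degenerateSums G E).card : ℝ) ≤ n / E :=
      (le_div_iff₀ hE0).2 (card_degenerateSums_mul_le E)
    have h5 : (0 : ℝ) ≤ S.card := Nat.cast_nonneg _
    have h6 : (0 : ℝ) ≤ (degenerateSums G E).card := Nat.cast_nonneg _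
    nlinarith
  have hB0 : (0 : ℝ) ≤ B := Nat.cast_nonneg _
  have hBad0 : (0 : ℝ) ≤ Bad.card := Nat.cast_nonneg _
  have hdeg : ∀ h ∉ Bad, h ∉ degenerateSums G E := fun h hh h' =>
    hh (Finset.mem_union_left _ h')
  have hshift : ∀ h ∉ Bad, ∀ x ∈ S, h ∉ degenerateShifts E (t₀ + x) (α - t₀) ∧
      h ∉ degenerateShifts E (α - t₀ - x) t₀ := fun h hh x hx => by
    simp only [hBad, Finset.mem_union, Finset.mem_biUnion, not_or, not_exists, not_and] at hh
    exact hh.2 x hx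
  have hnone : none ∈ Finset.insertNone S := Finset.none_mem_insertNone
  have hsome : ∀ x ∈ S, some x ∈ Finset.insertNone S := fun x hx => Finset.some_mem_insertNone.2 hx
  have htn := ht₀ none hnone
  have hPn := hPsub none hnone
  have hQn := hQsub none hnone
  simp only [Option.getD_none, add_zero, sub_zero] at htn hPn hQn
  have hres : Reserve α t₀ S Bad B (familyIndex S P) Prod.fst Prod.snd
      (fun i => t₀ + i.1.getD 0 - i.2) (fun i => φ i.1 i.2)
      (fun i => α - t₀ - i.1.getD 0 - φ i.1 i.2) := by
    refine Reserve.of_families hφ ?_ (fun x hx h hh => ?_) (fun x hx h hh => ?_)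
    · rw [hPcard none hnone]
      have h1 : p ^ 4 * n / (2 * C ^ 4) ≤ p ^ 2 * n / C ^ 2 / 2 := by
        rw [div_div]
        refine div_le_div₀ (by positivity) (mul_le_mul_of_nonneg_right hp4p2 hn0.le)
            (by positivity) ?_
        have : C ^ 2 ≤ C ^ 4 := pow_le_pow_right₀ hC1 (by norm_num)
        linarith
      have : (B : ℝ) + 2 * Bad.card < m := by linarith
      exact_mod_cast this
    · have h1 := hrich (t₀ + x) (ht₀ _ (hsome x hx)).1 (α - t₀) htn.2 h (hdeg h hh)
        (hshift h hh x hx).1 _ _ _ _ _ (hPsub _ (hsome x hx)) _ hQn (hPcard _ (hsome x hx))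
        (hQcard _ hnone)
      have : 2 * (B : ℝ) + Bad.card < ((P (some x)).filter fun a => h - a ∈ Q none).card := by
        linarith
      exact_mod_cast this
    · have h1 := hrich (α - t₀ - x) (ht₀ _ (hsome x hx)).2 t₀ htn.1 h (hdeg h hh)
        (hshift h hh x hx).2 _ _ _ _ _ (hQsub _ (hsome x hx)) _ hPn (hQcard _ (hsome x hx))
        (hPcard _ hnone)
      have : 2 * (B : ℝ) + Bad.card < ((Q (some x)).filter fun a => h - a ∈ P none).card := by
        linarith
      exact_mod_cast this
  have hmemP : ∀ i ∈ familyIndex S P, (i.2 ∈ X ∧ t₀ + i.1.getD 0 - i.2 ∈ X) ∧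
      col i.2 = γ (i.1, 0) ∧ col (t₀ + i.1.getD 0 - i.2) = γ (i.1, 1) := fun i hi => by
    obtain ⟨h1, h2⟩ := mem_familyIndex.1 hi
    have h3 := hPsub _ h1 h2
    simp only [colouredPairs, pairSet, Finset.mem_filter] at h3
    exact ⟨⟨h3.1.1, h3.1.2.1⟩, h3.2⟩
  have hmemQ : ∀ i ∈ familyIndex S P, (φ i.1 i.2 ∈ X ∧ α - t₀ - i.1.getD 0 - φ i.1 i.2 ∈ X) ∧
      col (φ i.1 i.2) = γ (i.1, 2) ∧ col (α - t₀ - i.1.getD 0 - φ i.1 i.2) = γ (i.1, 3) :=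
    fun i hi => by
    obtain ⟨h1, h2⟩ := mem_familyIndex.1 hi
    have h3 := hQsub _ h1 ((hφ _ h1).mapsTo h2)
    simp only [colouredPairs, pairSet, Finset.mem_filter] at h3
    exact ⟨⟨h3.1.1, h3.1.2.1⟩, h3.2⟩
  have hinj : ∀ (k : Fin 4) (f : Option G × G → G),
      (∀ i ∈ familyIndex S P, col (f i) = γ (i.1, k)) →
      (∀ i ∈ familyIndex S P, ∀ j ∈ familyIndex S P, i.1 = j.1 → f i = f j → i.2 = j.2) →
      Set.InjOn f (familyIndex S P) := by
    intro k f hf hfi i hi j hj hij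
    have h1 := (hγ' _ (mem_familyIndex.1 hi).1 _ (mem_familyIndex.1 hj).1 k k
      (by rw [← hf i hi, ← hf j hj, hij])).1
    exact Prod.ext h1 (hfi i hi j hj h1 hij)
  refine ⟨t₀, Bad, familyIndex S P, Prod.fst, Prod.snd, _, _, _, hres, ?_, ?_, ?_⟩
  · refine nodup_reservePoints (col := col) (γ := fun k i => γ (i.1, k)) ?_ ?_ ?_ ?_ ?_
      (fun i hi => (hmemP i hi).2.1) (fun i hi => (hmemP i hi).2.2)
      (fun i hi => (hmemQ i hi).2.1) (fun i hi => (hmemQ i hi).2.2)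
    · exact hinj 0 _ (fun i hi => (hmemP i hi).2.1) fun i _ j _ _ h => h
    · exact hinj 1 _ (fun i hi => (hmemP i hi).2.2) fun i _ j _ h h' => by
        rw [h] at h'
        simpa using h'
    · exact hinj 2 _ (fun i hi => (hmemQ i hi).2.1) fun i hi j hj h h' => by
        have h1 := (mem_familyIndex.1 hi)
        have h2 := (mem_familyIndex.1 hj)
        rw [h] at h' h1
        exact (hφ _ h2.1).injOn h1.2 h2.2 h'
    · exact hinj 3 _ (fun i hi => (hmemQ i hi).2.2) fun i hi j hj h h' => by
        have h1 := (mem_familyIndex.1 hi)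
        have h2 := (mem_familyIndex.1 hj)
        rw [h] at h' h1
        exact (hφ _ h2.1).injOn h1.2 h2.2 (by simpa using h')
    · intro a b hab i hi j hj h
      exact hab (hγ' _ (mem_familyIndex.1 hi).1 _ (mem_familyIndex.1 hj).1 a b h).2
  · intro x hx
    rw [reservePoints_eq_map_add] at hx
    simp only [Multiset.mem_add, Multiset.mem_map, Finset.mem_val] at hx
    rcases hx with ((⟨i, hi, rfl⟩ | ⟨i, hi, rfl⟩) | ⟨i, hi, rfl⟩) | ⟨i, hi, rfl⟩
    · exact (hmemP i hi).1.1
    · exact (hmemP i hi).1.2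
    · exact (hmemQ i hi).1.1
    · exact (hmemQ i hi).1.2
  · have h1 : (familyIndex S P).card ≤ (S.card + 1) * m := by
      rw [familyIndex, ← Finset.card_insertNone]
      exact Finset.card_biUnion_le_card_mul _ _ _ fun c hc =>
        Finset.card_image_le.trans (hPcard c hc).le
    have h2 : ((familyIndex S P).card : ℝ) ≤ (S.card + 1) * m := by exact_mod_cast h1
    rw [reservePoints_eq_map_add]
    simp only [Multiset.card_add, Multiset.card_map, Finset.card_val]
    push_cast
    have h3 : ((S.card : ℝ) + 1) * m ≤ (S.card + 1) * (p ^ 2 * n / C ^ 2) := by gcongr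
    linarith

end Pool

section Assembly

theorem QuadSum.append {G : Type*} [AddCommGroup G] {α : G} {m₁ m₂ : Multiset G}
    (h₁ : QuadSum α m₁) (h₂ : QuadSum α m₂) : QuadSum α (m₁ + m₂) := by
  induction h₁ with
  | zero => simpa using h₂
  | add h _ ih =>
    have := QuadSum.add h ih
    simpa only [add_assoc] using this

theorem QuadSum.exists_card_sum {G : Type*} [AddCommGroup G] {α : G} {m : Multiset G}
    (h : QuadSum α m) : ∃ k : ℕ, m.card = 4 * k ∧ m.sum = k • α := by
  induction h with
  | zero => exact ⟨0, by simp⟩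
  | add h _ ih =>
    obtain ⟨k, hk, hs⟩ := ih
    refine ⟨k + 1, ?_, ?_⟩
    · simp only [Multiset.card_add, Multiset.card_singleton, hk]
      ring
    · simp only [Multiset.sum_add, Multiset.sum_singleton, h, hs]
      rw [succ_nsmul, add_comm]

theorem quadSum_biUnion {G : Type*} [AddCommGroup G] {α : G} {M : Finset (Finset G)}
    (hM : ∀ e ∈ M, e.card = 4 ∧ ∑ x ∈ e, x = α)
    (hd : ∀ e ∈ M, ∀ f ∈ M, e ≠ f → Disjoint e f) : QuadSum α (M.biUnion id).val := by
  induction M using Finset.induction_on with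
  | empty => exact QuadSum.zero
  | insert e M he ih =>
    have hdis : Disjoint e (M.biUnion id) := by
      rw [Finset.disjoint_biUnion_right]
      exact fun f hf => hd e (Finset.mem_insert_self _ _) f (Finset.mem_insert_of_mem hf)
        fun h => he (h ▸ hf)
    have hval : ((insert e M).biUnion id).val = e.val + (M.biUnion id).val := by
      rw [Finset.biUnion_insert, id, ← Finset.disjUnion_eq_union _ _ hdis]
      rfl
    rw [hval]
    obtain ⟨hc, hs⟩ := hM e (Finset.mem_insert_self _ _)
    obtain ⟨x, y, z, w, hv⟩ := Multiset.card_eq_four.1 hc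
    have hsum : e.val.sum = α := (Finset.sum_val e).trans hs
    rw [hv] at hsum ⊢
    have := QuadSum.add (a := x) (b := y) (c := z) (d := w) (by simpa [add_assoc] using hsum)
      (ih (fun f hf => hM f (Finset.mem_insert_of_mem hf))
        fun f hf g hg => hd f (Finset.mem_insert_of_mem hf) g (Finset.mem_insert_of_mem hg))
    simpa using this

theorem card_pairSet_sdiff_ge {G : Type*} [AddCommGroup G] (X Y : Finset G) (t : G) :
    (pairSet X t).card ≤ (pairSet (X \ Y) t).card + 2 * Y.card := by
  have hsub : pairSet X t ⊆ pairSet (X \ Y) t ∪ (Y ∪ X.filter fun a => t - a ∈ Y) := by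
    intro a
    simp only [pairSet, Finset.mem_union, Finset.mem_filter, Finset.mem_sdiff]
    tauto
  have h1 := (Finset.card_le_card hsub).trans (Finset.card_union_le _ _)
  have h2 := Finset.card_union_le Y (X.filter fun a => t - a ∈ Y)
  have h3 := card_filter_mem_le_of_injOn (K := X) (f := fun a => t - a)
    (fun a _ b _ hab => by simpa using hab) Y
  omega

theorem pow_mul_exp_neg_le {y T : ℝ} (hy : 4001 ≤ y) (hT : y ^ 2 ≤ T) :
    y ^ 4000 * Real.exp (-T) ≤ Real.exp (-y) := by
  have h1 : y ≤ Real.exp y := by linarith [Real.add_one_le_exp y]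
  have h2 : y ^ 4000 ≤ Real.exp (4000 * y) := by
    calc y ^ 4000 ≤ Real.exp y ^ 4000 := pow_le_pow_left₀ (by linarith) h1 _
      _ = Real.exp (4000 * y) := by rw [← Real.exp_nat_mul]; norm_num
  calc y ^ 4000 * Real.exp (-T) ≤ Real.exp (4000 * y) * Real.exp (-T) := by gcongr
    _ = Real.exp (4000 * y - T) := by rw [← Real.exp_add]; ring_nf
    _ ≤ Real.exp (-y) := Real.exp_le_exp.2 (by nlinarith)

/-- A set containing a reserve can be partitioned once its remaining part has a nearly perfect
matching. -/
theorem Reserve.exists_partition {G ι : Type*} [AddCommGroup G] {α t₀ : G} {S Bad : Finset G}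
    {B : ℕ} {I : Finset ι} {cls : ι → Option G} {a a' e e' : ι → G}
    (hR : Reserve α t₀ S Bad B I cls a a' e e') {W : ℕ}
    (hS : ∀ y, ∃ l : List G, (∀ x ∈ l, x ∈ S) ∧ l.sum = y ∧ l.length ≤ W) {X Y : Finset G}
    (hYX : Y ⊆ X) (hY : Y.val = reservePoints a a' e e' I) {M : Finset (Finset G)}
    (hM : M ⊆ quads (X \ Y) α) (hMd : ∀ e ∈ M, ∀ f ∈ M, e ≠ f → Disjoint e f)
    (hB : (((X \ Y) \ M.biUnion id).card / 4 + 1) * (8 * W + 1) ≤ B) (h4 : 4 ∣ X.card)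
    (hsum : ∑ x ∈ X, x = (X.card / 4) • α) :
    ∃ P : Finset (Finset G), (∀ A ∈ P, ∀ B ∈ P, A ≠ B → Disjoint A B) ∧ P.biUnion id = X ∧
      ∀ A ∈ P, A.card = 4 ∧ ∑ x ∈ A, x = α := by
  have hMq : QuadSum α (M.biUnion id).val := quadSum_biUnion (fun f hf => by
    have := hM hf
    simp only [quads, Finset.mem_filter, Finset.mem_powersetCard] at this
    exact ⟨this.1.2, this.2⟩) hMd
  have hRq := hR.quadSum_reservePoints (Finset.Subset.refl I)
  set Z := (X \ Y) \ M.biUnion id with hZ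
  have hMsub : M.biUnion id ⊆ X \ Y := Finset.biUnion_subset.2 fun f hf => by
    have := hM hf
    simp only [quads, Finset.mem_filter, Finset.mem_powersetCard] at this
    exact this.1.1
  have hX : X.val = Z.val + reservePoints a a' e e' I + (M.biUnion id).val := by
    have h1 : X.val = (X \ Y).val + Y.val := by
      rw [Finset.sdiff_val, Multiset.sub_add_cancel (Finset.val_le_iff.2 hYX)]
    have h2 : (X \ Y).val = Z.val + (M.biUnion id).val := by
      rw [hZ, Finset.sdiff_val _ (M.biUnion id),
          Multiset.sub_add_cancel (Finset.val_le_iff.2 hMsub)]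
    rw [h1, h2, hY, add_right_comm]
  obtain ⟨k, hk, hks⟩ := (hRq.append hMq).exists_card_sum
  obtain ⟨q, hq⟩ := h4
  have hXs : X.val.sum = q • α := by
    rw [hq, Nat.mul_div_cancel_left _ (by norm_num)] at hsum
    exact (Finset.sum_val X).trans hsum
  have hXc : X.val.card = 4 * q := hq
  rw [hX, add_assoc] at hXs hXc
  rw [Multiset.card_add, hk] at hXc
  rw [Multiset.sum_add, hks] at hXs
  have hZc : Z.val.card = 4 * (q - k) := by omega
  have hZs : Z.val.sum = (q - k) • α := by
    have h1 : q • α = (q - k) • α + k • α := by rw [← add_nsmul]; congr 1; omega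
    rw [h1] at hXs
    exact add_right_cancel hXs
  have hZ4 : Z.card / 4 = q - k := by
    rw [← Finset.card_val, hZc, Nat.mul_div_cancel_left _ (by norm_num)]
  rw [hZ4] at hB
  have := (hR.absorb hS hZc hZs hB).append hMq
  exact this.exists_partition hX

end Assembly

section Main

theorem exists_pow_two_between {q : ℕ} (hq : 2 ≤ q) :
    ∃ r : ℕ, 1 ≤ r ∧ q ≤ 2 ^ r ∧ 2 ^ r ≤ 2 * q := by
  refine ⟨Nat.clog 2 q, Nat.clog_pos (by norm_num) hq, Nat.le_pow_clog (by norm_num) q, ?_⟩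
  have h1 := Nat.pow_pred_clog_lt_self (b := 2) (by norm_num) (x := q) (by omega)
  have h2 : Nat.clog 2 q = (Nat.clog 2 q).pred + 1 :=
    (Nat.succ_pred_eq_of_pos (Nat.clog_pos (by norm_num) hq)).symm
  rw [h2, pow_succ]
  omega

set_option maxHeartbeats 2000000 in
/-- Typical sets of the right size and sum can be partitioned. -/
theorem Typical.exists_partition {G : Type*} [AddCommGroup G] [Fintype G] {X : Finset G} {α : G}
    {p y l : ℝ} (hn : (Fintype.card G : ℝ) = y ^ 1000) (hp0 : 0 < p) (hp1 : p ≤ 1)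
    (hpy : 1 ≤ y * p ^ 4)
    (hl : l = 10 ^ 7 * ((Nat.log 2 (Fintype.card G) : ℝ) + 1) ^ 2) (hly : l ^ 10 ≤ y)
    (hX : Typical X p (p ^ 4 * Fintype.card G / (64 * l ^ 4))) (h4 : 4 ∣ X.card)
    (hsum : ∑ x ∈ X, x = (X.card / 4) • α) :
    ∃ P : Finset (Finset G), (∀ A ∈ P, ∀ B ∈ P, A ≠ B → Disjoint A B) ∧ P.biUnion id = X ∧
      ∀ A ∈ P, A.card = 4 ∧ ∑ x ∈ A, x = α := by
  set L : ℕ := Nat.log 2 (Fintype.card G) + 1 with hL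
  have hL1 : 1 ≤ L := Nat.le_add_left _ _
  have hLr : (1 : ℝ) ≤ (L : ℝ) ^ 2 := one_le_pow₀ (by exact_mod_cast hL1)
  have hl' : l = 10 ^ 7 * (L : ℝ) ^ 2 := by rw [hl, hL]; push_cast; ring
  have hl7 : 10 ^ 7 ≤ l := by rw [hl']; linarith
  have hl0 : 0 < l := by linarith
  have hy70 : 10 ^ 70 ≤ y := by
    calc (10 : ℝ) ^ 70 = (10 ^ 7) ^ 10 := by norm_num
      _ ≤ l ^ 10 := pow_le_pow_left₀ (by norm_num) hl7 _
      _ ≤ y := hly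
  have hy0 : 0 < y := by linarith
  have hy1 : 1 ≤ y := by linarith
  have hl5 : 64 * l ^ 5 ≤ y := by
    calc 64 * l ^ 5 ≤ l ^ 5 * l ^ 5 := by
          gcongr
          calc (64 : ℝ) ≤ (10 ^ 7) ^ 5 := by norm_num
            _ ≤ l ^ 5 := pow_le_pow_left₀ (by norm_num) hl7 _
      _ = l ^ 10 := by ring
      _ ≤ y := hly
  have hl4 : 64 * l ^ 4 ≤ y := by
    have : l ^ 4 ≤ l ^ 5 := pow_le_pow_right₀ (by linarith) (by norm_num)
    linarith
  have hl1 : 64 * l ≤ y := by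
    have : l ≤ l ^ 5 := le_self_pow₀ (by linarith) (by norm_num)
    linarith
  have hl41 : 1 ≤ l ^ 4 := one_le_pow₀ (by linarith)
  set n : ℝ := (Fintype.card G : ℝ) with hnd
  obtain ⟨u, hu⟩ : ∃ u : ℝ, u = y ^ 998 := ⟨_, rfl⟩
  have hnu : n = u * y ^ 2 := by rw [hn, hu]; ring
  have huy : y ^ 7 ≤ u := by rw [hu]; exact pow_le_pow_right₀ hy1 (by norm_num)
  have hyp : ∀ k : ℕ, 1 ≤ k → y ≤ y ^ k := fun k hk => le_self_pow₀ hy1 (by omega)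
  have huy1 : y ≤ u := (hyp 7 (by norm_num)).trans huy
  have hu0 : 0 < u := by linarith
  have hp4p2 : p ^ 4 ≤ p ^ 2 := pow_le_pow_of_le_one hp0.le hp1 (by norm_num)
  have hp2p : p ^ 2 ≤ p := pow_le_of_le_one hp0.le hp1 (by norm_num)
  have hp41 : p ^ 4 ≤ 1 := pow_le_one₀ hp0.le hp1
  have hp40 : 0 < p ^ 4 := by positivity
  have hpn4 : u * y ≤ p ^ 4 * n := by
    rw [hnu]
    have := mul_le_mul_of_nonneg_left hpy (by positivity : 0 ≤ u * y)
    linarith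
  have hn0 : 0 < n := by rw [hnu]; positivity
  have hpn2 : p ^ 4 * n ≤ p ^ 2 * n := mul_le_mul_of_nonneg_right hp4p2 hn0.le
  have hpn1 : p ^ 2 * n ≤ p * n := mul_le_mul_of_nonneg_right hp2p hn0.le
  have hpn0 : p * n ≤ n := mul_le_of_le_one_left hn0.le hp1
  set E : ℝ := p ^ 4 * n / (64 * l ^ 4) with hE
  have hEu : u ≤ E := by
    rw [hE, le_div_iff₀ (by positivity)]
    exact (mul_le_mul_of_nonneg_left hl4 hu0.le).trans hpn4
  have hE0 : 0 < E := by linarith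
  have hEmul : 64 * l ^ 4 * E = p ^ 4 * n := by rw [hE]; field_simp
  have hEsmall : 10 ^ 6 * E ≤ p ^ 4 * n := by
    rw [← hEmul]
    refine mul_le_mul_of_nonneg_right ?_ hE0.le
    have : l ≤ l ^ 4 := le_self_pow₀ (by linarith) (by norm_num)
    linarith
  have hnE : n / E ≤ y ^ 2 := by
    rw [div_le_iff₀ hE0, hnu, mul_comm]
    exact mul_le_mul_of_nonneg_left hEu (by positivity)
  have hnE0 : 0 ≤ n / E := by positivity
  -- letters and colours
  obtain ⟨S, hSc, hS⟩ := exists_letters G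
  rw [← hL] at hSc
  obtain ⟨r, hr1, hr2, hr3⟩ := exists_pow_two_between (q := 10 ^ 6 * L ^ 2)
    (by have : 1 ≤ L ^ 2 := Nat.one_le_pow _ _ hL1
        omega)
  have hScr : (S.card : ℝ) ≤ (L : ℝ) ^ 2 := by exact_mod_cast hSc
  have hC2 : 10 ^ 6 * (L : ℝ) ^ 2 ≤ 2 ^ r := by exact_mod_cast hr2
  have hC3 : (2 : ℝ) ^ r ≤ 2 * (10 ^ 6 * (L : ℝ) ^ 2) := by exact_mod_cast hr3
  have hCl : (2 : ℝ) ^ r ≤ l := by linarith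
  have hC0 : (0 : ℝ) < 2 ^ r := by positivity
  have hC41 : ((2 : ℝ) ^ r) ^ 4 ≤ l ^ 4 := pow_le_pow_left₀ hC0.le hCl 4
  have hrl : (r : ℝ) ≤ l := by
    have : (r : ℝ) ≤ 2 ^ r := by exact_mod_cast Nat.lt_two_pow_self.le
    linarith
  set B : ℕ := ⌊u * l⌋₊ with hB
  have hBle : (B : ℝ) ≤ u * l := Nat.floor_le (by positivity)
  have hXn : (X.card : ℝ) ≤ n := by rw [hnd]; exact_mod_cast Finset.card_le_univ X
  have hXlow : p * n - E ≤ X.card := by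
    have := (abs_le.1 hX.card).1
    linarith
  have hprob : 4 * (n ^ 3 * ((2 : ℝ) ^ r) ^ 4) *
      Real.exp (-(E ^ 2 / (64 * (X.card * r : ℕ)))) < 1 := by
    have hXr0 : (0 : ℝ) < (X.card * r : ℕ) := by
      have h1 : (0 : ℝ) < X.card := by linarith
      have h2 : (0 : ℝ) < r := by exact_mod_cast hr1
      push_cast
      positivity
    have hT : y ^ 2 ≤ E ^ 2 / (64 * (X.card * r : ℕ)) := by
      rw [le_div_iff₀ (by positivity)]
      have h1 : ((X.card * r : ℕ) : ℝ) ≤ n * l := by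
        push_cast
        exact mul_le_mul hXn hrl (Nat.cast_nonneg _) hn0.le
      have h2 : u ^ 2 ≤ E ^ 2 := pow_le_pow_left₀ hu0.le hEu 2
      calc y ^ 2 * (64 * (X.card * r : ℕ)) ≤ y ^ 2 * (64 * (n * l)) := by gcongr
        _ = u * y ^ 4 * (64 * l) := by rw [hnu]; ring
        _ ≤ u * y ^ 4 * y := by gcongr
        _ = u * y ^ 5 := by ring
        _ ≤ u * y ^ 7 := by gcongr; linarith
        _ ≤ u * u := by gcongr
        _ ≤ E ^ 2 := by linarith
    have h1 := pow_mul_exp_neg_le (by linarith) hT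
    have h2 : 4 * (n ^ 3 * ((2 : ℝ) ^ r) ^ 4) ≤ y ^ 4000 := by
      calc 4 * (n ^ 3 * ((2 : ℝ) ^ r) ^ 4) ≤ n ^ 3 * (64 * l ^ 4) := by
            have := mul_le_mul_of_nonneg_left hC41 (by positivity : 0 ≤ n ^ 3)
            have h3 : 0 ≤ n ^ 3 * l ^ 4 := by positivity
            linarith
        _ ≤ n ^ 3 * y := by gcongr
        _ = y ^ 3001 := by rw [hn]; ring
        _ ≤ y ^ 4000 := pow_le_pow_right₀ hy1 (by norm_num)
    have h3 : Real.exp (-y) < 1 := by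
      rw [← Real.exp_zero]
      exact Real.exp_lt_exp.2 (by linarith)
    have h4 := mul_le_mul_of_nonneg_right h2
      (Real.exp_pos (-(E ^ 2 / (64 * (X.card * r : ℕ))))).le
    linarith
  have hBsmall : 2 * (B : ℝ) + 4 * (S.card + 1) * (n / E + 2) <
      p ^ 4 * n / (2 * ((2 : ℝ) ^ r) ^ 4) := by
    have h1 : 4 * ((S.card : ℝ) + 1) ≤ l := by linarith
    have h2 : 4 * ((S.card : ℝ) + 1) * (n / E + 2) ≤ l * (y ^ 2 + y ^ 2) := by
      have : 2 ≤ y ^ 2 := by linarith [hyp 2 (by norm_num)]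
      gcongr
    have h3 : y ^ 2 ≤ y ^ 7 := pow_le_pow_right₀ hy1 (by norm_num)
    have h4 : l * (y ^ 2 + y ^ 2) ≤ l * (u + u) := by gcongr <;> linarith
    have h5 : 2 * (B : ℝ) + 4 * (S.card + 1) * (n / E + 2) ≤ 4 * (u * l) := by linarith
    refine h5.trans_lt ?_
    rw [lt_div_iff₀ (by positivity)]
    have h6 : 4 * (u * l) * (2 * ((2 : ℝ) ^ r) ^ 4) ≤ 4 * (u * l) * (2 * l ^ 4) := by gcongr
    have h7 : u * (64 * l ^ 5) ≤ u * y := by gcongr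
    have h8 : 0 < u * l ^ 5 := by positivity
    have h9 : 4 * (u * l) * (2 * l ^ 4) = 8 * (u * l ^ 5) := by ring
    linarith
  obtain ⟨t₀, Bad, I, cls, a, a', e, e', hR, hnd', hmem, hYc⟩ := exists_reserve (S := S) α (r := r)
    (B := B) hX hp0 hp1 (by linarith) hr1 (by
      have : 1 ≤ L ^ 2 := Nat.one_le_pow _ _ hL1
      omega) (by linarith) (by
      rw [← hEmul]
      gcongr) hprob hBsmall
  set Y : Finset G := ⟨reservePoints a a' e e' I, hnd'⟩ with hY
  have hYX : Y ⊆ X := fun x hx => hmem x hx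
  have hYsmall : 10 ^ 4 * (Y.card : ℝ) ≤ p ^ 2 * n := by
    have h1 : (Y.card : ℝ) ≤ 4 * (S.card + 1) * (p ^ 2 * n / ((2 : ℝ) ^ r) ^ 2) := hYc
    have h2 : 4 * ((S.card : ℝ) + 1) * 10 ^ 4 ≤ ((2 : ℝ) ^ r) ^ 2 := by
      have h3 : 4 * ((S.card : ℝ) + 1) * 10 ^ 4 ≤ 2 ^ r := by linarith
      exact h3.trans (le_self_pow₀ (one_le_pow₀ (by norm_num)) (by norm_num))
    have h3 : 4 * ((S.card : ℝ) + 1) * (p ^ 2 * n / ((2 : ℝ) ^ r) ^ 2) * 10 ^ 4 ≤ p ^ 2 * n := by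
      calc 4 * ((S.card : ℝ) + 1) * (p ^ 2 * n / ((2 : ℝ) ^ r) ^ 2) * 10 ^ 4 =
          (4 * ((S.card : ℝ) + 1) * 10 ^ 4) * (p ^ 2 * n / ((2 : ℝ) ^ r) ^ 2) := by ring
        _ ≤ ((2 : ℝ) ^ r) ^ 2 * (p ^ 2 * n / ((2 : ℝ) ^ r) ^ 2) := by gcongr
        _ = p ^ 2 * n := by field_simp
    linarith
  have hVc : (((X \ Y).card : ℕ) : ℝ) = X.card - Y.card := by
    rw [Finset.card_sdiff_of_subset hYX, Nat.cast_sub (Finset.card_le_card hYX)]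
  have hY0 : (0 : ℝ) ≤ Y.card := Nat.cast_nonneg _
  have huy2 : u * y ≤ p * n := by linarith
  have hVlow : u * y ≤ 2 * ((X \ Y).card : ℝ) := by
    rw [hVc]
    linarith
  obtain ⟨M, hM, hMd, hMc⟩ := exists_nearly_perfect_quads (V := X \ Y) (D := degenerateSums G E)
    (α := α) (y := y) (k := p ^ 2 * n / 2) (by linarith) (by rw [hVc, ← hn]; linarith)
    (by
      have : y ^ 999 = u * y := by rw [hu]; ring
      linarith)
    (by
      have : 10 ^ 70 * 1 ≤ u * y := mul_le_mul (by linarith) hy1 (by norm_num) hu0.le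
      linarith)
    (fun h => by
      have h1 := hX.card_pairSet_le h
      have h2 : ((pairSet (X \ Y) h).card : ℝ) ≤ (pairSet X h).card := by
        refine Nat.cast_le.2 (Finset.card_le_card fun x hx => ?_)
        simp only [pairSet, Finset.mem_filter, Finset.mem_sdiff] at hx ⊢
        tauto
      linarith)
    (fun h hh => by
      have h1 := hX.le_card_pairSet hp0.le hp1 hE0.le hh
      have h2 : ((pairSet X h).card : ℝ) ≤ (pairSet (X \ Y) h).card + 2 * Y.card := by
        exact_mod_cast card_pairSet_sdiff_ge X Y h
      linarith)
    (by
      have h1 : ((degenerateSums G E).card : ℝ) ≤ n / E :=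
        (le_div_iff₀ hE0).2 (card_degenerateSums_mul_le E)
      have h2 : 20000 * y ^ 2 ≤ y * y ^ 2 := by gcongr; linarith
      have h3 : y * y ^ 2 ≤ u * y := by
        have : y ^ 2 ≤ y ^ 7 := pow_le_pow_right₀ hy1 (by norm_num)
        calc y * y ^ 2 ≤ y * u := by gcongr; linarith
          _ = u * y := mul_comm _ _
      linarith)
  refine hR.exists_partition hS hYX rfl hM hMd ?_ h4 hsum
  rw [← hL]
  have hZ : (((X \ Y) \ M.biUnion id).card : ℝ) ≤ 2 * u := by
    have h1 : (((X \ Y) \ M.biUnion id).card : ℝ) * y ^ 2 ≤ 2 * u * y ^ 2 := by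
      have : ((X \ Y).card : ℝ) ≤ n := by rw [hVc]; linarith
      linarith
    exact le_of_mul_le_mul_right h1 (by positivity)
  rw [hB, Nat.le_floor_iff (by positivity)]
  push_cast
  have h1 : ((((X \ Y) \ M.biUnion id).card / 4 : ℕ) : ℝ) ≤ ((X \ Y) \ M.biUnion id).card / 4 :=
    Nat.cast_div_le
  refine mul_le_mul ?_ ?_ (by positivity) hu0.le
  · linarith
  · rw [hl']
    linarith

end Main

section Asymptotics

theorem exists_forall_log_pow_le (c : ℝ) : ∃ N : ℕ, ∀ n : ℕ, N ≤ n →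
    10 ^ 8 ≤ Real.log n ∧ Real.log n ^ 30 ≤ (n : ℝ) ^ (1 / 1000 : ℝ) ∧
      c ≤ (n : ℝ) ^ (1 / 1000 : ℝ) := by
  have hn := tendsto_natCast_atTop_atTop (R := ℝ)
  have h1 := (Real.tendsto_log_atTop.comp hn).eventually_ge_atTop (10 ^ 8)
  have h2 := ((tendsto_rpow_atTop (by norm_num : (0 : ℝ) < 1 / 1000)).comp hn).eventually_ge_atTop c
  have h3 := hn.eventually ((isLittleO_log_rpow_rpow_atTop ((30 : ℕ) : ℝ)
    (by norm_num : (0 : ℝ) < 1 / 1000)).def one_pos)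
  obtain ⟨N, hN⟩ := Filter.eventually_atTop.1 ((h1.and h2).and h3)
  refine ⟨N, fun n hNn => ?_⟩
  obtain ⟨⟨h1, h2⟩, h3⟩ := hN n hNn
  simp only [Function.comp_apply] at h1 h2
  refine ⟨h1, ?_, h2⟩
  rw [one_mul, Real.rpow_natCast, Real.norm_of_nonneg (by positivity),
    Real.norm_of_nonneg (by positivity)] at h3
  exact h3

theorem natLog_two_add_one_le {n : ℕ} (h : 1 ≤ Real.log n) :
    (Nat.log 2 n : ℝ) + 1 ≤ 3 * Real.log n := by
  have h1 := Real.natLog_le_logb n 2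
  have h2 := Real.log_two_gt_d9
  have h3 : Real.logb (2 : ℕ) n ≤ 2 * Real.log n := by
    rw [Real.logb, div_le_iff₀ (by push_cast; linarith)]
    push_cast
    nlinarith
  linarith

end Asymptotics

section Random

theorem sum_ite_setProb_eq_bexp {G : Type} [Fintype G] (p : ℝ) (P : Finset G → Prop)
    [DecidablePred P] :
    ∑ R : Finset G, (if P R then setProb G p R else 0) =
      bexp Finset.univ (fun _ => p) fun R => if P R then 1 else 0 := by
  simp only [bexp, Finset.powerset_univ, setProb]
  refine Finset.sum_congr rfl fun R _ => ?_
  simp [Finset.prod_const, ← Finset.compl_eq_univ_sdiff, Finset.card_compl]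

/-- If typical sets have a property, then random sets have it with high probability. -/
theorem one_sub_le_sum_ite_setProb {G : Type} [AddCommGroup G] [Fintype G] {p E : ℝ} (hp0 : 0 ≤ p)
    (hp1 : p ≤ 1) (hE : 0 ≤ E) (hEn : E ≤ Fintype.card G) {P : Finset G → Prop}
    [DecidablePred P] (hP : ∀ R, Typical R p E → P R) :
    1 - 6 * (Fintype.card G : ℝ) ^ 3 * Real.exp (-(E ^ 2 / (64 * Fintype.card G))) ≤
      ∑ R : Finset G, (if P R then setProb G p R else 0) := by
  rw [sum_ite_setProb_eq_bexp]
  have h1 := bexp_not_typical_le (G := G) hp0 hp1 hE hEn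
  have h2 : (1 : ℝ) = bexp (Finset.univ : Finset G) (fun _ => p) (fun _ => 1) :=
    (bexp_const 1).symm
  have h3 : bexp (Finset.univ : Finset G) (fun _ => p) (fun _ => 1) ≤
      bexp (Finset.univ : Finset G) (fun _ => p)
        (fun R => (if P R then (1 : ℝ) else 0) + if Typical R p E then 0 else 1) := by
    refine bexp_mono (fun _ _ => ⟨hp0, hp1⟩) fun R _ => ?_
    by_cases hR : Typical R p E
    · simp [hR, hP R hR]
    · rw [if_neg hR]
      split_ifs <;> norm_num
  rw [bexp_add] at h3
  linarith

end Random

section Final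

/-- The conclusion for random sets, with explicit error terms. -/
theorem one_sub_inv_le_sum_ite_setProb {G : Type} [AddCommGroup G] [Fintype G] {p y b : ℝ}
    {s t : ℕ} (hs : 4 ≤ s) (ht : 13 ≤ t) (hn : (Fintype.card G : ℝ) = y ^ 1000) (hp0 : 0 < p)
    (hp1 : p ≤ 1) (hpy : 1 ≤ y * p ^ 4) (hb : 10 ^ 8 ≤ b) (hby : b ^ 30 ≤ y)
    (hlog : (Nat.log 2 (Fintype.card G) : ℝ) + 1 ≤ 3 * b) :
    1 - 1 / y ≤ ∑ R : Finset G,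
        (if (∀ (X : Finset G) (α : G),
              ((symmDiff X R).card : ℝ) ≤ p ^ s * Fintype.card G / b ^ t →
              (0 : G) ∉ X → 4 ∣ X.card →
              (∑ x ∈ X, x) = (X.card / 4) • α →
              ∃ P : Finset (Finset G),
                (∀ A ∈ P, ∀ B ∈ P, A ≠ B → Disjoint A B) ∧
                P.biUnion id = X ∧
                (∀ A ∈ P, A.card = 4 ∧ (∑ x ∈ A, x) = α))
        then setProb G p R else 0) := by
  have hb1 : 1 ≤ b := by linarith
  have hb0 : 0 < b := by linarith
  obtain ⟨l, hl⟩ : ∃ l : ℝ, l = 10 ^ 7 * ((Nat.log 2 (Fintype.card G) : ℝ) + 1) ^ 2 := ⟨_, rfl⟩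
  have hlog0 : (0 : ℝ) ≤ Nat.log 2 (Fintype.card G) := Nat.cast_nonneg _
  have hl1 : 1 ≤ l := by
    have : 1 ≤ ((Nat.log 2 (Fintype.card G) : ℝ) + 1) ^ 2 := one_le_pow₀ (by linarith)
    linarith
  have hlb : l ≤ b ^ 3 := by
    calc l ≤ 10 ^ 7 * (3 * b) ^ 2 := by rw [hl]; gcongr
      _ = 9 * 10 ^ 7 * b ^ 2 := by ring
      _ ≤ b * b ^ 2 := by gcongr; linarith
      _ = b ^ 3 := by ring
  have hly : l ^ 10 ≤ y := by
    calc l ^ 10 ≤ (b ^ 3) ^ 10 := by gcongr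
      _ = b ^ 30 := by ring
      _ ≤ y := hby
  have hlt : 512 * l ^ 4 ≤ b ^ t := by
    calc 512 * l ^ 4 ≤ b * (b ^ 3) ^ 4 := by gcongr; linarith
      _ = b ^ 13 := by ring
      _ ≤ b ^ t := pow_le_pow_right₀ hb1 ht
  have hby' : b ≤ y := (le_self_pow₀ hb1 (by norm_num)).trans hby
  have hy0 : 0 < y := by linarith
  have hy1 : 1 ≤ y := by linarith
  have hly4 : 128 * l ^ 4 ≤ y := by
    have h1 : b ^ 13 ≤ b ^ 30 := pow_le_pow_right₀ hb1 (by norm_num)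
    have h2 : 512 * l ^ 4 ≤ b ^ 13 := by
      calc 512 * l ^ 4 ≤ b * (b ^ 3) ^ 4 := by gcongr; linarith
        _ = b ^ 13 := by ring
    have h3 : 0 < l ^ 4 := by positivity
    linarith
  obtain ⟨u, hu⟩ : ∃ u : ℝ, u = y ^ 998 := ⟨_, rfl⟩
  have hnu : (Fintype.card G : ℝ) = u * y ^ 2 := by rw [hn, hu]; ring
  have huy : y ^ 5 ≤ u := by rw [hu]; exact pow_le_pow_right₀ hy1 (by norm_num)
  have hu0 : 0 < u := by rw [hu]; positivity
  set n : ℝ := (Fintype.card G : ℝ) with hnd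
  have hn0 : 0 < n := by rw [hnu]; positivity
  have hp41 : p ^ 4 ≤ 1 := pow_le_one₀ hp0.le hp1
  set E : ℝ := p ^ 4 * n / (64 * l ^ 4) with hE
  have hEu : u ≤ E / 2 := by
    have h1 : u ≤ p ^ 4 * n / (128 * l ^ 4) := by
      rw [le_div_iff₀ (by positivity)]
      calc u * (128 * l ^ 4) ≤ u * y := by gcongr
        _ = u * y * 1 := (mul_one _).symm
        _ ≤ u * y * (y * p ^ 4) := by gcongr
        _ = p ^ 4 * n := by rw [hnu]; ring
    refine h1.trans_eq ?_
    rw [hE]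
    field_simp
    norm_num
  have hEn : E / 2 ≤ n := by
    have h1 : E ≤ n := by
      rw [hE]
      refine div_le_of_le_mul₀ (by positivity) hn0.le ?_
      have h2 : 1 ≤ 64 * l ^ 4 := by
        have := one_le_pow₀ hl1 (n := 4)
        linarith
      calc p ^ 4 * n ≤ 1 * n := by gcongr
        _ = n * 1 := by ring
        _ ≤ n * (64 * l ^ 4) := by gcongr
    linarith
  refine le_trans ?_ (one_sub_le_sum_ite_setProb hp0.le hp1 (E := E / 2) (by linarith) hEn
    fun R hR X α hX _ h4 hsum => ?_)
  · have hT : y ^ 2 ≤ (E / 2) ^ 2 / (64 * n) := by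
      rw [le_div_iff₀ (by positivity), hnu]
      calc y ^ 2 * (64 * (u * y ^ 2)) = u * (64 * y ^ 4) := by ring
        _ ≤ u * (y * y ^ 4) := by gcongr; linarith
        _ = u * y ^ 5 := by ring
        _ ≤ u * u := by gcongr
        _ = u ^ 2 := by ring
        _ ≤ (E / 2) ^ 2 := by gcongr
    have h1 := pow_mul_exp_neg_le (by linarith) hT
    have h2 : 6 * n ^ 3 ≤ y ^ 4000 := by
      calc 6 * n ^ 3 ≤ y * n ^ 3 := by gcongr; linarith
        _ = y ^ 3001 := by rw [hn]; ring
        _ ≤ y ^ 4000 := pow_le_pow_right₀ hy1 (by norm_num)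
    have h3 := mul_le_mul_of_nonneg_right h2 (Real.exp_pos (-((E / 2) ^ 2 / (64 * n)))).le
    have h4 : Real.exp (-y) ≤ 1 / y := by
      rw [Real.exp_neg, one_div]
      exact inv_anti₀ hy0 (by linarith [Real.add_one_le_exp y])
    linarith
  · refine Typical.exists_partition hn hp0 hp1 hpy hl hly (hR.of_symmDiff ?_) h4 hsum
    have h1 : p ^ s * n / b ^ t ≤ p ^ 4 * n / (512 * l ^ 4) := by
      have : p ^ s ≤ p ^ 4 := pow_le_pow_of_le_one hp0.le hp1 hs
      gcongr
    have h2 : p ^ 4 * n / (512 * l ^ 4) = E / 8 := by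
      rw [hE]
      field_simp
      norm_num
    rw [← hE]
    linarith

end Final

/-- With high probability, any set `X` close to a `p`-random set, avoiding `0`, with
`4 ∣ |X|` and `∑ X = (|X|/4)·α`, can be partitioned into `4`-sets each of sum `α`. -/
theorem partition_into_four_sets_with_sum :
    ∀ δ : ℝ, 0 < δ → ∃ N : ℕ,
      ∀ (G : Type) [AddCommGroup G] [Fintype G] [DecidableEq G], ∀ p : ℝ,
      N ≤ Fintype.card G →
      (Fintype.card G : ℝ) ^ (-(1 : ℝ) / 10 ^ 100) ≤ p → p ≤ 1 →
      1 - δ ≤ ∑ R : Finset G,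
        (if (∀ (X : Finset G) (α : G),
              ((symmDiff X R).card : ℝ) ≤
                p ^ (10 ^ 10 : ℕ) * Fintype.card G
                  / (Real.log (Fintype.card G)) ^ (10 ^ 22 : ℕ) →
              (0 : G) ∉ X → 4 ∣ X.card →
              (∑ x ∈ X, x) = (X.card / 4) • α →
              ∃ P : Finset (Finset G),
                (∀ A ∈ P, ∀ B ∈ P, A ≠ B → Disjoint A B) ∧
                P.biUnion id = X ∧
                (∀ A ∈ P, A.card = 4 ∧ (∑ x ∈ A, x) = α))
        then setProb G p R else 0) := by
  intro δ hδ
  obtain ⟨N, hN⟩ := exists_forall_log_pow_le (1 / δ)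
  refine ⟨N, fun G _ _ inst p hNG hp hp1 => ?_⟩
  obtain rfl : inst = fun a b => Classical.propDecidable _ := Subsingleton.elim _ _
  obtain ⟨hb, hby, hδy⟩ := hN _ hNG
  have hn1 : (1 : ℝ) ≤ Fintype.card G := by exact_mod_cast Fintype.card_pos (α := G)
  have hn0 : (0 : ℝ) < Fintype.card G := by linarith
  have hp0 : 0 < p := (Real.rpow_pos_of_pos hn0 _).trans_le hp
  have hpn : (Fintype.card G : ℝ) ^ (-(1 / 4000) : ℝ) ≤ p := by
    refine (Real.rpow_le_rpow_of_exponent_le hn1 ?_).trans hp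
    norm_num
  generalize hs : (10 ^ 10 : ℕ) = s
  generalize ht : (10 ^ 22 : ℕ) = t
  refine le_trans ?_ (one_sub_inv_le_sum_ite_setProb (y := (Fintype.card G : ℝ) ^ (1 / 1000 : ℝ))
    (b := Real.log (Fintype.card G)) (s := s) (t := t) (by rw [← hs]; norm_num)
    (by rw [← ht]; norm_num) ?_ hp0 hp1 ?_ hb hby (natLog_two_add_one_le (by linarith)))
  · have : 1 / (Fintype.card G : ℝ) ^ (1 / 1000 : ℝ) ≤ δ := by
      rw [one_div_le (by positivity) hδ]
      exact hδy
    linarith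
  · rw [← Real.rpow_mul_natCast hn0.le]
    norm_num
  · calc (1 : ℝ) = (Fintype.card G : ℝ) ^ (1 / 1000 : ℝ) *
          ((Fintype.card G : ℝ) ^ (-(1 / 4000) : ℝ)) ^ 4 := by
          rw [← Real.rpow_mul_natCast hn0.le, ← Real.rpow_add hn0]
          norm_num
      _ ≤ _ := by gcongr
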